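/- Let (s,u) and (σ,v) be solutions of problem (P) with initial data (s₀,φ) ∈ W and (σ₀,ψ) ∈ W and maximal existence times T_u and T_v, respectively. Assume s₀ ≤ σ₀ and φ ≤ ψ on [0,s₀]. Then T_u ≥ T_v, s(t) ≤ σ(t) for all t ∈ (0,T_v), and u ≤ v on D_s(T) for every T ∈ (0,T_v). -/

import Mathlib

open Set MeasureTheory Filter Topology Real
open scoped ENNReal

noncomputable section

/-- `(s₀, φ)` belongs to the class `W`: `s₀ ∈ (0,∞)`, `φ` is Lipschitz on `[0,s₀]`,
not identically zero, nonnegative there, and vanishes at `s₀`. -/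
def memW (s₀ : ℝ) (φ : ℝ → ℝ) : Prop :=
  0 < s₀ ∧ (∃ K : NNReal, LipschitzOnWith K φ (Icc 0 s₀)) ∧
    (∃ x ∈ Icc 0 s₀, φ x ≠ 0) ∧ (∀ x ∈ Icc 0 s₀, 0 ≤ φ x) ∧ φ s₀ = 0

/-- `(s,u)` is a solution of the one-phase Stefan problem (P) on `(0,T]` (finite `T`)
with exponent `p` and initial data `(s₀,φ)`. -/
structure IsSolOn (p s₀ : ℝ) (φ : ℝ → ℝ) (T : ℝ) (s : ℝ → ℝ) (u : ℝ → ℝ → ℝ) : Prop where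
  T_pos : 0 < T
  s_cont : ContinuousOn s (Icc 0 T)
  s_diff : ∀ t ∈ Ioc 0 T, DifferentiableAt ℝ s t
  s_deriv_cont : ContinuousOn (deriv s) (Ioc 0 T)
  s_pos : ∀ t ∈ Icc 0 T, 0 < s t
  ut_diff : ∀ t ∈ Ioc 0 T, ∀ x ∈ Ioo 0 (s t), DifferentiableAt ℝ (fun τ => u τ x) t
  ux_diff : ∀ t ∈ Ioc 0 T, ∀ x ∈ Ioo 0 (s t), DifferentiableAt ℝ (u t) x
  uxx_diff : ∀ t ∈ Ioc 0 T, ∀ x ∈ Ioo 0 (s t), DifferentiableAt ℝ (deriv (u t)) x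
  ut_cont : ContinuousOn (fun q : ℝ × ℝ => deriv (fun τ => u τ q.2) q.1)
      {q : ℝ × ℝ | q.1 ∈ Ioc 0 T ∧ q.2 ∈ Ioo 0 (s q.1)}
  uxx_cont : ContinuousOn (fun q : ℝ × ℝ => deriv (deriv (u q.1)) q.2)
      {q : ℝ × ℝ | q.1 ∈ Ioc 0 T ∧ q.2 ∈ Ioo 0 (s q.1)}
  ux_cont : ContinuousOn (fun q : ℝ × ℝ => deriv (u q.1) q.2)
      {q : ℝ × ℝ | q.1 ∈ Ioc 0 T ∧ q.2 ∈ Icc 0 (s q.1)}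
  u_cont : ContinuousOn (fun q : ℝ × ℝ => u q.1 q.2)
      {q : ℝ × ℝ | q.1 ∈ Icc 0 T ∧ q.2 ∈ Icc 0 (s q.1)}
  u_nonneg : ∀ t ∈ Icc 0 T, ∀ x ∈ Icc 0 (s t), 0 ≤ u t x
  heat : ∀ t ∈ Ioc 0 T, ∀ x ∈ Ioo 0 (s t),
      deriv (fun τ => u τ x) t = deriv (deriv (u t)) x
  bc_zero : ∀ t ∈ Ioc 0 T, -deriv (u t) 0 = u t 0 ^ p
  bc_free : ∀ t ∈ Ioc 0 T, u t (s t) = 0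
  stefan : ∀ t ∈ Ioc 0 T, deriv s t = -deriv (u t) (s t)
  init : ∀ x ∈ Icc 0 s₀, u 0 x = φ x
  init_s : s 0 = s₀

/-- `(s,u)` is a global-in-time solution of problem (P). -/
def IsGlobalSol (p s₀ : ℝ) (φ : ℝ → ℝ) (s : ℝ → ℝ) (u : ℝ → ℝ → ℝ) : Prop :=
  ∀ T : ℝ, 0 < T → IsSolOn p s₀ φ T s u

/-- `Tm ∈ (0,∞]` is the maximal existence time of the solution `(s,u)` of (P) with
initial data `(s₀,φ)`: the solution exists on `(0,T]` for every `T < Tm`, and for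
`T > Tm` problem (P) admits no solution on `(0,T]`. -/
def IsMaxSol (p s₀ : ℝ) (φ : ℝ → ℝ) (Tm : ℝ≥0∞) (s : ℝ → ℝ) (u : ℝ → ℝ → ℝ) : Prop :=
  0 < Tm ∧
    (∀ T : ℝ, 0 < T → ENNReal.ofReal T < Tm → IsSolOn p s₀ φ T s u) ∧
    (∀ T : ℝ, Tm < ENNReal.ofReal T → ¬∃ σ v, IsSolOn p s₀ φ T σ v)

/-- The sup norm `‖u(t)‖_{L^∞(0,s(t))}`. -/
def supNorm (s : ℝ → ℝ) (u : ℝ → ℝ → ℝ) (t : ℝ) : ℝ :=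
  sSup (u t '' Ioo 0 (s t))

/-- The `L¹` norm `‖u(t)‖_{L¹(0,s(t))}` of the nonnegative function `u(t,·)`. -/
def L1Norm (s : ℝ → ℝ) (u : ℝ → ℝ → ℝ) (t : ℝ) : ℝ :=
  ∫ x in (0:ℝ)..(s t), u t x

/-- The energy `E(s(t),u(t))`. -/
def energy (p : ℝ) (s : ℝ → ℝ) (u : ℝ → ℝ → ℝ) (t : ℝ) : ℝ :=
  1 / 2 * (∫ x in (0:ℝ)..(s t), (deriv (u t) x) ^ 2) - u t 0 ^ (p + 1) / (p + 1)

/-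
Comparison. Let `H(t, x) = ∫_x^{s(t)} (u + 1)` be the enthalpy to the right of `x`. The Stefan
condition cancels the flux and front terms at the free boundary, so `∂ₜH = -∂ₓu = ∂ₓ²H`, and `H` is
monotone in the initial data. A bound for `u - v` at `x = 0` controls `H_u - H_v`, hence the gap
`s - σ`, hence `u - v` in the common phase. Measured with a fast growing exponential weight in time,
this returns the bound at `x = 0` multiplied by a factor `< 1`, which forces it to vanish.

Continuation. The maximum principle for `u(t, x) - u(t, y) - L (x - y)` shows that a solution
bounded by `M` has slices with a Lipschitz constant depending on `M` and the initial data only.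
Writing `u` through heat potentials of its boundary traces turns problem (P) into a fixed point
equation whose contraction time depends only on that constant, on `M`, and on a lower bound for the
front. Hence a bounded solution extends beyond any finite time. Since `v` bounds `u`, the time `T_u`
cannot be smaller than `T_v`.
-/
section OneSidedDerivatives

theorem hasDerivWithinAt_Ici_nonpos_of_le {f : ℝ → ℝ} {d x : ℝ}
    (hf : HasDerivWithinAt f d (Ici x) x) (h : ∀ᶠ y in 𝓝[>] x, f y ≤ f x) : d ≤ 0 := by
  have hslope := (hasDerivWithinAt_iff_tendsto_slope' (by simp)).1 (hf.mono Ioi_subset_Ici_self)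
  refine le_of_tendsto hslope ?_
  filter_upwards [h, self_mem_nhdsWithin] with y hy hxy
  rw [slope_def_field]
  exact div_nonpos_of_nonpos_of_nonneg (sub_nonpos.2 hy) (sub_nonneg.2 (mem_Ioi.1 hxy).le)

theorem hasDerivWithinAt_Iic_nonneg_of_le {f : ℝ → ℝ} {d x : ℝ}
    (hf : HasDerivWithinAt f d (Iic x) x) (h : ∀ᶠ y in 𝓝[<] x, f y ≤ f x) : 0 ≤ d := by
  have hslope := (hasDerivWithinAt_iff_tendsto_slope' (by simp)).1 (hf.mono Iio_subset_Iic_self)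
  refine ge_of_tendsto hslope ?_
  filter_upwards [h, self_mem_nhdsWithin] with y hy hxy
  rw [slope_def_field]
  exact div_nonneg_of_nonpos (sub_nonpos.2 hy) (sub_nonpos.2 (mem_Iio.1 hxy).le)

theorem le_of_hasDerivAt_of_le_exp_mul {f : ℝ → ℝ} {a t : ℝ} (hf : HasDerivAt f a t)
    (h : ∀ᶠ τ in 𝓝[<] t, f τ ≤ exp (τ - t) * f t) : f t ≤ a := by
  have hexp : HasDerivAt (fun τ => exp (τ - t) * f t) (exp (t - t) * 1 * f t) t :=
    ((hasDerivAt_id t).sub_const t).exp.mul_const _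
  have hdiff := hasDerivWithinAt_Iic_nonneg_of_le (hf.sub hexp).hasDerivWithinAt (by
    filter_upwards [h] with τ hτ
    simp only [Pi.sub_apply, sub_self, exp_zero]
    linarith)
  simpa using hdiff

theorem second_deriv_nonpos_of_isLocalMax {f f' : ℝ → ℝ} {x c : ℝ}
    (hf : ∀ᶠ y in 𝓝 x, HasDerivAt f (f' y) y) (hf' : HasDerivAt f' c x) (hmax : IsLocalMax f x) :
    c ≤ 0 := by
  by_contra! hc
  have hderiv : deriv f =ᶠ[𝓝 x] f' := hf.mono fun y hy => hy.deriv
  have hderiv2 : deriv (deriv f) x = c := by rw [hderiv.deriv_eq, hf'.deriv]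
  have hmin : IsLocalMin f x := isLocalMin_of_deriv_deriv_pos (hderiv2 ▸ hc)
    hmax.deriv_eq_zero hf.self_of_nhds.continuousAt
  have hconst : f =ᶠ[𝓝 x] fun _ => f x := by
    filter_upwards [hmin, hmax] with y h₁ h₂ using le_antisymm h₂ h₁
  have hderiv0 : deriv f =ᶠ[𝓝 x] fun _ => 0 := by
    filter_upwards [hconst.eventuallyEq_nhds] with y hy
    rw [hy.deriv_eq, deriv_const]
  rw [hderiv0.deriv_eq, deriv_const] at hderiv2
  exact hc.ne hderiv2

theorem nhdsLT_le_nhdsWithin_Icc {a b t : ℝ} (ht : t ∈ Ioc a b) : 𝓝[<] t ≤ 𝓝[Icc a b] t := by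
  refine le_inf nhdsWithin_le_nhds (le_principal_iff.2 ?_)
  filter_upwards [Ioo_mem_nhdsLT ht.1] with τ hτ using ⟨hτ.1.le, hτ.2.le.trans ht.2⟩

theorem le_of_forall_pos_le_add_mul {a b c : ℝ} (h : ∀ ε > 0, a ≤ b + ε * c) : a ≤ b := by
  have hlim : Tendsto (fun ε : ℝ => b + ε * c) (𝓝[>] 0) (𝓝 (b + 0 * c)) :=
    ((by fun_prop : Continuous fun ε : ℝ => b + ε * c).tendsto 0).mono_left nhdsWithin_le_nhds
  rw [zero_mul, add_zero] at hlim
  exact ge_of_tendsto hlim (by filter_upwards [self_mem_nhdsWithin] with ε hε using h ε hε)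

end OneSidedDerivatives

section MaximumPrinciple

/-- The function `W` of time and space has at `(t, x)` the time derivative `a` and the second
space derivative `c`. -/
structure HasHeatDerivAt (W : ℝ → ℝ → ℝ) (a c t x : ℝ) : Prop where
  time : HasDerivAt (fun τ => W τ x) a t
  space : ∃ W' : ℝ → ℝ, (∀ᶠ y in 𝓝 x, HasDerivAt (W t) (W' y) y) ∧ HasDerivAt W' c x

namespace HasHeatDerivAt

variable {W V : ℝ → ℝ → ℝ} {a a' c c' t x : ℝ}

theorem sub (hW : HasHeatDerivAt W a c t x) (hV : HasHeatDerivAt V a' c' t x) :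
    HasHeatDerivAt (fun τ y => W τ y - V τ y) (a - a') (c - c') t x := by
  obtain ⟨W', hW₁, hW₂⟩ := hW.space
  obtain ⟨V', hV₁, hV₂⟩ := hV.space
  exact ⟨hW.time.sub hV.time, fun y => W' y - V' y,
    by filter_upwards [hW₁, hV₁] with y h₁ h₂ using h₁.sub h₂, hW₂.sub hV₂⟩

theorem add (hW : HasHeatDerivAt W a c t x) (hV : HasHeatDerivAt V a' c' t x) :
    HasHeatDerivAt (fun τ y => W τ y + V τ y) (a + a') (c + c') t x := by
  obtain ⟨W', hW₁, hW₂⟩ := hW.space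
  obtain ⟨V', hV₁, hV₂⟩ := hV.space
  exact ⟨hW.time.add hV.time, fun y => W' y + V' y,
    by filter_upwards [hW₁, hV₁] with y h₁ h₂ using h₁.add h₂, hW₂.add hV₂⟩

theorem const_mul (k : ℝ) (hW : HasHeatDerivAt W a c t x) :
    HasHeatDerivAt (fun τ y => k * W τ y) (k * a) (k * c) t x := by
  obtain ⟨W', hW₁, hW₂⟩ := hW.space
  exact ⟨hW.time.const_mul k, fun y => k * W' y, hW₁.mono fun y hy => hy.const_mul k,
    hW₂.const_mul k⟩

theorem add_of_separated {f g g' : ℝ → ℝ} (hf : HasDerivAt f a t)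
    (hg : ∀ y, HasDerivAt g (g' y) y) (hg' : HasDerivAt g' c x) :
    HasHeatDerivAt (fun τ y => f τ + g y) a c t x :=
  ⟨hf.add_const _, g', .of_forall fun y => (hg y).const_add _, hg'⟩

theorem nonpos_of_isLocalMax (hW : HasHeatDerivAt W a c t x) (hmax : IsLocalMax (W t) x) :
    c ≤ 0 := by
  obtain ⟨W', hW₁, hW₂⟩ := hW.space
  exact second_deriv_nonpos_of_isLocalMax hW₁ hW₂ hmax

end HasHeatDerivAt

theorem isCompact_setOf_mem_Icc {X : Type*} [TopologicalSpace X] [T2Space X] {K : Set X}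
    (hK : IsCompact K) {a b : X → ℝ} (ha : ContinuousOn a K) (hb : ContinuousOn b K) :
    IsCompact {q : X × ℝ | q.1 ∈ K ∧ q.2 ∈ Icc (a q.1) (b q.1)} := by
  obtain ⟨m, hm⟩ := hK.bddBelow_image ha
  obtain ⟨M, hM⟩ := hK.bddAbove_image hb
  have hbox : IsCompact (K ×ˢ Icc m M) := hK.prod isCompact_Icc
  have hmaps : MapsTo Prod.fst (K ×ˢ Icc m M) K := fun q hq => hq.1
  have hcont : ContinuousOn (fun q : X × ℝ => (q.2 - a q.1, b q.1 - q.2)) (K ×ˢ Icc m M) :=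
    (continuousOn_snd.sub (ha.comp continuousOn_fst hmaps)).prodMk
      ((hb.comp continuousOn_fst hmaps).sub continuousOn_snd)
  convert hbox.of_isClosed_subset (hcont.preimage_isClosed_of_isClosed hbox.isClosed
    (isClosed_Ici.prod isClosed_Ici : IsClosed (Ici (0 : ℝ) ×ˢ Ici (0 : ℝ)))) inter_subset_left
  ext ⟨x, y⟩
  simp only [mem_ofPred_eq, mem_inter_iff, mem_prod, mem_preimage, mem_Ici, sub_nonneg, mem_Icc]
  exact ⟨fun ⟨hx, hxy⟩ => ⟨⟨hx, (hm (mem_image_of_mem a hx)).trans hxy.1,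
    hxy.2.trans (hM (mem_image_of_mem b hx))⟩, hxy⟩, fun ⟨hx, hxy⟩ => ⟨hx.1, hxy⟩⟩

/-- `q₀` is a point of `Q` at which `exp (-t) * W` is maximal over `Q`, with positive value; the
first coordinate is time. The weight turns `∂ₜW ≤ ∂ₓ²W` into a strict inequality, so that no
perturbation is needed in the maximum principle. -/
structure IsPosExpMaxOn {X : Type*} (W : ℝ × X → ℝ) (Q : Set (ℝ × X)) (q₀ : ℝ × X) : Prop where
  mem : q₀ ∈ Q
  pos : 0 < W q₀
  le : ∀ q ∈ Q, W q ≤ exp (q.1 - q₀.1) * W q₀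

theorem IsPosExpMaxOn.le_of_same_time {X : Type*} {W : ℝ × X → ℝ} {Q : Set (ℝ × X)} {t : ℝ}
    {x y : X} (h : IsPosExpMaxOn W Q (t, x)) (hy : (t, y) ∈ Q) : W (t, y) ≤ W (t, x) := by
  simpa using h.le (t, y) hy

theorem exists_isPosExpMaxOn {X : Type*} [TopologicalSpace X] {Q : Set (ℝ × X)} (hQ : IsCompact Q)
    {W : ℝ × X → ℝ} (hW : ContinuousOn W Q) {q : ℝ × X} (hq : q ∈ Q) (hpos : 0 < W q) :
    ∃ q₀, IsPosExpMaxOn W Q q₀ := by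
  have hcont : ContinuousOn (fun r : ℝ × X => exp (-r.1) * W r) Q :=
    ContinuousOn.mul (by fun_prop) hW
  obtain ⟨q₀, hq₀, hmax⟩ := hQ.exists_isMaxOn ⟨q, hq⟩ hcont
  have hle : ∀ r ∈ Q, W r ≤ exp (r.1 - q₀.1) * W q₀ := fun r hr =>
    calc W r = exp r.1 * (exp (-r.1) * W r) := by
          rw [← mul_assoc, ← exp_add, add_neg_cancel, exp_zero, one_mul]
      _ ≤ exp r.1 * (exp (-q₀.1) * W q₀) := mul_le_mul_of_nonneg_left (hmax hr) (exp_pos _).le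
      _ = exp (r.1 - q₀.1) * W q₀ := by rw [← mul_assoc, ← exp_add, sub_eq_add_neg]
  exact ⟨q₀, hq₀, pos_of_mul_pos_right (hpos.trans_le (hle q hq)) (exp_pos _).le, hle⟩

/-- The points `(t, x)` with `0 ≤ t ≤ T` and `a t ≤ x ≤ b t`. -/
abbrev timeStrip (a b : ℝ → ℝ) (T : ℝ) : Set (ℝ × ℝ) :=
  {q | q.1 ∈ Icc 0 T ∧ q.2 ∈ Icc (a q.1) (b q.1)}

variable {a b : ℝ → ℝ} {T : ℝ} {W : ℝ → ℝ → ℝ}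

theorem not_isPosExpMaxOn_interior {t x α c : ℝ} (ha : ContinuousOn a (Icc 0 T))
    (hb : ContinuousOn b (Icc 0 T)) (ht : t ∈ Ioc 0 T) (hx : x ∈ Ioo (a t) (b t))
    (hW : HasHeatDerivAt W α c t x) (hαc : α ≤ c) :
    ¬ IsPosExpMaxOn (fun q : ℝ × ℝ => W q.1 q.2) (timeStrip a b T) (t, x) := by
  intro hmax
  have htI := Ioc_subset_Icc_self ht
  have hspace : c ≤ 0 := hW.nonpos_of_isLocalMax (by
    filter_upwards [Ioo_mem_nhds hx.1 hx.2] with y hy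
    exact hmax.le_of_same_time ⟨htI, Ioo_subset_Icc_self hy⟩)
  have htime : W t x ≤ α := le_of_hasDerivAt_of_le_exp_mul (f := fun τ => W τ x) hW.time (by
    have hnhds := nhdsLT_le_nhdsWithin_Icc ht
    filter_upwards [hnhds self_mem_nhdsWithin, hnhds ((ha t htI).eventually (gt_mem_nhds hx.1)),
      hnhds ((hb t htI).eventually (lt_mem_nhds hx.2))] with τ hτ haτ hbτ
    exact hmax.le (τ, x) ⟨hτ, haτ.le, hbτ.le⟩)
  exact hmax.pos.not_ge (htime.trans (hαc.trans hspace))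

theorem heat_subsolution_nonpos (ha : ContinuousOn a (Icc 0 T)) (hb : ContinuousOn b (Icc 0 T))
    (hW : ContinuousOn (fun q : ℝ × ℝ => W q.1 q.2) (timeStrip a b T))
    (hinit : ∀ x ∈ Icc (a 0) (b 0), W 0 x ≤ 0) (hright : ∀ t ∈ Ioc 0 T, W t (b t) ≤ 0)
    (hleft : ∀ t ∈ Ioc 0 T, 0 < W t (a t) → ∃ d > 0, HasDerivWithinAt (W t) d (Ici (a t)) (a t))
    (hheat : ∀ t ∈ Ioc 0 T, ∀ x ∈ Ioo (a t) (b t), ∃ α c, HasHeatDerivAt W α c t x ∧ α ≤ c) :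
    ∀ t ∈ Icc 0 T, ∀ x ∈ Icc (a t) (b t), W t x ≤ 0 := by
  intro t ht x hx
  by_contra! hpos
  obtain ⟨⟨t₀, x₀⟩, hmax⟩ := exists_isPosExpMaxOn (isCompact_setOf_mem_Icc isCompact_Icc ha hb) hW
    (q := (t, x)) ⟨ht, hx⟩ hpos
  obtain ⟨ht₀, hx₀⟩ : t₀ ∈ Icc 0 T ∧ x₀ ∈ Icc (a t₀) (b t₀) := hmax.mem
  have hpos₀ : 0 < W t₀ x₀ := hmax.pos
  have ht₀' : t₀ ∈ Ioc 0 T := by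
    refine ⟨ht₀.1.lt_of_ne ?_, ht₀.2⟩
    rintro rfl
    exact hpos₀.not_ge (hinit x₀ hx₀)
  have hx₀b : x₀ < b t₀ := hx₀.2.lt_of_ne fun h => hpos₀.not_ge (h ▸ hright t₀ ht₀')
  rcases hx₀.1.eq_or_lt with rfl | hax₀
  · obtain ⟨d, hd, hderiv⟩ := hleft t₀ ht₀' hpos₀
    refine hd.not_ge (hasDerivWithinAt_Ici_nonpos_of_le hderiv ?_)
    filter_upwards [Ioo_mem_nhdsGT hx₀b] with y hy
    exact hmax.le_of_same_time ⟨ht₀, Ioo_subset_Icc_self hy⟩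
  · obtain ⟨α, c, hderiv, hαc⟩ := hheat t₀ ht₀' x₀ ⟨hax₀, hx₀b⟩
    exact not_isPosExpMaxOn_interior ha hb ht₀' ⟨hax₀, hx₀b⟩ hderiv hαc hmax

end MaximumPrinciple

namespace IsSolOn

section Basic

variable {p s₀ T : ℝ} {φ s : ℝ → ℝ} {u : ℝ → ℝ → ℝ}

theorem hasHeatDerivAt (h : IsSolOn p s₀ φ T s u) {t x : ℝ} (ht : t ∈ Ioc 0 T)
    (hx : x ∈ Ioo 0 (s t)) :
    HasHeatDerivAt u (deriv (deriv (u t)) x) (deriv (deriv (u t)) x) t x where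
  time := by
    rw [← h.heat t ht x hx]
    exact (h.ut_diff t ht x hx).hasDerivAt
  space := by
    refine ⟨deriv (u t), ?_, (h.uxx_diff t ht x hx).hasDerivAt⟩
    filter_upwards [Ioo_mem_nhds hx.1 hx.2] with y hy using (h.ux_diff t ht y hy).hasDerivAt

theorem continuousOn_slice (h : IsSolOn p s₀ φ T s u) {t : ℝ} (ht : t ∈ Icc 0 T) :
    ContinuousOn (u t) (Icc 0 (s t)) :=
  h.u_cont.comp (f := fun x => (t, x)) (by fun_prop) fun _ hx => ⟨ht, hx⟩

theorem continuousOn_deriv_slice (h : IsSolOn p s₀ φ T s u) {t : ℝ} (ht : t ∈ Ioc 0 T) :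
    ContinuousOn (deriv (u t)) (Icc 0 (s t)) :=
  h.ux_cont.comp (f := fun x => (t, x)) (by fun_prop) fun _ hx => ⟨ht, hx⟩

theorem hasDerivWithinAt_zero (h : IsSolOn p s₀ φ T s u) {t : ℝ} (ht : t ∈ Ioc 0 T) :
    HasDerivWithinAt (u t) (deriv (u t) 0) (Ici 0) 0 := by
  have htI := Ioc_subset_Icc_self ht
  have hs := h.s_pos t htI
  refine hasDerivWithinAt_Ici_of_tendsto_deriv (s := Ioo 0 (s t))
    (fun x hx => (h.ux_diff t ht x hx).differentiableWithinAt)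
    ((h.continuousOn_slice htI 0 ⟨le_rfl, hs.le⟩).mono Ioo_subset_Icc_self)
    (Ioo_mem_nhdsGT hs) ?_
  have hux := (h.continuousOn_deriv_slice ht 0 ⟨le_rfl, hs.le⟩).mono Ioo_subset_Icc_self
  rwa [ContinuousWithinAt, nhdsWithin_Ioo_eq_nhdsGT hs] at hux

theorem hasDerivWithinAt_free_boundary (h : IsSolOn p s₀ φ T s u) {t : ℝ} (ht : t ∈ Ioc 0 T) :
    HasDerivWithinAt (u t) (deriv (u t) (s t)) (Iic (s t)) (s t) := by
  have htI := Ioc_subset_Icc_self ht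
  have hs := h.s_pos t htI
  refine hasDerivWithinAt_Iic_of_tendsto_deriv (s := Ioo 0 (s t))
    (fun x hx => (h.ux_diff t ht x hx).differentiableWithinAt)
    ((h.continuousOn_slice htI (s t) ⟨hs.le, le_rfl⟩).mono Ioo_subset_Icc_self)
    (Ioo_mem_nhdsLT hs) ?_
  have hux := (h.continuousOn_deriv_slice ht (s t) ⟨hs.le, le_rfl⟩).mono Ioo_subset_Icc_self
  rwa [ContinuousWithinAt, nhdsWithin_Ioo_eq_nhdsLT hs] at hux

theorem deriv_free_boundary_nonneg (h : IsSolOn p s₀ φ T s u) {t : ℝ} (ht : t ∈ Ioc 0 T) :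
    0 ≤ deriv s t := by
  have htI := Ioc_subset_Icc_self ht
  rw [h.stefan t ht]
  refine hasDerivWithinAt_Iic_nonneg_of_le (h.hasDerivWithinAt_free_boundary ht).neg ?_
  filter_upwards [Ioo_mem_nhdsLT (h.s_pos t htI)] with y hy
  have := h.u_nonneg t htI y (Ioo_subset_Icc_self hy)
  simpa [h.bc_free t ht] using this

theorem monotoneOn_free_boundary (h : IsSolOn p s₀ φ T s u) : MonotoneOn s (Icc 0 T) := by
  refine monotoneOn_of_deriv_nonneg (convex_Icc _ _) h.s_cont ?_ ?_ <;> rw [interior_Icc]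
  · exact fun t ht => (h.s_diff t (Ioo_subset_Ioc_self ht)).differentiableWithinAt
  · exact fun t ht => h.deriv_free_boundary_nonneg (Ioo_subset_Ioc_self ht)

theorem le_free_boundary (h : IsSolOn p s₀ φ T s u) {t : ℝ} (ht : t ∈ Icc 0 T) : s₀ ≤ s t := by
  rw [← h.init_s]
  exact h.monotoneOn_free_boundary ⟨le_rfl, h.T_pos.le⟩ ht ht.1

theorem s₀_pos (h : IsSolOn p s₀ φ T s u) : 0 < s₀ :=
  h.init_s ▸ h.s_pos 0 ⟨le_rfl, h.T_pos.le⟩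

theorem le_mul_free_boundary_sub (h : IsSolOn p s₀ φ T s u) {M K : ℝ} (hK : 0 ≤ K)
    (hM : ∀ t ∈ Icc 0 T, u t 0 ≤ M) (hMK : M ≤ K * s₀)
    (hφ : ∀ x ∈ Icc 0 s₀, φ x ≤ K * (s₀ - x)) :
    ∀ t ∈ Icc 0 T, ∀ x ∈ Icc 0 (s t), u t x ≤ K * (s t - x) := by
  suffices hW : ∀ t ∈ Icc 0 T, ∀ x ∈ Icc 0 (s t), u t x - (K * s t + -K * x) ≤ 0 from
    fun t ht x hx => by linarith [hW t ht x hx]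
  refine heat_subsolution_nonpos (a := fun _ => 0) continuousOn_const h.s_cont ?_ ?_ ?_ ?_ ?_
  · have hs : ContinuousOn (fun q : ℝ × ℝ => s q.1) (timeStrip (fun _ => 0) s T) :=
      h.s_cont.comp continuousOn_fst fun q hq => hq.1
    exact h.u_cont.sub ((continuousOn_const.mul hs).add (by fun_prop))
  · intro x hx
    rw [h.init_s] at hx ⊢
    rw [h.init x hx]
    linarith [hφ x hx]
  · intro t ht
    simp [h.bc_free t ht]
  · intro t ht hpos
    have htI := Ioc_subset_Icc_self ht
    linarith [hM t htI, mul_le_mul_of_nonneg_left (h.le_free_boundary htI) hK]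
  · intro t ht x hx
    refine ⟨_, _, (h.hasHeatDerivAt ht hx).sub (.add_of_separated (g' := fun _ => -K)
      ((h.s_diff t ht).hasDerivAt.const_mul K) (fun _ => hasDerivAt_const_mul (-K))
      (hasDerivAt_const x (-K))), ?_⟩
    linarith [mul_nonneg hK (h.deriv_free_boundary_nonneg ht)]

theorem mul_deriv_deriv_nonpos_of_isLocalMax (h : IsSolOn p s₀ φ T s u) {t x k m : ℝ}
    (ht : t ∈ Ioc 0 T) (hx : x ∈ Ioo 0 (s t)) (hmax : IsLocalMax (fun z => k * u t z + m * z) x) :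
    k * deriv (deriv (u t)) x ≤ 0 := by
  refine second_deriv_nonpos_of_isLocalMax (f' := fun z => k * deriv (u t) z + m) ?_
    (((h.uxx_diff t ht x hx).hasDerivAt.const_mul k).add_const m) hmax
  filter_upwards [Ioo_mem_nhds hx.1 hx.2] with z hz
  exact ((h.ux_diff t ht z hz).hasDerivAt.const_mul k).add (hasDerivAt_const_mul m)

end Basic

section Lipschitz

variable {p s₀ T : ℝ} {φ s : ℝ → ℝ} {u : ℝ → ℝ → ℝ} {e L M : ℝ}

/-- The triples `(t, x, y)` with `0 ≤ t ≤ T` and `0 ≤ y ≤ x ≤ s t`. -/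
def orderedPairs (s : ℝ → ℝ) (T : ℝ) : Set (ℝ × ℝ × ℝ) :=
  {q | q.1 ∈ Icc 0 T ∧ q.2.1 ∈ Icc 0 (s q.1) ∧ q.2.2 ∈ Icc 0 q.2.1}

/-- The excess of the increment of `e * u t` between `y` and `x` over `L * (x - y)`. For `e = ± 1`
its nonpositivity is the Lipschitz bound with constant `L`. -/
def lipExcess (u : ℝ → ℝ → ℝ) (e L : ℝ) (q : ℝ × ℝ × ℝ) : ℝ :=
  e * (u q.1 q.2.1 - u q.1 q.2.2) - L * (q.2.1 - q.2.2)

theorem isCompact_orderedPairs (hs : ContinuousOn s (Icc 0 T)) : IsCompact (orderedPairs s T) := by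
  have hstrip : IsCompact (timeStrip (fun _ => 0) s T) :=
    isCompact_setOf_mem_Icc isCompact_Icc continuousOn_const hs
  convert (isCompact_setOf_mem_Icc hstrip (continuousOn_const (c := 0)) continuousOn_snd).image
    (f := fun q => (q.1.1, q.1.2, q.2)) (by fun_prop) using 1
  ext ⟨t, x, y⟩
  constructor
  · exact fun ⟨ht, hx, hy⟩ => ⟨((t, x), y), ⟨⟨ht, hx⟩, hy⟩, rfl⟩
  · rintro ⟨_, ⟨⟨ht, hx⟩, hy⟩, ⟨⟩⟩
    exact ⟨ht, hx, hy⟩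

theorem continuousOn_lipExcess (h : IsSolOn p s₀ φ T s u) :
    ContinuousOn (lipExcess u e L) (orderedPairs s T) := by
  have hx : ContinuousOn (fun q : ℝ × ℝ × ℝ => u q.1 q.2.1) (orderedPairs s T) :=
    h.u_cont.comp (f := fun q : ℝ × ℝ × ℝ => (q.1, q.2.1)) (by fun_prop)
      fun q hq => ⟨hq.1, hq.2.1⟩
  have hy : ContinuousOn (fun q : ℝ × ℝ × ℝ => u q.1 q.2.2) (orderedPairs s T) :=
    h.u_cont.comp (f := fun q : ℝ × ℝ × ℝ => (q.1, q.2.2)) (by fun_prop)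
      fun q hq => ⟨hq.1, hq.2.2.1, hq.2.2.2.trans hq.2.1.2⟩
  exact (continuousOn_const.mul (hx.sub hy)).sub (by fun_prop)

theorem not_isPosExpMaxOn_lipExcess_interior (h : IsSolOn p s₀ φ T s u) {t x y : ℝ}
    (ht : t ∈ Ioc 0 T) (hy : 0 < y) (hyx : y < x) (hxs : x < s t) :
    ¬ IsPosExpMaxOn (lipExcess u e L) (orderedPairs s T) (t, x, y) := by
  intro hmax
  have htI := Ioc_subset_Icc_self ht
  have hux := h.hasHeatDerivAt ht ⟨hy.trans hyx, hxs⟩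
  have huy := h.hasHeatDerivAt ht ⟨hy, hyx.trans hxs⟩
  have hxx : e * deriv (deriv (u t)) x ≤ 0 :=
    h.mul_deriv_deriv_nonpos_of_isLocalMax (m := -L) ht ⟨hy.trans hyx, hxs⟩ (by
      filter_upwards [Ioo_mem_nhds hyx hxs] with z hz
      have := hmax.le_of_same_time (y := (z, y))
        ⟨htI, ⟨(hy.trans hz.1).le, hz.2.le⟩, hy.le, hz.1.le⟩
      simp only [lipExcess] at this
      linarith)
  have hyy : -e * deriv (deriv (u t)) y ≤ 0 :=
    h.mul_deriv_deriv_nonpos_of_isLocalMax (m := L) ht ⟨hy, hyx.trans hxs⟩ (by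
      filter_upwards [Ioo_mem_nhds hy hyx] with z hz
      have := hmax.le_of_same_time (y := (x, z))
        ⟨htI, ⟨(hy.trans hyx).le, hxs.le⟩, Ioo_subset_Icc_self hz⟩
      simp only [lipExcess] at this
      linarith)
  have htime := le_of_hasDerivAt_of_le_exp_mul (f := fun τ => lipExcess u e L (τ, x, y))
    (((hux.time.sub huy.time).const_mul e).sub_const (L * (x - y))) (by
      have hnhds := nhdsLT_le_nhdsWithin_Icc ht
      filter_upwards [hnhds self_mem_nhdsWithin,
        hnhds ((h.s_cont t htI).eventually (lt_mem_nhds hxs))] with τ hτ hsτ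
      exact hmax.le (τ, x, y) ⟨hτ, ⟨(hy.trans hyx).le, hsτ.le⟩, hy.le, hyx.le⟩)
  linarith [hmax.pos]

theorem not_isPosExpMaxOn_lipExcess_zero (h : IsSolOn p s₀ φ T s u) {t x : ℝ} (he : |e| = 1)
    (hp : 0 ≤ p) (hM : ∀ t ∈ Icc 0 T, u t 0 ≤ M) (hML : M ^ p < L)
    (ht : t ∈ Ioc 0 T) (hx : 0 < x) (hxs : x ≤ s t) :
    ¬ IsPosExpMaxOn (lipExcess u e L) (orderedPairs s T) (t, x, 0) := by
  intro hmax
  have htI := Ioc_subset_Icc_self ht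
  have hderiv : HasDerivWithinAt (fun z => -e * u t z + L * z) (-e * deriv (u t) 0 + L) (Ici 0) 0 :=
    ((h.hasDerivWithinAt_zero ht).const_mul (-e)).add (hasDerivAt_const_mul L).hasDerivWithinAt
  have hslope : -e * deriv (u t) 0 + L ≤ 0 := hasDerivWithinAt_Ici_nonpos_of_le hderiv (by
    filter_upwards [Ioo_mem_nhdsGT hx] with z hz
    have := hmax.le_of_same_time (y := (x, z)) ⟨htI, ⟨hx.le, hxs⟩, Ioo_subset_Icc_self hz⟩
    simp only [lipExcess] at this
    linarith)
  have hu₀ := h.u_nonneg t htI 0 ⟨le_rfl, (h.s_pos t htI).le⟩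
  have hflux : u t 0 ^ p ≤ M ^ p := rpow_le_rpow hu₀ (hM t htI) hp
  have hflux₀ : 0 ≤ u t 0 ^ p := rpow_nonneg hu₀ p
  have hbc := h.bc_zero t ht
  rcases eq_or_eq_neg_of_abs_eq he with rfl | rfl <;> linarith

theorem lipExcess_nonpos (h : IsSolOn p s₀ φ T s u) (hL : 0 ≤ L) (he : |e| = 1)
    (hp : 0 ≤ p) (hM : ∀ t ∈ Icc 0 T, u t 0 ≤ M) (hMs : M ≤ L * s₀) (hML : M ^ p < L)
    (hφ : ∀ x ∈ Icc 0 s₀, ∀ y ∈ Icc 0 s₀, |φ x - φ y| ≤ L * |x - y|) (hφs : φ s₀ = 0) :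
    ∀ q ∈ orderedPairs s T, lipExcess u e L q ≤ 0 := by
  have hbarrier := h.le_mul_free_boundary_sub hL hM hMs fun x hx => by
    simpa [hφs, abs_of_nonpos (sub_nonpos.2 hx.2)] using
      (le_abs_self _).trans (hφ x hx s₀ ⟨h.s₀_pos.le, le_rfl⟩)
  intro q hq
  by_contra! hpos
  obtain ⟨⟨t, x, y⟩, hmax⟩ := exists_isPosExpMaxOn (isCompact_orderedPairs h.s_cont)
    h.continuousOn_lipExcess hq hpos
  obtain ⟨ht, hx, hy⟩ : t ∈ Icc 0 T ∧ x ∈ Icc 0 (s t) ∧ y ∈ Icc 0 x := hmax.mem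
  have hpos' : 0 < e * (u t x - u t y) - L * (x - y) := hmax.pos
  have hys : y ∈ Icc 0 (s t) := ⟨hy.1, hy.2.trans hx.2⟩
  have hyx : y < x := hy.2.lt_of_ne (by rintro rfl; simp at hpos')
  have ht₀ : t ∈ Ioc 0 T := by
    refine ⟨ht.1.lt_of_ne ?_, ht.2⟩
    rintro rfl
    rw [h.init_s] at hx hys
    rw [h.init _ hx, h.init _ hys] at hpos'
    have hlip := hφ _ hx _ hys
    rw [abs_of_pos (sub_pos.2 hyx), ← one_mul |φ x - φ y|, ← he, ← abs_mul] at hlip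
    linarith [le_abs_self (e * (φ x - φ y))]
  have hxs : x < s t := by
    refine hx.2.lt_of_ne ?_
    rintro rfl
    rw [h.bc_free t ht₀] at hpos'
    have := mul_nonneg hL (sub_nonneg.2 hy.2)
    rcases eq_or_eq_neg_of_abs_eq he with rfl | rfl <;>
      linarith [h.u_nonneg t ht y hys, hbarrier t ht y hys]
  rcases hy.1.eq_or_lt with rfl | hy₀
  · exact h.not_isPosExpMaxOn_lipExcess_zero he hp hM hML ht₀ hyx hx.2 hmax
  · exact h.not_isPosExpMaxOn_lipExcess_interior ht₀ hy₀ hyx hxs hmax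

theorem abs_sub_le_mul_abs_sub (h : IsSolOn p s₀ φ T s u) (hL : 0 ≤ L) (hp : 0 ≤ p)
    (hM : ∀ t ∈ Icc 0 T, u t 0 ≤ M) (hMs : M ≤ L * s₀) (hML : M ^ p < L)
    (hφ : ∀ x ∈ Icc 0 s₀, ∀ y ∈ Icc 0 s₀, |φ x - φ y| ≤ L * |x - y|) (hφs : φ s₀ = 0)
    {t : ℝ} (ht : t ∈ Icc 0 T) :
    ∀ x ∈ Icc 0 (s t), ∀ y ∈ Icc 0 (s t), |u t x - u t y| ≤ L * |x - y| := by
  intro x hx y hy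
  wlog hyx : y ≤ x generalizing x y
  · rw [abs_sub_comm, abs_sub_comm x y]
    exact this y hy x hx (le_of_not_ge hyx)
  have hexcess {e : ℝ} (he : |e| = 1) : e * (u t x - u t y) - L * (x - y) ≤ 0 :=
    h.lipExcess_nonpos hL he hp hM hMs hML hφ hφs (t, x, y) ⟨ht, hx, hy.1, hyx⟩
  rw [abs_of_nonneg (sub_nonneg.2 hyx), abs_le]
  constructor <;> linarith [hexcess abs_one, hexcess (e := -1) (by simp)]

end Lipschitz

end IsSolOn

section Clamp

/-- The nearest point of `[a, b]` to `x`, for `a ≤ b`. It extends functions given on an interval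
to the whole line. -/
def clamp (a b x : ℝ) : ℝ := max a (min x b)

@[fun_prop]
theorem continuous_clamp {X : Type*} [TopologicalSpace X] {f g k : X → ℝ} (hf : Continuous f)
    (hg : Continuous g) (hk : Continuous k) : Continuous fun x => clamp (f x) (g x) (k x) :=
  hf.max (hk.min hg)

theorem clamp_mem_Icc {a b : ℝ} (h : a ≤ b) (x : ℝ) : clamp a b x ∈ Icc a b :=
  ⟨le_max_left _ _, max_le h (min_le_right _ _)⟩

theorem clamp_of_mem {a b x : ℝ} (h : x ∈ Icc a b) : clamp a b x = x := by
  rw [clamp, min_eq_left h.2, max_eq_right h.1]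

theorem abs_clamp_sub_clamp_le (a b x y : ℝ) : |clamp a b x - clamp a b y| ≤ |x - y| :=
  calc |clamp a b x - clamp a b y| ≤ |min x b - min y b| := by
        simpa [clamp] using abs_max_sub_max_le_max a (min x b) a (min y b)
    _ ≤ |x - y| := by simpa using abs_min_sub_min_le_max x b y b

end Clamp

section TailEnthalpy

variable {p s₀ r t x T : ℝ} {φ s : ℝ → ℝ} {u : ℝ → ℝ → ℝ}

/-- The enthalpy density `u + 1` of the phase `0 ≤ y ≤ s t`, `0 ≤ t ≤ T`, where `1` is the latent
heat, extended to the plane by clamping. -/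
def enthalpyDensity (T : ℝ) (s : ℝ → ℝ) (u : ℝ → ℝ → ℝ) (t y : ℝ) : ℝ :=
  u (clamp 0 T t) (clamp 0 (s (clamp 0 T t)) y) + 1

/-- The enthalpy contained in `[x, s t]`, which is `0` for `x ≥ s t`. -/
def tailEnthalpy (T : ℝ) (s : ℝ → ℝ) (u : ℝ → ℝ → ℝ) (t x : ℝ) : ℝ :=
  ∫ y in (min x (s (clamp 0 T t)))..(s (clamp 0 T t)), enthalpyDensity T s u t y

/-- The gradient `∂ₓu` on the phase at times in `[r, T]`, extended to the plane by clamping. -/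
def clampedGradient (r T : ℝ) (s : ℝ → ℝ) (u : ℝ → ℝ → ℝ) (t y : ℝ) : ℝ :=
  deriv (u (clamp r T t)) (clamp 0 (s (clamp r T t)) y)

theorem enthalpyDensity_eq {y : ℝ} (ht : t ∈ Icc 0 T) (hy : y ∈ Icc 0 (s t)) :
    enthalpyDensity T s u t y = u t y + 1 := by
  rw [enthalpyDensity, clamp_of_mem ht, clamp_of_mem hy]

theorem clampedGradient_eq {y : ℝ} (ht : t ∈ Icc r T) (hy : y ∈ Icc 0 (s t)) :
    clampedGradient r T s u t y = deriv (u t) y := by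
  rw [clampedGradient, clamp_of_mem ht, clamp_of_mem hy]

theorem tailEnthalpy_eq_integral (ht : t ∈ Icc 0 T) (hx : x ≤ s t) :
    tailEnthalpy T s u t x = ∫ y in x..(s t), enthalpyDensity T s u t y := by
  rw [tailEnthalpy, clamp_of_mem ht, min_eq_left hx]

theorem tailEnthalpy_eq_zero (ht : t ∈ Icc 0 T) (hx : s t ≤ x) : tailEnthalpy T s u t x = 0 := by
  rw [tailEnthalpy, clamp_of_mem ht, min_eq_right hx, intervalIntegral.integral_same]

namespace IsSolOn

theorem continuous_clamped_free_boundary (h : IsSolOn p s₀ φ T s u) (hr₀ : 0 ≤ r) (hr : r ≤ T) :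
    Continuous fun t => s (clamp r T t) :=
  h.s_cont.comp_continuous (by fun_prop)
    fun t => ⟨hr₀.trans (clamp_mem_Icc hr t).1, (clamp_mem_Icc hr t).2⟩

theorem continuous_enthalpyDensity (h : IsSolOn p s₀ φ T s u) :
    Continuous fun q : ℝ × ℝ => enthalpyDensity T s u q.1 q.2 := by
  have hs := h.continuous_clamped_free_boundary le_rfl h.T_pos.le
  refine (h.u_cont.comp_continuous (f := fun q : ℝ × ℝ =>
    (clamp 0 T q.1, clamp 0 (s (clamp 0 T q.1)) q.2)) ?_ fun q => ?_).add continuous_const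
  · exact Continuous.prodMk (by fun_prop)
      (continuous_clamp continuous_const (hs.comp continuous_fst) continuous_snd)
  · have ht := clamp_mem_Icc h.T_pos.le q.1
    exact ⟨ht, clamp_mem_Icc (h.s_pos _ ht).le _⟩

theorem continuous_enthalpyDensity_slice (h : IsSolOn p s₀ φ T s u) (t : ℝ) :
    Continuous (enthalpyDensity T s u t) :=
  h.continuous_enthalpyDensity.comp (f := fun y : ℝ => (t, y)) (by fun_prop)

theorem continuous_clampedGradient (h : IsSolOn p s₀ φ T s u) (hr₀ : 0 < r) (hr : r ≤ T) :
    Continuous fun q : ℝ × ℝ => clampedGradient r T s u q.1 q.2 := by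
  have hs := h.continuous_clamped_free_boundary hr₀.le hr
  refine h.ux_cont.comp_continuous (f := fun q : ℝ × ℝ =>
    (clamp r T q.1, clamp 0 (s (clamp r T q.1)) q.2)) ?_ fun q => ?_
  · exact Continuous.prodMk (by fun_prop)
      (continuous_clamp continuous_const (hs.comp continuous_fst) continuous_snd)
  · have ht := clamp_mem_Icc hr q.1
    exact ⟨⟨hr₀.trans_le ht.1, ht.2⟩,
      clamp_mem_Icc (h.s_pos _ ⟨hr₀.le.trans ht.1, ht.2⟩).le _⟩

theorem continuous_clampedGradient_time (h : IsSolOn p s₀ φ T s u) (hr₀ : 0 < r) (hr : r ≤ T)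
    (x : ℝ) : Continuous fun τ => clampedGradient r T s u τ x :=
  (h.continuous_clampedGradient hr₀ hr).comp (f := fun τ : ℝ => (τ, x)) (by fun_prop)

theorem continuous_integral_clampedGradient (h : IsSolOn p s₀ φ T s u) (hr₀ : 0 < r) (hr : r ≤ T)
    (t : ℝ) : Continuous fun x => ∫ τ in r..t, clampedGradient r T s u τ x :=
  intervalIntegral.continuous_parametric_intervalIntegral_of_continuous
    (f := fun x τ => clampedGradient r T s u τ x)
    ((h.continuous_clampedGradient hr₀ hr).comp (f := fun z : ℝ × ℝ => (z.2, z.1)) (by fun_prop))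
    continuous_const

theorem continuous_tailEnthalpy (h : IsSolOn p s₀ φ T s u) :
    Continuous fun q : ℝ × ℝ => tailEnthalpy T s u q.1 q.2 := by
  have hs := h.continuous_clamped_free_boundary le_rfl h.T_pos.le
  have hE : Continuous (Function.uncurry fun (q : ℝ × ℝ) y => enthalpyDensity T s u q.1 y) :=
    h.continuous_enthalpyDensity.comp (f := fun z : (ℝ × ℝ) × ℝ => (z.1.1, z.2)) (by fun_prop)
  have hupper := intervalIntegral.continuous_parametric_intervalIntegral_of_continuous
    (μ := volume) (a₀ := 0) hE (hs.comp continuous_fst)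
  have hlower := intervalIntegral.continuous_parametric_intervalIntegral_of_continuous
    (μ := volume) (a₀ := 0) hE (continuous_snd.min (hs.comp continuous_fst))
  refine (hupper.sub hlower).congr fun q => ?_
  exact intervalIntegral.integral_interval_sub_left
    ((h.continuous_enthalpyDensity_slice q.1).intervalIntegrable _ _)
    ((h.continuous_enthalpyDensity_slice q.1).intervalIntegrable _ _)

theorem hasDerivAt_integral_enthalpyDensity (h : IsSolOn p s₀ φ T s u) (t x b : ℝ) :
    HasDerivAt (fun y => ∫ z in y..b, enthalpyDensity T s u t z) (-enthalpyDensity T s u t x) x :=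
  have hE := h.continuous_enthalpyDensity_slice t
  intervalIntegral.integral_hasDerivAt_left (hE.intervalIntegrable x b)
    hE.stronglyMeasurable.stronglyMeasurableAtFilter hE.continuousAt

theorem hasDerivWithinAt_Iic_tailEnthalpy (h : IsSolOn p s₀ φ T s u) (ht : t ∈ Icc 0 T)
    (hx : x ≤ s t) :
    HasDerivWithinAt (tailEnthalpy T s u t) (-enthalpyDensity T s u t x) (Iic x) x :=
  (h.hasDerivAt_integral_enthalpyDensity t x (s t)).hasDerivWithinAt.congr
    (fun _ hy => tailEnthalpy_eq_integral ht ((mem_Iic.1 hy).trans hx))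
    (tailEnthalpy_eq_integral ht hx)

theorem hasDerivAt_tailEnthalpy_space (h : IsSolOn p s₀ φ T s u) (ht : t ∈ Icc 0 T)
    (hx : x < s t) :
    HasDerivAt (tailEnthalpy T s u t) (-enthalpyDensity T s u t x) x := by
  refine (h.hasDerivAt_integral_enthalpyDensity t x (s t)).congr_of_eventuallyEq ?_
  filter_upwards [Iio_mem_nhds hx] with y hy using tailEnthalpy_eq_integral ht (mem_Iio.1 hy).le

theorem integral_sub_eq_integral_flux (h : IsSolOn p s₀ φ T s u) {b : ℝ} (hr : 0 < r)
    (hrt : r ≤ t) (ht : t ≤ T) (hx : 0 < x) (hxb : x ≤ b) (hb : b < s r) :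
    ∫ y in x..b, (u t y - u r y) = ∫ τ in r..t, (deriv (u τ) b - deriv (u τ) x) := by
  have hin : ∀ τ ∈ Icc r t, ∀ y ∈ Icc x b, τ ∈ Ioc 0 T ∧ y ∈ Ioo 0 (s τ) := fun τ hτ y hy =>
    have hτ' : τ ∈ Ioc 0 T := ⟨hr.trans_le hτ.1, hτ.2.trans ht⟩
    ⟨hτ', hx.trans_le hy.1, (hy.2.trans_lt hb).trans_le (h.monotoneOn_free_boundary
      ⟨hr.le, hrt.trans ht⟩ (Ioc_subset_Icc_self hτ') hτ.1)⟩
  have huxx : ContinuousOn (fun q : ℝ × ℝ => deriv (deriv (u q.2)) q.1) (Icc x b ×ˢ Icc r t) :=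
    h.uxx_cont.comp (f := fun q : ℝ × ℝ => (q.2, q.1)) (by fun_prop) fun q hq =>
      hin _ hq.2 _ hq.1
  rw [← uIcc_of_le hrt, ← uIcc_of_le hxb] at hin huxx
  have htime : ∀ y ∈ uIcc x b, u t y - u r y = ∫ τ in r..t, deriv (deriv (u τ)) y := fun y hy =>
    (intervalIntegral.integral_eq_sub_of_hasDerivAt (f := fun τ => u τ y)
      (fun τ hτ => (h.hasHeatDerivAt (hin τ hτ y hy).1 (hin τ hτ y hy).2).time)
      (huxx.comp (f := fun τ => (y, τ)) (by fun_prop) fun τ hτ =>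
        ⟨hy, hτ⟩).intervalIntegrable).symm
  have hspace : ∀ τ ∈ uIcc r t,
      deriv (u τ) b - deriv (u τ) x = ∫ y in x..b, deriv (deriv (u τ)) y := fun τ hτ =>
    (intervalIntegral.integral_eq_sub_of_hasDerivAt
      (fun y hy => (h.uxx_diff τ (hin τ hτ y hy).1 y (hin τ hτ y hy).2).hasDerivAt)
      (huxx.comp (f := fun y => (y, τ)) (by fun_prop) fun y hy =>
        ⟨hy, hτ⟩).intervalIntegrable).symm
  rw [intervalIntegral.integral_congr htime, intervalIntegral.integral_congr hspace,
    intervalIntegral_intervalIntegral_swap]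
  exact (huxx.integrableOn_compact (isCompact_uIcc.prod isCompact_uIcc) (μ := volume)).mono_set
    (prod_mono uIoc_subset_uIcc uIoc_subset_uIcc)

theorem integral_enthalpyDensity_sub (h : IsSolOn p s₀ φ T s u) (hr : 0 < r) (hrt : r ≤ t)
    (ht : t ≤ T) (hx : 0 < x) (hxs : x < s r) :
    ∫ y in x..(s r), (enthalpyDensity T s u t y - enthalpyDensity T s u r y) =
      ∫ τ in r..t, (clampedGradient r T s u τ (s r) - clampedGradient r T s u τ x) := by
  have hrT : r ∈ Icc 0 T := ⟨hr.le, hrt.trans ht⟩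
  have htT : t ∈ Icc 0 T := ⟨hr.le.trans hrt, ht⟩
  have hsr : ∀ τ ∈ Icc r t, s r ≤ s τ := fun τ hτ =>
    h.monotoneOn_free_boundary hrT ⟨hr.le.trans hτ.1, hτ.2.trans ht⟩ hτ.1
  have hcontE : Continuous fun b =>
      ∫ y in x..b, (enthalpyDensity T s u t y - enthalpyDensity T s u r y) :=
    intervalIntegral.continuous_primitive (fun a b => ((h.continuous_enthalpyDensity_slice t).sub
      (h.continuous_enthalpyDensity_slice r)).intervalIntegrable a b) x
  have hcontX : Continuous fun b =>
      ∫ τ in r..t, (clampedGradient r T s u τ b - clampedGradient r T s u τ x) := by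
    have hX := h.continuous_clampedGradient hr (hrt.trans ht)
    refine intervalIntegral.continuous_parametric_intervalIntegral_of_continuous ?_ continuous_const
    exact (hX.comp (f := fun z : ℝ × ℝ => (z.2, z.1)) (by fun_prop)).sub
      (hX.comp (f := fun z : ℝ × ℝ => (z.2, x)) (by fun_prop))
  have heq : EqOn (fun b => ∫ y in x..b, (enthalpyDensity T s u t y - enthalpyDensity T s u r y))
      (fun b => ∫ τ in r..t, (clampedGradient r T s u τ b - clampedGradient r T s u τ x))
      (Ico x (s r)) := fun b hb => by
    refine Eq.trans ?_ ((h.integral_sub_eq_integral_flux hr hrt ht hx hb.1 hb.2).trans ?_)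
    · refine intervalIntegral.integral_congr fun y hy => ?_
      rw [uIcc_of_le hb.1] at hy
      have hyr : y ∈ Icc 0 (s r) := ⟨hx.le.trans hy.1, hy.2.trans hb.2.le⟩
      have hyt : y ∈ Icc 0 (s t) := ⟨hyr.1, hyr.2.trans (hsr t ⟨hrt, le_rfl⟩)⟩
      simp only [enthalpyDensity_eq hrT hyr, enthalpyDensity_eq htT hyt, add_sub_add_right_eq_sub]
    · refine intervalIntegral.integral_congr fun τ hτ => ?_
      rw [uIcc_of_le hrt] at hτ
      have hτT : τ ∈ Icc r T := ⟨hτ.1, hτ.2.trans ht⟩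
      rw [clampedGradient_eq hτT ⟨hx.le.trans hb.1, hb.2.le.trans (hsr τ hτ)⟩,
        clampedGradient_eq hτT ⟨hx.le, hxs.le.trans (hsr τ hτ)⟩]
  have hclosure := heq.closure hcontE hcontX
  rw [closure_Ico hxs.ne] at hclosure
  exact hclosure ⟨hxs.le, le_rfl⟩

theorem eventually_abs_enthalpyDensity_sub_one_lt (h : IsSolOn p s₀ φ T s u) (ht : t ∈ Ioc 0 T)
    {ε : ℝ} (hε : 0 < ε) :
    ∀ᶠ q : ℝ × ℝ in 𝓝 (t, s t), |enthalpyDensity T s u q.1 q.2 - 1| < ε := by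
  have htI := Ioc_subset_Icc_self ht
  have hcont : Continuous fun q : ℝ × ℝ => |enthalpyDensity T s u q.1 q.2 - 1| :=
    (h.continuous_enthalpyDensity.sub continuous_const).abs
  refine hcont.continuousAt.eventually (gt_mem_nhds ?_)
  simpa [enthalpyDensity_eq htI ⟨(h.s_pos t htI).le, le_rfl⟩, h.bc_free t ht] using hε

theorem hasDerivAt_integral_free_boundary (h : IsSolOn p s₀ φ T s u) (hr : r ∈ Ioc 0 T) :
    HasDerivAt (fun t => ∫ y in (s r)..(s t), (enthalpyDensity T s u t y - 1)) 0 r := by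
  rw [hasDerivAt_iff_isLittleO]
  simp only [intervalIntegral.integral_same, sub_zero, smul_zero]
  refine Asymptotics.IsLittleO.trans_isBigO ?_ (h.s_diff r hr).hasDerivAt.isBigO_sub
  rw [Asymptotics.isLittleO_iff]
  intro ε hε
  obtain ⟨η, hη, hball⟩ :=
    Metric.eventually_nhds_iff.1 (h.eventually_abs_enthalpyDensity_sub_one_lt hr hε)
  filter_upwards [Metric.ball_mem_nhds r hη,
    (h.s_diff r hr).continuousAt.eventually (Metric.ball_mem_nhds (s r) hη)] with t ht hst
  refine intervalIntegral.norm_integral_le_of_norm_le_const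
    (f := fun y => enthalpyDensity T s u t y - 1) (C := ε) fun y hy => ?_
  refine (hball (y := (t, y)) ?_).le
  rw [Prod.dist_eq]
  rw [Real.dist_eq] at hst
  exact max_lt ht ((abs_sub_left_of_mem_uIcc (uIoc_subset_uIcc hy)).trans_lt hst)

theorem tailEnthalpy_eq_add_integrals (h : IsSolOn p s₀ φ T s u) (hr : 0 < r) (hrt : r ≤ t)
    (ht : t ≤ T) (hx : 0 < x) (hxs : x < s r) :
    tailEnthalpy T s u t x =
      (∫ τ in r..t, (clampedGradient r T s u τ (s r) - clampedGradient r T s u τ x)) +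
        (∫ y in (s r)..(s t), (enthalpyDensity T s u t y - 1)) + (s t - s r) +
        tailEnthalpy T s u r x := by
  have hrm : r ∈ Icc 0 T := ⟨hr.le, hrt.trans ht⟩
  have htm : t ∈ Icc 0 T := ⟨hr.le.trans hrt, ht⟩
  have hst : s r ≤ s t := h.monotoneOn_free_boundary hrm htm hrt
  have hint τ a b := (h.continuous_enthalpyDensity_slice τ).intervalIntegrable (μ := volume) a b
  rw [← h.integral_enthalpyDensity_sub hr hrt ht hx hxs, tailEnthalpy_eq_integral hrm hxs.le,
    tailEnthalpy_eq_integral htm (hxs.le.trans hst),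
    intervalIntegral.integral_sub (hint _ _ _) (hint _ _ _),
    intervalIntegral.integral_sub (hint _ _ _) (continuous_const.intervalIntegrable _ _),
    ← intervalIntegral.integral_add_adjacent_intervals (hint t x (s r)) (hint t (s r) (s t))]
  simp only [intervalIntegral.integral_const, smul_eq_mul, mul_one]
  ring

theorem hasDerivWithinAt_Ici_tailEnthalpy_time (h : IsSolOn p s₀ φ T s u) (hr : 0 < r) (hrT : r < T)
    (hx : 0 < x) (hxs : x < s r) :
    HasDerivWithinAt (fun τ => tailEnthalpy T s u τ x) (-deriv (u r) x) (Ici r) r := by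
  have hrm : r ∈ Ioc 0 T := ⟨hr, hrT.le⟩
  have hrI : r ∈ Icc r T := ⟨le_rfl, hrT.le⟩
  have hflux := (((h.continuous_clampedGradient_time hr hrT.le (s r)).sub
    (h.continuous_clampedGradient_time hr hrT.le x)).integral_hasStrictDerivAt r r).hasDerivAt
  have hsum := ((hflux.add (h.hasDerivAt_integral_free_boundary hrm)).add
    ((h.s_diff r hrm).hasDerivAt.sub_const (s r))).add_const (tailEnthalpy T s u r x)
  have hval : clampedGradient r T s u r (s r) - clampedGradient r T s u r x + 0 + deriv s r =
      -deriv (u r) x := by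
    rw [clampedGradient_eq hrI ⟨(hx.trans hxs).le, le_rfl⟩, clampedGradient_eq hrI ⟨hx.le, hxs.le⟩,
      h.stefan r hrm]
    ring
  rw [Pi.sub_apply, hval] at hsum
  exact ((hsum.hasDerivWithinAt (s := Icc r T)).congr_of_mem
    (fun t ht => h.tailEnthalpy_eq_add_integrals hr ht.1 ht.2 hx hxs) hrI).mono_of_mem_nhdsWithin
    (Icc_mem_nhdsGE hrT)

theorem tailEnthalpy_eq_sub_integral_gradient (h : IsSolOn p s₀ φ T s u) (hr : 0 < r) (hrt : r ≤ t)
    (ht : t < T) (hx : 0 < x) (hxs : x < s r) :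
    tailEnthalpy T s u t x =
      tailEnthalpy T s u r x - ∫ τ in r..t, clampedGradient r T s u τ x := by
  have hX := h.continuous_clampedGradient_time hr (hrt.trans ht.le) x
  have hconst := constant_of_has_deriv_right_zero (a := r) (b := t)
    (f := fun t => tailEnthalpy T s u t x + ∫ τ in r..t, clampedGradient r T s u τ x)
    ?_ ?_ t ⟨hrt, le_rfl⟩
  · simp only [intervalIntegral.integral_same] at hconst
    linarith
  · exact ((h.continuous_tailEnthalpy.comp (f := fun t => (t, x)) (by fun_prop)).add
      (intervalIntegral.continuous_primitive hX.intervalIntegrable r)).continuousOn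
  · intro τ hτ
    have hτ₀ : 0 < τ := hr.trans_le hτ.1
    have hτT : τ < T := hτ.2.trans ht
    have hxτ := hxs.trans_le
      (h.monotoneOn_free_boundary ⟨hr.le, hrt.trans ht.le⟩ ⟨hτ₀.le, hτT.le⟩ hτ.1)
    have hsum := (h.hasDerivWithinAt_Ici_tailEnthalpy_time hτ₀ hτT hx hxτ).add
      (hX.integral_hasStrictDerivAt r τ).hasDerivAt.hasDerivWithinAt
    rwa [clampedGradient_eq ⟨hτ.1, hτT.le⟩ ⟨hx.le, hxτ.le⟩, neg_add_cancel] at hsum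

theorem hasDerivAt_tailEnthalpy_time (h : IsSolOn p s₀ φ T s u) (ht : t ∈ Ioo 0 T)
    (hx : x ∈ Ioo 0 (s t)) :
    HasDerivAt (fun τ => tailEnthalpy T s u τ x) (-deriv (u t) x) t := by
  have hev : ∀ᶠ τ in 𝓝[<] t, x < s τ := nhdsLT_le_nhdsWithin_Icc (Ioo_subset_Ioc_self ht)
    ((h.s_cont t (Ioo_subset_Icc_self ht)).eventually (lt_mem_nhds hx.2))
  obtain ⟨r, hsr, hr⟩ := (hev.and (Ioo_mem_nhdsLT ht.1)).exists
  have hd := ((h.continuous_clampedGradient_time hr.1 (hr.2.trans ht.2).le x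
    ).integral_hasStrictDerivAt r t).hasDerivAt.const_sub (tailEnthalpy T s u r x)
  rw [clampedGradient_eq ⟨hr.2.le, ht.2.le⟩ (Ioo_subset_Icc_self hx)] at hd
  refine hd.congr_of_eventuallyEq ?_
  filter_upwards [Ioo_mem_nhds hr.2 ht.2] with τ hτ
  exact h.tailEnthalpy_eq_sub_integral_gradient hr.1 hτ.1.le hτ.2 hx.1 hsr

theorem continuous_boundary_flux (h : IsSolOn p s₀ φ T s u) (hp : 0 ≤ p) :
    Continuous fun τ => u (clamp 0 T τ) 0 ^ p := by
  refine Continuous.rpow_const ?_ fun _ => Or.inr hp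
  refine h.u_cont.comp_continuous (f := fun τ => (clamp 0 T τ, 0)) (by fun_prop) fun q => ?_
  have hq := clamp_mem_Icc h.T_pos.le q
  exact ⟨hq, le_rfl, (h.s_pos _ hq).le⟩

theorem tailEnthalpy_zero_eq_add_integral_flux (h : IsSolOn p s₀ φ T s u) (hr : 0 < r) (hrt : r ≤ t)
    (ht : t < T) :
    tailEnthalpy T s u t 0 = tailEnthalpy T s u r 0 + ∫ τ in r..t, u (clamp 0 T τ) 0 ^ p := by
  have hrT : r ∈ Icc 0 T := ⟨hr.le, hrt.trans ht.le⟩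
  have hH (τ : ℝ) : Continuous (tailEnthalpy T s u τ) :=
    h.continuous_tailEnthalpy.comp (f := fun x => (τ, x)) (by fun_prop)
  have heq : EqOn (tailEnthalpy T s u t)
      (fun x => tailEnthalpy T s u r x - ∫ τ in r..t, clampedGradient r T s u τ x)
      (Ioo 0 (s r)) := fun x hx =>
    h.tailEnthalpy_eq_sub_integral_gradient hr hrt ht hx.1 hx.2
  have hclosure := heq.closure (hH t)
    ((hH r).sub (h.continuous_integral_clampedGradient hr hrT.2 t))
  rw [closure_Ioo (h.s_pos r hrT).ne] at hclosure
  have hgrad : ∫ τ in r..t, clampedGradient r T s u τ 0 =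
      -∫ τ in r..t, u (clamp 0 T τ) 0 ^ p := by
    rw [← intervalIntegral.integral_neg]
    refine intervalIntegral.integral_congr fun τ hτ => ?_
    rw [uIcc_of_le hrt] at hτ
    have hτT : τ ∈ Ioc 0 T := ⟨hr.trans_le hτ.1, hτ.2.trans ht.le⟩
    have hτI := Ioc_subset_Icc_self hτT
    rw [clampedGradient_eq ⟨hτ.1, hτT.2⟩ ⟨le_rfl, (h.s_pos τ hτI).le⟩, clamp_of_mem hτI,
      ← h.bc_zero τ hτT, neg_neg]
  refine (hclosure ⟨le_rfl, (h.s_pos r hrT).le⟩).trans ?_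
  simp only [hgrad, sub_neg_eq_add]

theorem tailEnthalpy_zero_eq (h : IsSolOn p s₀ φ T s u) (hp : 0 ≤ p) (ht : t ∈ Ico 0 T) :
    tailEnthalpy T s u t 0 = tailEnthalpy T s u 0 0 + ∫ τ in 0..t, u (clamp 0 T τ) 0 ^ p := by
  rcases ht.1.eq_or_lt with rfl | ht₀
  · simp
  have hflux := h.continuous_boundary_flux hp
  have hconst : EqOn (fun _ => tailEnthalpy T s u t 0)
      (fun r => tailEnthalpy T s u r 0 + ∫ τ in r..t, u (clamp 0 T τ) 0 ^ p) (Ioc 0 t) :=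
    fun r hr => h.tailEnthalpy_zero_eq_add_integral_flux hr.1 hr.2 ht.2
  have hcont : Continuous fun r =>
      tailEnthalpy T s u r 0 + ∫ τ in r..t, u (clamp 0 T τ) 0 ^ p := by
    refine (h.continuous_tailEnthalpy.comp (f := fun r => (r, 0)) (by fun_prop)).add ?_
    simp only [intervalIntegral.integral_symm t]
    exact (intervalIntegral.continuous_primitive hflux.intervalIntegrable t).neg
  have hclosure := hconst.closure continuous_const hcont
  rw [closure_Ioc ht₀.ne] at hclosure
  exact hclosure ⟨le_rfl, ht₀.le⟩

end IsSolOn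

end TailEnthalpy

section Comparison

variable {p s₀ σ₀ t x T T' : ℝ} {φ ψ s σ : ℝ → ℝ} {u v : ℝ → ℝ → ℝ}

namespace IsSolOn

theorem one_le_enthalpyDensity (h : IsSolOn p s₀ φ T s u) (t x : ℝ) :
    1 ≤ enthalpyDensity T s u t x := by
  have ht := clamp_mem_Icc h.T_pos.le t
  exact le_add_of_nonneg_left (h.u_nonneg _ ht _ (clamp_mem_Icc (h.s_pos _ ht).le x))

theorem intervalIntegrable_enthalpyDensity (h : IsSolOn p s₀ φ T s u) (t a b : ℝ) :
    IntervalIntegrable (enthalpyDensity T s u t) volume a b :=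
  (h.continuous_enthalpyDensity_slice t).intervalIntegrable _ _

theorem free_boundary_sub_le_tailEnthalpy (h : IsSolOn p s₀ φ T s u) (ht : t ∈ Icc 0 T) (x : ℝ) :
    s t - x ≤ tailEnthalpy T s u t x := by
  have hmono := intervalIntegral.integral_mono_on (f := fun _ => (1 : ℝ)) (μ := volume)
    (min_le_right x (s t)) (by simp) (h.intervalIntegrable_enthalpyDensity t _ _)
    (fun y _ => h.one_le_enthalpyDensity t y)
  rw [intervalIntegral.integral_const, smul_eq_mul, mul_one] at hmono
  rw [tailEnthalpy, clamp_of_mem ht]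
  linarith [min_le_left x (s t)]

theorem tailEnthalpy_nonneg (h : IsSolOn p s₀ φ T s u) (t x : ℝ) : 0 ≤ tailEnthalpy T s u t x :=
  intervalIntegral.integral_nonneg (min_le_right _ _)
    fun y _ => zero_le_one.trans (h.one_le_enthalpyDensity t y)

theorem hasHeatDerivAt_tailEnthalpy (h : IsSolOn p s₀ φ T s u) (ht : t ∈ Ioo 0 T)
    (hx : x ∈ Ioo 0 (s t)) :
    HasHeatDerivAt (tailEnthalpy T s u) (-deriv (u t) x) (-deriv (u t) x) t x where
  time := h.hasDerivAt_tailEnthalpy_time ht hx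
  space := by
    refine ⟨fun y => -(u t y + 1), ?_,
      ((h.ux_diff t (Ioo_subset_Ioc_self ht) x hx).hasDerivAt.add_const 1).neg⟩
    have htI := Ioo_subset_Icc_self ht
    filter_upwards [Ioo_mem_nhds hx.1 hx.2] with y hy
    rw [← enthalpyDensity_eq htI (Ioo_subset_Icc_self hy)]
    exact h.hasDerivAt_tailEnthalpy_space htI hy.2

theorem exists_hasDerivWithinAt_Iic_tailEnthalpy (h : IsSolOn p s₀ φ T s u) (ht : t ∈ Ioc 0 T)
    (hx : s t ≤ x) :
    ∃ d, -1 ≤ d ∧ HasDerivWithinAt (tailEnthalpy T s u t) d (Iic x) x := by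
  have htI := Ioc_subset_Icc_self ht
  rcases hx.eq_or_lt with rfl | hx
  · refine ⟨_, ?_, h.hasDerivWithinAt_Iic_tailEnthalpy htI le_rfl⟩
    rw [enthalpyDensity_eq htI ⟨(h.s_pos t htI).le, le_rfl⟩, h.bc_free t ht, zero_add]
  · refine ⟨0, by norm_num, HasDerivAt.hasDerivWithinAt ?_⟩
    refine (hasDerivAt_const x (0 : ℝ)).congr_of_eventuallyEq ?_
    filter_upwards [Ioi_mem_nhds hx] with y hy using tailEnthalpy_eq_zero htI (mem_Ioi.1 hy).le

theorem mono_time (h : IsSolOn p s₀ φ T s u) (hT'₀ : 0 < T') (hT' : T' ≤ T) :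
    IsSolOn p s₀ φ T' s u where
  T_pos := hT'₀
  s_cont := h.s_cont.mono (Icc_subset_Icc_right hT')
  s_diff t ht := h.s_diff t (Ioc_subset_Ioc_right hT' ht)
  s_deriv_cont := h.s_deriv_cont.mono (Ioc_subset_Ioc_right hT')
  s_pos t ht := h.s_pos t (Icc_subset_Icc_right hT' ht)
  ut_diff t ht := h.ut_diff t (Ioc_subset_Ioc_right hT' ht)
  ux_diff t ht := h.ux_diff t (Ioc_subset_Ioc_right hT' ht)
  uxx_diff t ht := h.uxx_diff t (Ioc_subset_Ioc_right hT' ht)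
  ut_cont := h.ut_cont.mono fun _ hq => ⟨Ioc_subset_Ioc_right hT' hq.1, hq.2⟩
  uxx_cont := h.uxx_cont.mono fun _ hq => ⟨Ioc_subset_Ioc_right hT' hq.1, hq.2⟩
  ux_cont := h.ux_cont.mono fun _ hq => ⟨Ioc_subset_Ioc_right hT' hq.1, hq.2⟩
  u_cont := h.u_cont.mono fun _ hq => ⟨Icc_subset_Icc_right hT' hq.1, hq.2⟩
  u_nonneg t ht := h.u_nonneg t (Icc_subset_Icc_right hT' ht)
  heat t ht := h.heat t (Ioc_subset_Ioc_right hT' ht)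
  bc_zero t ht := h.bc_zero t (Ioc_subset_Ioc_right hT' ht)
  bc_free t ht := h.bc_free t (Ioc_subset_Ioc_right hT' ht)
  stefan t ht := h.stefan t (Ioc_subset_Ioc_right hT' ht)
  init := h.init
  init_s := h.init_s

theorem zero_mem_Icc (h : IsSolOn p s₀ φ T s u) (ht : t ∈ Icc 0 T) : (0 : ℝ) ∈ Icc 0 (s t) :=
  ⟨le_rfl, (h.s_pos t ht).le⟩

theorem continuousOn_left_trace (h : IsSolOn p s₀ φ T s u) :
    ContinuousOn (fun t => u t 0) (Icc 0 T) :=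
  h.u_cont.comp (f := fun t => (t, (0 : ℝ))) (by fun_prop) fun _ ht => ⟨ht, h.zero_mem_Icc ht⟩

theorem exists_bound (h : IsSolOn p s₀ φ T s u) :
    ∃ M, 0 ≤ M ∧ ∀ t ∈ Icc 0 T, ∀ x ∈ Icc 0 (s t), u t x ≤ M := by
  obtain ⟨M, hM⟩ := (isCompact_setOf_mem_Icc isCompact_Icc continuousOn_const
    h.s_cont).bddAbove_image h.u_cont
  have hle : ∀ t ∈ Icc 0 T, ∀ x ∈ Icc 0 (s t), u t x ≤ M := fun t ht x hx =>
    hM ⟨(t, x), ⟨ht, hx⟩, rfl⟩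
  have h0 : (0 : ℝ) ∈ Icc 0 T := ⟨le_rfl, h.T_pos.le⟩
  exact ⟨M, (h.u_nonneg 0 h0 0 (h.zero_mem_Icc h0)).trans (hle 0 h0 0 (h.zero_mem_Icc h0)), hle⟩

theorem exists_le_mul_free_boundary_sub (h : IsSolOn p s₀ φ T s u) {L : ℝ} (hL : 0 ≤ L)
    (hφ : ∀ x ∈ Icc 0 s₀, φ x ≤ L * (s₀ - x)) :
    ∃ K, 0 ≤ K ∧ ∀ t ∈ Icc 0 T, ∀ x ∈ Icc 0 (s t), u t x ≤ K * (s t - x) := by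
  obtain ⟨M, hM, hu⟩ := h.exists_bound
  have hs₀ := h.s₀_pos
  refine ⟨L + M / s₀, by positivity, h.le_mul_free_boundary_sub (M := M) (by positivity)
    (fun t ht => hu t ht 0 (h.zero_mem_Icc ht)) ?_ fun x hx => (hφ x hx).trans ?_⟩
  · rw [add_mul, div_mul_cancel₀ _ hs₀.ne']
    exact le_add_of_nonneg_left (by positivity)
  · exact mul_le_mul_of_nonneg_right (le_add_of_nonneg_right (by positivity)) (sub_nonneg.2 hx.2)

end IsSolOn

/-- The amount by which the difference of the tail enthalpies of `(s, u)` and `(σ, v)` exceeds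
`P / l * exp (l * t) + ε * x`. -/
def enthalpyGap (T : ℝ) (s : ℝ → ℝ) (u : ℝ → ℝ → ℝ) (σ : ℝ → ℝ) (v : ℝ → ℝ → ℝ) (P l ε t x : ℝ) :
    ℝ :=
  tailEnthalpy T s u t x - tailEnthalpy T σ v t x - (P / l * exp (l * t) + ε * x)

theorem integral_mul_exp_mul {l : ℝ} (hl : l ≠ 0) (P t : ℝ) :
    ∫ τ in (0 : ℝ)..t, P * exp (l * τ) = P / l * exp (l * t) - P / l := by
  rw [intervalIntegral.integral_const_mul, intervalIntegral.integral_comp_mul_left _ hl,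
    integral_exp, mul_zero, exp_zero, smul_eq_mul]
  ring

theorem tailEnthalpy_le_of_le_initial (h : IsSolOn p s₀ φ T s u) (k : IsSolOn p σ₀ ψ T σ v)
    (hs₀ : s₀ ≤ σ₀) (hφψ : ∀ x ∈ Icc 0 s₀, φ x ≤ ψ x) (hx : 0 ≤ x) :
    tailEnthalpy T s u 0 x ≤ tailEnthalpy T σ v 0 x := by
  have h0 : (0 : ℝ) ∈ Icc 0 T := ⟨le_rfl, h.T_pos.le⟩
  rcases le_or_gt s₀ x with hxs | hxs
  · rw [tailEnthalpy_eq_zero h0 (h.init_s.trans_le hxs)]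
    exact k.tailEnthalpy_nonneg 0 x
  have htail : 0 ≤ ∫ y in s₀..σ₀, enthalpyDensity T σ v 0 y :=
    intervalIntegral.integral_nonneg hs₀ fun y _ => zero_le_one.trans (k.one_le_enthalpyDensity 0 y)
  have hmono : ∫ y in x..s₀, enthalpyDensity T s u 0 y ≤ ∫ y in x..s₀, enthalpyDensity T σ v 0 y :=
    intervalIntegral.integral_mono_on hxs.le (h.intervalIntegrable_enthalpyDensity 0 x s₀)
      (k.intervalIntegrable_enthalpyDensity 0 x s₀) fun y hy => by
        have hy₁ : y ∈ Icc 0 s₀ := ⟨hx.trans hy.1, hy.2⟩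
        have hy₂ : y ∈ Icc 0 σ₀ := ⟨hy₁.1, hy.2.trans hs₀⟩
        rw [enthalpyDensity_eq h0 (h.init_s.symm ▸ hy₁),
          enthalpyDensity_eq h0 (k.init_s.symm ▸ hy₂),
          h.init y hy₁, k.init y hy₂]
        exact add_le_add_left (hφψ y hy₁) 1
  rw [tailEnthalpy_eq_integral h0 (h.init_s.symm ▸ hxs.le),
    tailEnthalpy_eq_integral h0 (k.init_s.symm ▸ hxs.le.trans hs₀), h.init_s, k.init_s,
    ← intervalIntegral.integral_add_adjacent_intervals
      (k.intervalIntegrable_enthalpyDensity 0 x s₀) (k.intervalIntegrable_enthalpyDensity 0 s₀ σ₀)]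
  linarith

theorem tailEnthalpy_zero_sub_le (hp : 0 ≤ p) (h : IsSolOn p s₀ φ T s u)
    (k : IsSolOn p σ₀ ψ T σ v) (hs₀ : s₀ ≤ σ₀) (hφψ : ∀ x ∈ Icc 0 s₀, φ x ≤ ψ x) {P l : ℝ}
    (hP : 0 ≤ P) (hl : 0 < l) (ht : t ∈ Ico 0 T)
    (hflux : ∀ τ ∈ Icc 0 t, u τ 0 ^ p - v τ 0 ^ p ≤ P * exp (l * τ)) :
    tailEnthalpy T s u t 0 - tailEnthalpy T σ v t 0 ≤ P / l * exp (l * t) := by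
  have hu := (h.continuous_boundary_flux hp).intervalIntegrable (μ := volume) 0 t
  have hv := (k.continuous_boundary_flux hp).intervalIntegrable (μ := volume) 0 t
  have hmono := intervalIntegral.integral_mono_on ht.1 (hu.sub hv)
    (g := fun τ => P * exp (l * τ)) (Continuous.intervalIntegrable (by fun_prop) _ _)
    (fun τ hτ => by
      rw [clamp_of_mem ⟨hτ.1, hτ.2.trans ht.2.le⟩]
      exact hflux τ hτ)
  rw [intervalIntegral.integral_sub hu hv, integral_mul_exp_mul hl.ne'] at hmono
  rw [h.tailEnthalpy_zero_eq hp ht, k.tailEnthalpy_zero_eq hp ht]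
  linarith [tailEnthalpy_le_of_le_initial h k hs₀ hφψ le_rfl, div_nonneg hP hl.le]

section Gap

variable {P l ε B : ℝ}

theorem continuous_enthalpyGap (h : IsSolOn p s₀ φ T s u) (k : IsSolOn p σ₀ ψ T σ v) :
    Continuous fun q : ℝ × ℝ => enthalpyGap T s u σ v P l ε q.1 q.2 :=
  (h.continuous_tailEnthalpy.sub k.continuous_tailEnthalpy).sub (by fun_prop)

theorem not_isPosExpMaxOn_enthalpyGap_interior (h : IsSolOn p s₀ φ T s u)
    (k : IsSolOn p σ₀ ψ T σ v) (hP : 0 ≤ P) (hl : 0 < l) (hT' : T' < T) (ht : t ∈ Ioc 0 T')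
    (hx : x ∈ Ioo 0 B) (hxs : x < s t) (hxσ : x < σ t) :
    ¬ IsPosExpMaxOn (fun q : ℝ × ℝ => enthalpyGap T s u σ v P l ε q.1 q.2)
      (timeStrip (fun _ => 0) (fun _ => B) T') (t, x) := by
  have htT : t ∈ Ioo 0 T := ⟨ht.1, ht.2.trans_lt hT'⟩
  have hexp : HasDerivAt (fun τ => P / l * exp (l * τ)) (P / l * (exp (l * t) * l)) t :=
    (hasDerivAt_const_mul l).exp.const_mul (P / l)
  refine not_isPosExpMaxOn_interior continuousOn_const continuousOn_const ht hx
    (((h.hasHeatDerivAt_tailEnthalpy htT ⟨hx.1, hxs⟩).sub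
      (k.hasHeatDerivAt_tailEnthalpy htT ⟨hx.1, hxσ⟩)).sub
      (.add_of_separated (g' := fun _ => ε) hexp (fun _ => hasDerivAt_const_mul ε)
        (hasDerivAt_const x ε))) ?_
  have : 0 ≤ P / l * (exp (l * t) * l) := by positivity
  linarith

theorem not_isPosExpMaxOn_enthalpyGap_exterior (h : IsSolOn p s₀ φ T s u)
    (k : IsSolOn p σ₀ ψ T σ v) (hε : 0 < ε) (hT' : T' ≤ T) (ht : t ∈ Ioc 0 T')
    (hx : x ∈ Ioo 0 B) (hxs : x < s t) (hxσ : σ t ≤ x) :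
    ¬ IsPosExpMaxOn (fun q : ℝ × ℝ => enthalpyGap T s u σ v P l ε q.1 q.2)
      (timeStrip (fun _ => 0) (fun _ => B) T') (t, x) := by
  intro hmax
  have htT : t ∈ Ioc 0 T := ⟨ht.1, ht.2.trans hT'⟩
  have htI := Ioc_subset_Icc_self htT
  obtain ⟨d, hd, hderiv⟩ := k.exists_hasDerivWithinAt_Iic_tailEnthalpy htT hxσ
  have hslope := hasDerivWithinAt_Iic_nonneg_of_le
    (((h.hasDerivWithinAt_Iic_tailEnthalpy htI hxs.le).sub hderiv).sub
      ((hasDerivAt_const_mul ε).const_add (P / l * exp (l * t))).hasDerivWithinAt) (by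
    filter_upwards [Ioo_mem_nhdsLT hx.1] with y hy
    exact hmax.le_of_same_time
      ⟨Ioc_subset_Icc_self ht, hy.1.le, (hy.2.trans hx.2).le⟩)
  linarith [h.one_le_enthalpyDensity t x]

end Gap

theorem tailEnthalpy_sub_le (hp : 0 ≤ p) (h : IsSolOn p s₀ φ T s u) (k : IsSolOn p σ₀ ψ T σ v)
    (hs₀ : s₀ ≤ σ₀) (hφψ : ∀ x ∈ Icc 0 s₀, φ x ≤ ψ x) {P l : ℝ} (hT' : T' < T) (hP : 0 ≤ P)
    (hl : 0 < l) (hflux : ∀ t ∈ Icc 0 T', u t 0 ^ p - v t 0 ^ p ≤ P * exp (l * t)) :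
    ∀ t ∈ Icc 0 T', ∀ x, 0 ≤ x →
      tailEnthalpy T s u t x - tailEnthalpy T σ v t x ≤ P / l * exp (l * t) := by
  intro t ht x hx
  refine le_of_forall_pos_le_add_mul (c := x) fun ε hε => ?_
  by_contra! hgap
  set B := max x (s T)
  obtain ⟨⟨t₀, x₀⟩, hmax⟩ := exists_isPosExpMaxOn
    (isCompact_setOf_mem_Icc isCompact_Icc continuousOn_const continuousOn_const)
    (continuous_enthalpyGap (P := P) (l := l) (ε := ε) h k).continuousOn (q := (t, x))
    (Q := timeStrip (fun _ => 0) (fun _ => B) T')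
    ⟨ht, hx, le_max_left _ _⟩ (by simp only [enthalpyGap]; linarith)
  obtain ⟨ht₀, hx₀⟩ : t₀ ∈ Icc 0 T' ∧ x₀ ∈ Icc 0 B := hmax.mem
  have hpos : 0 < tailEnthalpy T s u t₀ x₀ - tailEnthalpy T σ v t₀ x₀ -
    (P / l * exp (l * t₀) + ε * x₀) := hmax.pos
  have hεx₀ : 0 ≤ ε * x₀ := mul_nonneg hε.le hx₀.1
  have hexp : 0 ≤ P / l * exp (l * t₀) := by positivity
  have ht₀_pos : 0 < t₀ := ht₀.1.lt_of_ne (by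
    rintro rfl
    linarith [tailEnthalpy_le_of_le_initial h k hs₀ hφψ hx₀.1])
  have hx₀_pos : 0 < x₀ := hx₀.1.lt_of_ne (by
    rintro rfl
    linarith [tailEnthalpy_zero_sub_le hp h k hs₀ hφψ hP hl ⟨ht₀.1, ht₀.2.trans_lt hT'⟩
      fun τ hτ => hflux τ ⟨hτ.1, hτ.2.trans ht₀.2⟩])
  have ht₀T : t₀ ∈ Icc 0 T := ⟨ht₀.1, ht₀.2.trans hT'.le⟩
  have hx₀s : x₀ < s t₀ := by
    by_contra! hle
    rw [tailEnthalpy_eq_zero ht₀T hle] at hpos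
    linarith [k.tailEnthalpy_nonneg t₀ x₀]
  have hx₀B : x₀ ∈ Ioo 0 B := ⟨hx₀_pos, hx₀s.trans_le
    ((h.monotoneOn_free_boundary ht₀T ⟨h.T_pos.le, le_rfl⟩ ht₀T.2).trans (le_max_right _ _))⟩
  rcases lt_or_ge x₀ (σ t₀) with hx₀σ | hx₀σ
  · exact not_isPosExpMaxOn_enthalpyGap_interior h k hP hl hT' ⟨ht₀_pos, ht₀.2⟩ hx₀B hx₀s hx₀σ hmax
  · exact not_isPosExpMaxOn_enthalpyGap_exterior h k hε hT'.le ⟨ht₀_pos, ht₀.2⟩ hx₀B hx₀s hx₀σ hmax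

theorem abs_rpow_sub_rpow_le (hp : 1 ≤ p) {M a b : ℝ} (ha : a ∈ Icc 0 M) (hb : b ∈ Icc 0 M) :
    |a ^ p - b ^ p| ≤ p * M ^ (p - 1) * |a - b| := by
  refine (convex_Icc 0 M).norm_image_sub_le_of_norm_hasDerivWithin_le (f := fun x : ℝ => x ^ p)
    (fun x _ => (hasDerivAt_rpow_const (Or.inr hp)).hasDerivWithinAt) (fun x hx => ?_) hb ha
  have hpow := rpow_nonneg hx.1 (p - 1)
  rw [norm_eq_abs, abs_of_nonneg (by positivity)]
  exact mul_le_mul_of_nonneg_left (rpow_le_rpow hx.1 hx.2 (by linarith)) (by linarith)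

theorem rpow_sub_rpow_le_of_sub_le (hp : 1 ≤ p) {M a b d : ℝ} (ha : a ∈ Icc 0 M)
    (hb : b ∈ Icc 0 M) (hd : 0 ≤ d) (hab : a - b ≤ d) : a ^ p - b ^ p ≤ p * M ^ (p - 1) * d := by
  have hC : 0 ≤ p * M ^ (p - 1) := mul_nonneg (by linarith) (rpow_nonneg (ha.1.trans ha.2) _)
  rcases le_total a b with hle | hle
  · have hpow := rpow_le_rpow ha.1 hle (by linarith : 0 ≤ p)
    linarith [mul_nonneg hC hd]
  · have hlip := (le_abs_self _).trans (abs_rpow_sub_rpow_le hp ha hb)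
    rw [abs_of_nonneg (sub_nonneg.2 hle)] at hlip
    exact hlip.trans (mul_le_mul_of_nonneg_left hab hC)

theorem exists_mul_exp_bound {f : ℝ → ℝ} (hf : ContinuousOn f (Icc 0 T)) (hT : 0 ≤ T) (l : ℝ) :
    ∃ m, 0 ≤ m ∧ (∀ t ∈ Icc 0 T, f t ≤ m * exp (l * t)) ∧
      (0 < m → ∃ t ∈ Icc 0 T, f t = m * exp (l * t)) := by
  have hcont : ContinuousOn (fun t => exp (-(l * t)) * f t) (Icc 0 T) :=
    ContinuousOn.mul (by fun_prop) hf
  obtain ⟨t₁, ht₁, hmax⟩ := isCompact_Icc.exists_isMaxOn ⟨0, le_rfl, hT⟩ hcont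
  refine ⟨max (exp (-(l * t₁)) * f t₁) 0, le_max_right _ _, fun t ht => ?_, fun hm => ?_⟩
  · have hle : exp (-(l * t)) * f t ≤ max (exp (-(l * t₁)) * f t₁) 0 :=
      (hmax ht).trans (le_max_left _ _)
    rwa [exp_neg, inv_mul_le_iff₀ (exp_pos _), mul_comm] at hle
  · refine ⟨t₁, ht₁, ?_⟩
    rw [max_eq_left ((lt_max_iff.1 hm).resolve_right (lt_irrefl 0)).le, mul_right_comm, ← exp_add,
      neg_add_cancel, exp_zero, one_mul]

theorem hasHeatDerivAt_exp (a b t x : ℝ) :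
    HasHeatDerivAt (fun τ y => exp (a * τ + b * y)) (a * exp (a * t + b * x))
      (b ^ 2 * exp (a * t + b * x)) t x where
  time := by
    simpa only [mul_comm] using ((hasDerivAt_const_mul a).add_const (b * x)).exp
  space := by
    have hderiv (y : ℝ) :
        HasDerivAt (fun z => exp (a * t + b * z)) (b * exp (a * t + b * y)) y := by
      simpa only [mul_comm] using ((hasDerivAt_const_mul b).const_add (a * t)).exp
    refine ⟨fun y => b * exp (a * t + b * y), .of_forall hderiv, ?_⟩
    simpa only [pow_two, mul_assoc] using (hderiv x).const_mul b

theorem sub_le_of_heat_supersolution (h : IsSolOn p s₀ φ T s u) (k : IsSolOn p σ₀ ψ T σ v)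
    (hs₀ : s₀ ≤ σ₀) (hφψ : ∀ x ∈ Icc 0 s₀, φ x ≤ ψ x) {B : ℝ → ℝ → ℝ}
    (hB : Continuous fun q : ℝ × ℝ => B q.1 q.2) (hinit : ∀ x, 0 ≤ B 0 x)
    (hright : ∀ t ∈ Ioc 0 T,
      u t (min (s t) (σ t)) - v t (min (s t) (σ t)) ≤ B t (min (s t) (σ t)))
    (hleft : ∀ t ∈ Ioc 0 T, ∃ d < v t 0 ^ p - u t 0 ^ p, HasDerivAt (B t) d 0)
    (hheat : ∀ t ∈ Ioc 0 T, ∀ x ∈ Ioo 0 (min (s t) (σ t)),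
      ∃ α c, HasHeatDerivAt B α c t x ∧ c ≤ α) :
    ∀ t ∈ Icc 0 T, ∀ x ∈ Icc 0 (min (s t) (σ t)), u t x - v t x ≤ B t x := by
  intro t ht x hx
  refine sub_nonpos.1 (heat_subsolution_nonpos (a := fun _ => 0) (b := fun t => min (s t) (σ t))
    (T := T) (W := fun t x => u t x - v t x - B t x) continuousOn_const (h.s_cont.inf k.s_cont)
    ?_ ?_ ?_ ?_ ?_ t ht x hx)
  · have hu := h.u_cont.mono fun q (hq : q ∈ timeStrip (fun _ => 0) (fun t => min (s t) (σ t)) T) =>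
      ⟨hq.1, hq.2.1, hq.2.2.trans (min_le_left _ _)⟩
    have hv := k.u_cont.mono fun q (hq : q ∈ timeStrip (fun _ => 0) (fun t => min (s t) (σ t)) T) =>
      ⟨hq.1, hq.2.1, hq.2.2.trans (min_le_right _ _)⟩
    exact (hu.sub hv).sub hB.continuousOn
  · intro y hy
    rw [h.init_s, k.init_s, min_eq_left hs₀] at hy
    rw [h.init y hy, k.init y ⟨hy.1, hy.2.trans hs₀⟩]
    exact sub_nonpos.2 ((sub_nonpos.2 (hφψ y hy)).trans (hinit y))
  · exact fun τ hτ => sub_nonpos.2 (hright τ hτ)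
  · intro τ hτ _
    obtain ⟨d, hd, hderiv⟩ := hleft τ hτ
    refine ⟨_, ?_, ((h.hasDerivWithinAt_zero hτ).sub (k.hasDerivWithinAt_zero hτ)).sub
      hderiv.hasDerivWithinAt⟩
    linarith [h.bc_zero τ hτ, k.bc_zero τ hτ]
  · intro τ hτ y hy
    obtain ⟨α, c, hBderiv, hle⟩ := hheat τ hτ y hy
    refine ⟨_, _, ((h.hasHeatDerivAt hτ ⟨hy.1, hy.2.trans_le (min_le_left _ _)⟩).sub
      (k.hasHeatDerivAt hτ ⟨hy.1, hy.2.trans_le (min_le_right _ _)⟩)).sub hBderiv, ?_⟩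
    linarith

theorem sub_le_exp_barrier (h : IsSolOn p s₀ φ T s u) (k : IsSolOn p σ₀ ψ T σ v) (hs₀ : s₀ ≤ σ₀)
    (hφψ : ∀ x ∈ Icc 0 s₀, φ x ≤ ψ x) {A F μ : ℝ} (hA : 0 ≤ A) (hF : 0 ≤ F) (hμ : 0 < μ)
    (hflux : ∀ t ∈ Ioc 0 T, u t 0 ^ p - v t 0 ^ p ≤ F * exp (μ ^ 2 * t))
    (hend : ∀ t ∈ Ioc 0 T,
      u t (min (s t) (σ t)) - v t (min (s t) (σ t)) ≤ A * exp (μ ^ 2 * t)) :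
    ∀ t ∈ Icc 0 T, ∀ x ∈ Icc 0 (min (s t) (σ t)),
      u t x - v t x ≤ A * exp (μ ^ 2 * t) + F / μ * exp (μ ^ 2 * t + -μ * x) := by
  intro t ht x hx
  -- The perturbation by `ε` makes the inequality for the flux at `x = 0` strict.
  refine le_of_forall_pos_le_add_mul (c := exp (1 * t + -1 * x)) fun ε hε => ?_
  suffices hB : u t x - v t x ≤ A * exp (μ ^ 2 * t + 0 * x) +
      F / μ * exp (μ ^ 2 * t + -μ * x) + ε * exp (1 * t + -1 * x) by
    rwa [zero_mul, add_zero] at hB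
  refine sub_le_of_heat_supersolution h k hs₀ hφψ (B := fun t x => A * exp (μ ^ 2 * t + 0 * x) +
    F / μ * exp (μ ^ 2 * t + -μ * x) + ε * exp (1 * t + -1 * x)) (by fun_prop)
    (fun x => by positivity) ?_ ?_ ?_ t ht x hx
  · intro τ hτ
    rw [zero_mul, add_zero, add_assoc]
    exact (hend τ hτ).trans (le_add_of_nonneg_right (by positivity))
  · intro τ hτ
    have hexp (a b : ℝ) : HasDerivAt (fun z => exp (a + b * z)) (exp (a + b * 0) * b) 0 :=
      ((hasDerivAt_const_mul b).const_add a).exp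
    refine ⟨_, ?_, (((hexp _ 0).const_mul A).add ((hexp _ (-μ)).const_mul (F / μ))).add
      ((hexp _ (-1)).const_mul ε)⟩
    have hslope : F / μ * (exp (μ ^ 2 * τ) * -μ) = -(F * exp (μ ^ 2 * τ)) := by
      field_simp
    simp only [mul_zero, add_zero, hslope]
    linarith [hflux τ hτ, mul_pos hε (exp_pos (1 * τ))]
  · intro τ _ y _
    refine ⟨_, _, (((hasHeatDerivAt_exp _ 0 τ y).const_mul A).add
      ((hasHeatDerivAt_exp _ (-μ) τ y).const_mul (F / μ))).add
      ((hasHeatDerivAt_exp 1 (-1) τ y).const_mul ε), ?_⟩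
    have hconst : 0 ≤ A * (μ ^ 2 * exp (μ ^ 2 * τ + 0 * y)) := by positivity
    simp only [neg_sq, one_pow, zero_pow two_ne_zero, zero_mul, mul_zero, zero_add] at hconst ⊢
    linarith

theorem sub_le_at_min_free_boundary (h : IsSolOn p s₀ φ T s u) (k : IsSolOn p σ₀ ψ T σ v) {K δ : ℝ}
    (hK : 0 ≤ K) (hbar : ∀ x ∈ Icc 0 (s t), u t x ≤ K * (s t - x)) (ht : t ∈ Ioc 0 T)
    (hδ : 0 ≤ δ) (hsσ : s t - σ t ≤ δ) :
    u t (min (s t) (σ t)) - v t (min (s t) (σ t)) ≤ K * δ := by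
  have htI := Ioc_subset_Icc_self ht
  rcases le_total (s t) (σ t) with hle | hle
  · rw [min_eq_left hle, h.bc_free t ht]
    linarith [k.u_nonneg t htI (s t) ⟨(h.s_pos t htI).le, hle⟩, mul_nonneg hK hδ]
  · rw [min_eq_right hle, k.bc_free t ht, sub_zero]
    exact (hbar (σ t) ⟨(k.s_pos t htI).le, hle⟩).trans (mul_le_mul_of_nonneg_left hsσ hK)

theorem free_boundary_sub_le (hp : 0 ≤ p) (h : IsSolOn p s₀ φ T s u) (k : IsSolOn p σ₀ ψ T σ v)
    (hs₀ : s₀ ≤ σ₀) (hφψ : ∀ x ∈ Icc 0 s₀, φ x ≤ ψ x) {P l : ℝ} (hT' : T' < T) (hP : 0 ≤ P)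
    (hl : 0 < l) (hflux : ∀ t ∈ Icc 0 T', u t 0 ^ p - v t 0 ^ p ≤ P * exp (l * t)) :
    ∀ t ∈ Icc 0 T', s t - σ t ≤ P / l * exp (l * t) := fun t ht => by
  have htT : t ∈ Icc 0 T := ⟨ht.1, ht.2.trans hT'.le⟩
  have hgap := tailEnthalpy_sub_le hp h k hs₀ hφψ hT' hP hl hflux t ht (σ t) (k.s_pos t htT).le
  rw [tailEnthalpy_eq_zero htT le_rfl, sub_zero] at hgap
  exact (h.free_boundary_sub_le_tailEnthalpy htT (σ t)).trans hgap

theorem sub_left_trace_le (hp : 0 ≤ p) (h : IsSolOn p s₀ φ T s u) (k : IsSolOn p σ₀ ψ T σ v)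
    (hs₀ : s₀ ≤ σ₀) (hφψ : ∀ x ∈ Icc 0 s₀, φ x ≤ ψ x) {K F μ : ℝ} (hK : 0 ≤ K)
    (hbar : ∀ t ∈ Icc 0 T, ∀ x ∈ Icc 0 (s t), u t x ≤ K * (s t - x)) (hT'₀ : 0 < T') (hT' : T' < T)
    (hF : 0 ≤ F) (hμ : 1 ≤ μ)
    (hflux : ∀ t ∈ Icc 0 T', u t 0 ^ p - v t 0 ^ p ≤ F * exp (μ ^ 2 * t)) :
    ∀ t ∈ Icc 0 T', u t 0 - v t 0 ≤ (K + 1) * (F / μ) * exp (μ ^ 2 * t) := by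
  intro t ht
  have h' := h.mono_time hT'₀ hT'.le
  have k' := k.mono_time hT'₀ hT'.le
  have hsσ := free_boundary_sub_le hp h k hs₀ hφψ hT' hF (by positivity) hflux
  have hbarrier := sub_le_exp_barrier h' k' hs₀ hφψ (A := K * (F / μ ^ 2)) (by positivity) hF
    (by positivity) (fun τ hτ => hflux τ (Ioc_subset_Icc_self hτ)) (fun τ hτ => by
      have hτI := Ioc_subset_Icc_self hτ
      rw [mul_assoc]
      exact sub_le_at_min_free_boundary h' k' hK (hbar τ ⟨hτI.1, hτI.2.trans hT'.le⟩) hτ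
        (by positivity) (hsσ τ hτI)) t ht 0
    ⟨le_rfl, (lt_min (h'.s_pos t ht) (k'.s_pos t ht)).le⟩
  have hpow : F / μ ^ 2 ≤ F / μ := by
    gcongr
    exact le_self_pow₀ hμ two_ne_zero
  calc u t 0 - v t 0 ≤ (K * (F / μ ^ 2) + F / μ) * exp (μ ^ 2 * t) := by
        rwa [mul_zero, add_zero, ← add_mul] at hbarrier
    _ ≤ (K * (F / μ) + F / μ) * exp (μ ^ 2 * t) := by gcongr
    _ = (K + 1) * (F / μ) * exp (μ ^ 2 * t) := by ring

-- If `m` is the least constant with `u t 0 - v t 0 ≤ m * exp (μ ^ 2 * t)`, then feeding this bound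
-- through the enthalpy and the barrier returns it with `m` multiplied by a factor `< 1` once `μ` is
-- large.
theorem left_trace_le_of_le_initial (hp : 1 ≤ p) (h : IsSolOn p s₀ φ T s u)
    (k : IsSolOn p σ₀ ψ T σ v) (hs₀ : s₀ ≤ σ₀) (hφψ : ∀ x ∈ Icc 0 s₀, φ x ≤ ψ x) {K : ℝ}
    (hK : 0 ≤ K) (hbar : ∀ t ∈ Icc 0 T, ∀ x ∈ Icc 0 (s t), u t x ≤ K * (s t - x))
    (hT'₀ : 0 < T') (hT' : T' < T) : ∀ t ∈ Icc 0 T', u t 0 ≤ v t 0 := by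
  have h' := h.mono_time hT'₀ hT'.le
  have k' := k.mono_time hT'₀ hT'.le
  obtain ⟨M₁, hM₁, hu⟩ := h'.exists_bound
  obtain ⟨M₂, hM₂, hv⟩ := k'.exists_bound
  obtain ⟨C, hC, hCdef⟩ : ∃ C, 0 ≤ C ∧ C = p * (M₁ + M₂) ^ (p - 1) :=
    ⟨_, mul_nonneg (by linarith) (rpow_nonneg (by positivity) _), rfl⟩
  obtain ⟨μ, hμ, hμC⟩ : ∃ μ, 1 ≤ μ ∧ (K + 1) * C < μ :=
    ⟨(K + 1) * C + 1, le_add_of_nonneg_left (by positivity), lt_add_one _⟩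
  obtain ⟨m, hm₀, hm, hattained⟩ := exists_mul_exp_bound
    (h'.continuousOn_left_trace.sub k'.continuousOn_left_trace) hT'₀.le (μ ^ 2)
  have hflux : ∀ t ∈ Icc 0 T', u t 0 ^ p - v t 0 ^ p ≤ C * m * exp (μ ^ 2 * t) := fun t ht => by
    rw [mul_assoc, hCdef]
    exact rpow_sub_rpow_le_of_sub_le hp
      ⟨h'.u_nonneg t ht 0 (h'.zero_mem_Icc ht), by linarith [hu t ht 0 (h'.zero_mem_Icc ht)]⟩
      ⟨k'.u_nonneg t ht 0 (k'.zero_mem_Icc ht), by linarith [hv t ht 0 (k'.zero_mem_Icc ht)]⟩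
      (by positivity) (hm t ht)
  have hm_zero : m = 0 := by
    by_contra hne
    have hm_pos : 0 < m := hm₀.lt_of_ne' hne
    obtain ⟨t₁, ht₁, heq⟩ := hattained hm_pos
    have hle : m * exp (μ ^ 2 * t₁) ≤ (K + 1) * (C * m / μ) * exp (μ ^ 2 * t₁) :=
      heq.symm.trans_le (sub_left_trace_le (by linarith) h k hs₀ hφψ hK hbar hT'₀ hT'
        (by positivity) hμ hflux t₁ ht₁)
    have hcontract : (K + 1) * (C * m / μ) < m := by
      rw [← mul_div_assoc, div_lt_iff₀ (by positivity), ← mul_assoc, mul_comm m]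
      exact mul_lt_mul_of_pos_right hμC hm_pos
    exact (le_of_mul_le_mul_right hle (exp_pos _)).not_gt hcontract
  intro t ht
  simpa only [hm_zero, zero_mul, Pi.sub_apply, sub_nonpos] using hm t ht

theorem IsSolOn.le_of_le_initial (hp : 1 ≤ p) (h : IsSolOn p s₀ φ T s u)
    (k : IsSolOn p σ₀ ψ T σ v) (hs₀ : s₀ ≤ σ₀) (hφψ : ∀ x ∈ Icc 0 s₀, φ x ≤ ψ x) {L : ℝ}
    (hL : 0 ≤ L) (hφL : ∀ x ∈ Icc 0 s₀, φ x ≤ L * (s₀ - x)) (ht : t ∈ Ico 0 T) :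
    s t ≤ σ t ∧ ∀ x ∈ Icc 0 (s t), u t x ≤ v t x := by
  obtain ⟨T', htT', hT'⟩ := exists_between ht.2
  have hT'₀ : 0 < T' := ht.1.trans_lt htT'
  have h' := h.mono_time hT'₀ hT'.le
  have k' := k.mono_time hT'₀ hT'.le
  have htI : t ∈ Icc 0 T' := ⟨ht.1, htT'.le⟩
  obtain ⟨K, hK, hbar⟩ := h.exists_le_mul_free_boundary_sub hL hφL
  have hflux : ∀ τ ∈ Icc 0 T', u τ 0 ^ p - v τ 0 ^ p ≤ 0 * exp (1 * τ) := fun τ hτ => by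
    rw [zero_mul]
    exact sub_nonpos.2 (rpow_le_rpow (h'.u_nonneg τ hτ 0 (h'.zero_mem_Icc hτ))
      (left_trace_le_of_le_initial hp h k hs₀ hφψ hK hbar hT'₀ hT' τ hτ) (by linarith))
  have hsσ : ∀ τ ∈ Icc 0 T', s τ ≤ σ τ := fun τ hτ => by
    simpa using free_boundary_sub_le (by linarith) h k hs₀ hφψ hT' le_rfl one_pos hflux τ hτ
  refine ⟨hsσ t htI, fun x hx => ?_⟩
  have hle := sub_le_exp_barrier h' k' hs₀ hφψ (A := 0) (F := 0) (μ := 1) le_rfl le_rfl one_pos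
    (fun τ hτ => by simpa using hflux τ (Ioc_subset_Icc_self hτ))
    (fun τ hτ => by
      have hτI := Ioc_subset_Icc_self hτ
      rw [min_eq_left (hsσ τ hτI), h.bc_free τ ⟨hτ.1, hτ.2.trans hT'.le⟩]
      simpa using k'.u_nonneg τ hτI (s τ) ⟨(h'.s_pos τ hτI).le, hsσ τ hτI⟩) t htI x
    ⟨hx.1, hx.2.trans (le_min le_rfl (hsσ t htI))⟩
  simpa using hle

end Comparison

section HeatKernel

variable {n : ℕ} {r d : ℝ}

/-- The normalising factor `(4πr)^{-1/2}` of the heat kernel. Because of the junk values of `√` and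
`⁻¹` it vanishes for `r ≤ 0`, which is exactly the causal extension of the kernel. -/
def gaussCoeff (r : ℝ) : ℝ := (√(4 * π * r))⁻¹

/-- `r⁻ⁿ` times the heat kernel; the family is stable under differentiation up to polynomial
factors in `d`. -/
def scaledHeatKernel (n : ℕ) (r d : ℝ) : ℝ :=
  (r⁻¹) ^ n * (gaussCoeff r * exp (-(d ^ 2 / (4 * r))))

/-- The one-dimensional heat kernel at time `r` and position `d`, extended by `0` to `r ≤ 0`. -/
def heatKernel (r d : ℝ) : ℝ := scaledHeatKernel 0 r d

/-- The first space derivative of the heat kernel. -/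
def heatKernelDx (r d : ℝ) : ℝ := -(d / 2) * scaledHeatKernel 1 r d

/-- The second space derivative of the heat kernel, which is also its time derivative. -/
def heatKernelDxx (r d : ℝ) : ℝ :=
  d ^ 2 / 4 * scaledHeatKernel 2 r d - 1 / 2 * scaledHeatKernel 1 r d

theorem gaussCoeff_of_nonpos (h : r ≤ 0) : gaussCoeff r = 0 := by
  rw [gaussCoeff, sqrt_eq_zero_of_nonpos (mul_nonpos_of_nonneg_of_nonpos (by positivity) h),
    inv_zero]

theorem gaussCoeff_nonneg (r : ℝ) : 0 ≤ gaussCoeff r := by rw [gaussCoeff]; positivity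

theorem gaussCoeff_pos (h : 0 < r) : 0 < gaussCoeff r := by rw [gaussCoeff]; positivity

theorem gaussCoeff_sq_mul (d r : ℝ) : gaussCoeff (d ^ 2 * r) = |d|⁻¹ * gaussCoeff r := by
  rw [gaussCoeff, gaussCoeff, mul_left_comm, sqrt_mul (sq_nonneg d), sqrt_sq_eq_abs, mul_inv]

theorem gaussCoeff_le_rpow (h : 0 < r) : gaussCoeff r ≤ r⁻¹ ^ (1 / 2 : ℝ) := by
  rw [← sqrt_eq_rpow, gaussCoeff, ← sqrt_inv]
  exact sqrt_le_sqrt (inv_anti₀ h (by nlinarith [pi_gt_three]))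

theorem hasDerivAt_gaussCoeff (hr : 0 < r) :
    HasDerivAt gaussCoeff (-(1 / 2) * (r⁻¹ * gaussCoeff r)) r := by
  have hne : √(4 * π * r) ≠ 0 := by positivity
  have h := ((hasDerivAt_const_mul (4 * π)).sqrt (x := r) (by positivity)).inv hne
  refine h.congr_deriv ?_
  rw [gaussCoeff, sq_sqrt (by positivity)]
  field_simp

theorem scaledHeatKernel_of_nonpos (h : r ≤ 0) : scaledHeatKernel n r d = 0 := by
  rw [scaledHeatKernel, gaussCoeff_of_nonpos h, zero_mul, mul_zero]

theorem scaledHeatKernel_nonneg (hr : 0 < r) : 0 ≤ scaledHeatKernel n r d := by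
  have := gaussCoeff_nonneg r
  rw [scaledHeatKernel]
  positivity

theorem scaledHeatKernel_le_rpow_mul_exp {a : ℝ} (ha : 0 ≤ a) (hr : 0 < r) (had : a ≤ |d|) :
    scaledHeatKernel n r d ≤ r⁻¹ ^ (n + 1 / 2 : ℝ) * exp (-(a ^ 2 / 4) * r⁻¹) := by
  have hexp : -(d ^ 2 / (4 * r)) ≤ -(a ^ 2 / 4) * r⁻¹ := by
    have hsq : a ^ 2 ≤ d ^ 2 := by rw [← sq_abs d]; gcongr
    calc -(d ^ 2 / (4 * r)) ≤ -(a ^ 2 / (4 * r)) := by gcongr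
      _ = -(a ^ 2 / 4) * r⁻¹ := by field_simp
  have hcoeff := gaussCoeff_le_rpow hr
  rw [scaledHeatKernel, rpow_add (by positivity), rpow_natCast, mul_assoc]
  gcongr

theorem tendsto_scaledHeatKernel_zero (n : ℕ) (hd : d ≠ 0) :
    Tendsto (fun q : ℝ × ℝ => scaledHeatKernel n q.1 q.2) (𝓝 (0, d)) (𝓝 0) := by
  set a := |d| / 2
  have ha : 0 < a := half_pos (abs_pos.2 hd)
  have hdecay := (tendsto_rpow_mul_exp_neg_mul_atTop_nhds_zero (n + 1 / 2) (a ^ 2 / 4)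
    (by positivity)).comp tendsto_inv_nhdsGT_zero
  rw [Metric.tendsto_nhds]
  intro ε hε
  have hfar : ∀ᶠ q : ℝ × ℝ in 𝓝 (0, d), a < |q.2| :=
    (continuous_snd.abs.tendsto (0, d)).eventually (lt_mem_nhds (half_lt_self (abs_pos.2 hd)))
  have hsmall := (continuous_fst.tendsto ((0 : ℝ), d)).eventually
    (eventually_nhdsWithin_iff.1 (Metric.tendsto_nhds.1 hdecay ε hε))
  filter_upwards [hfar, hsmall] with q hq hqε
  rcases le_or_gt q.1 0 with hr | hr
  · simpa only [scaledHeatKernel_of_nonpos hr, dist_self] using hε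
  · refine lt_of_le_of_lt ?_ (hqε hr)
    rw [dist_zero_right, dist_zero_right, norm_of_nonneg (scaledHeatKernel_nonneg hr)]
    exact (scaledHeatKernel_le_rpow_mul_exp ha.le hr hq.le).trans (le_abs_self _)

theorem continuousAt_scaledHeatKernel (n : ℕ) {z : ℝ × ℝ} (hz : z ≠ 0) :
    ContinuousAt (fun q : ℝ × ℝ => scaledHeatKernel n q.1 q.2) z := by
  obtain ⟨r, d⟩ := z
  rcases lt_trichotomy r 0 with hr | rfl | hr
  · refine (continuousAt_const (y := (0 : ℝ))).congr ?_
    filter_upwards [(continuous_fst.tendsto (r, d)).eventually (gt_mem_nhds hr)] with q hq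
    exact (scaledHeatKernel_of_nonpos (le_of_lt hq)).symm
  · have hd : d ≠ 0 := by rintro rfl; exact hz rfl
    rw [ContinuousAt]
    simpa only [scaledHeatKernel_of_nonpos le_rfl] using tendsto_scaledHeatKernel_zero n hd
  · have hsqrt : √(4 * π * (r, d).1) ≠ 0 := by positivity
    have htime : ContinuousAt (fun q : ℝ × ℝ => q.1) (r, d) := continuousAt_fst
    have hspace : ContinuousAt (fun q : ℝ × ℝ => q.2) (r, d) := continuousAt_snd
    unfold scaledHeatKernel gaussCoeff
    refine ((htime.inv₀ hr.ne').pow n).mul (ContinuousAt.mul ?_ ?_)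
    · exact (continuousAt_const.mul htime).sqrt.inv₀ hsqrt
    · exact ((hspace.pow 2).div (continuousAt_const.mul htime)
        (mul_ne_zero four_ne_zero hr.ne')).neg.rexp

theorem hasDerivAt_scaledHeatKernel_space (n : ℕ) (r d : ℝ) :
    HasDerivAt (scaledHeatKernel n r) (-(d / 2) * scaledHeatKernel (n + 1) r d) d := by
  have h := (((hasDerivAt_pow 2 d).div_const (4 * r)).fun_neg.exp.const_mul
    (gaussCoeff r)).const_mul (r⁻¹ ^ n)
  refine h.congr_deriv ?_
  rw [scaledHeatKernel]
  norm_num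
  ring

theorem hasDerivAt_scaledHeatKernel_time_of_pos (n : ℕ) (hr : 0 < r) :
    HasDerivAt (fun r => scaledHeatKernel n r d)
      (d ^ 2 / 4 * scaledHeatKernel (n + 2) r d -
        (n + 1 / 2) * scaledHeatKernel (n + 1) r d) r := by
  have hpow := (hasDerivAt_inv hr.ne').fun_pow n
  have hexp := (((hasDerivAt_inv hr.ne').const_mul (d ^ 2 / 4)).fun_neg).exp
  have h := hpow.fun_mul ((hasDerivAt_gaussCoeff hr).fun_mul hexp)
  refine (h.congr_deriv ?_).congr_of_eventuallyEq (Eventually.of_forall fun τ => ?_)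
  · simp only [scaledHeatKernel, show d ^ 2 / (4 * r) = d ^ 2 / 4 * r⁻¹ by field_simp]
    rcases n with _ | n
    · simp only [Nat.cast_zero]
      ring
    · simp only [Nat.add_sub_cancel]
      push_cast
      ring
  · simp only [scaledHeatKernel]
    congr 4
    ring

theorem hasDerivAt_scaledHeatKernel_time (n : ℕ) (h : (r, d) ≠ (0 : ℝ × ℝ)) :
    HasDerivAt (fun r => scaledHeatKernel n r d)
      (d ^ 2 / 4 * scaledHeatKernel (n + 2) r d -
        (n + 1 / 2) * scaledHeatKernel (n + 1) r d) r := by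
  rcases lt_trichotomy r 0 with hr | rfl | hr
  · simp only [scaledHeatKernel_of_nonpos hr.le, mul_zero, sub_zero]
    refine (hasDerivAt_const r (0 : ℝ)).congr_of_eventuallyEq ?_
    filter_upwards [Iio_mem_nhds hr] with x hx using scaledHeatKernel_of_nonpos (le_of_lt hx)
  · have hd : d ≠ 0 := by rintro rfl; exact h rfl
    have hpath : Tendsto (fun r : ℝ => (r, d)) (𝓝[≠] 0) (𝓝 (0, d)) :=
      ((Continuous.prodMk_left d).tendsto 0).mono_left nhdsWithin_le_nhds
    simp only [scaledHeatKernel_of_nonpos le_rfl, mul_zero, sub_zero]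
    rw [hasDerivAt_iff_tendsto_slope]
    refine ((tendsto_scaledHeatKernel_zero (n + 1) hd).comp hpath).congr fun r => ?_
    rw [Function.comp_apply, slope_def_field, scaledHeatKernel_of_nonpos le_rfl, sub_zero,
      sub_zero, scaledHeatKernel, scaledHeatKernel]
    ring
  · exact hasDerivAt_scaledHeatKernel_time_of_pos n hr

theorem heatKernelDx_of_nonpos (h : r ≤ 0) : heatKernelDx r d = 0 := by
  rw [heatKernelDx, scaledHeatKernel_of_nonpos h, mul_zero]

theorem heatKernelDxx_of_nonpos (h : r ≤ 0) : heatKernelDxx r d = 0 := by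
  simp only [heatKernelDxx, scaledHeatKernel_of_nonpos h, mul_zero, sub_zero]

/-- Joint continuity of a space-time kernel away from its pole at the origin. -/
def ContinuousOffOrigin (k : ℝ → ℝ → ℝ) : Prop :=
  ∀ ⦃z : ℝ × ℝ⦄, z ≠ 0 → ContinuousAt (fun q : ℝ × ℝ => k q.1 q.2) z

theorem continuousOffOrigin_heatKernel : ContinuousOffOrigin heatKernel :=
  fun _ hz => continuousAt_scaledHeatKernel 0 hz

theorem continuousOffOrigin_heatKernelDx : ContinuousOffOrigin heatKernelDx :=
  fun _ hz => ContinuousAt.mul (by fun_prop) (continuousAt_scaledHeatKernel 1 hz)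

theorem continuousOffOrigin_heatKernelDxx : ContinuousOffOrigin heatKernelDxx := fun _ hz =>
  (ContinuousAt.mul (by fun_prop) (continuousAt_scaledHeatKernel 2 hz)).sub
    (continuousAt_const.mul (continuousAt_scaledHeatKernel 1 hz))

theorem hasDerivAt_heatKernel_space (r d : ℝ) : HasDerivAt (heatKernel r) (heatKernelDx r d) d :=
  hasDerivAt_scaledHeatKernel_space 0 r d

theorem hasDerivAt_heatKernelDx_space (r d : ℝ) :
    HasDerivAt (heatKernelDx r) (heatKernelDxx r d) d := by
  have h := (((hasDerivAt_id' d).div_const 2).fun_neg).fun_mul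
    (hasDerivAt_scaledHeatKernel_space 1 r d)
  refine h.congr_deriv ?_
  rw [heatKernelDxx]
  ring

theorem hasDerivAt_heatKernel_time (h : (r, d) ≠ (0 : ℝ × ℝ)) :
    HasDerivAt (fun r => heatKernel r d) (heatKernelDxx r d) r := by
  refine (hasDerivAt_scaledHeatKernel_time 0 h).congr_deriv ?_
  simp only [heatKernelDxx, Nat.cast_zero, zero_add]

theorem heatKernel_neg (r d : ℝ) : heatKernel r (-d) = heatKernel r d := by
  simp only [heatKernel, scaledHeatKernel, neg_sq]

theorem heatKernelDx_neg (r d : ℝ) : heatKernelDx r (-d) = -heatKernelDx r d := by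
  simp only [heatKernelDx, scaledHeatKernel, neg_sq]
  ring

theorem heatKernelDx_zero (r : ℝ) : heatKernelDx r 0 = 0 := by
  rw [heatKernelDx, zero_div, neg_zero, zero_mul]

theorem measurable_heatKernel {α : Type*} [MeasurableSpace α] {f g : α → ℝ} (hf : Measurable f)
    (hg : Measurable g) : Measurable fun r => heatKernel (f r) (g r) := by
  unfold heatKernel scaledHeatKernel gaussCoeff
  fun_prop

theorem measurable_heatKernelDx {α : Type*} [MeasurableSpace α] {f g : α → ℝ} (hf : Measurable f)
    (hg : Measurable g) : Measurable fun r => heatKernelDx (f r) (g r) := by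
  unfold heatKernelDx scaledHeatKernel gaussCoeff
  fun_prop

end HeatKernel

section HeatKernelBounds

variable {r d d' a m : ℝ}

theorem mul_exp_neg_le_one (z : ℝ) : z * exp (-z) ≤ 1 := by
  rw [exp_neg, ← div_eq_mul_inv, div_le_one (exp_pos _)]
  linarith [add_one_le_exp z]

theorem sq_mul_exp_neg_le_one {z : ℝ} (hz : 0 ≤ z) : z ^ 2 * exp (-z) ≤ 1 := by
  have hhalf : z ≤ exp (z / 2) := by
    nlinarith [quadratic_le_exp_of_nonneg (div_nonneg hz zero_le_two), sq_nonneg (z - 2)]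
  have hsq : exp z = exp (z / 2) ^ 2 := by
    rw [← exp_nat_mul]
    congr 1
    push_cast
    ring
  rw [exp_neg, ← div_eq_mul_inv, div_le_one (exp_pos _), hsq]
  gcongr

theorem heatKernel_nonneg (r d : ℝ) : 0 ≤ heatKernel r d := by
  have := gaussCoeff_nonneg r
  rw [heatKernel, scaledHeatKernel, pow_zero]
  positivity

theorem heatKernel_le_gaussCoeff (r d : ℝ) : heatKernel r d ≤ gaussCoeff r := by
  rcases le_or_gt r 0 with hr | hr
  · rw [gaussCoeff_of_nonpos hr, heatKernel, scaledHeatKernel_of_nonpos hr]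
  · rw [heatKernel, scaledHeatKernel, pow_zero, one_mul]
    exact mul_le_of_le_one_right (gaussCoeff_nonneg r)
      (exp_le_one_iff.2 (neg_nonpos.2 (by positivity)))

theorem abs_heatKernel_le_gaussCoeff (r d : ℝ) : |heatKernel r d| ≤ gaussCoeff r :=
  (abs_of_nonneg (heatKernel_nonneg r d)).trans_le (heatKernel_le_gaussCoeff r d)

theorem abs_heatKernelDx_eq (hr : 0 < r) (d : ℝ) :
    |heatKernelDx r d| = |d| / (2 * r) * heatKernel r d := by
  have h : heatKernelDx r d = -(d / (2 * r)) * heatKernel r d := by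
    simp only [heatKernelDx, heatKernel, scaledHeatKernel]
    field_simp
  rw [h, abs_mul, abs_neg, abs_div, abs_of_pos (by positivity : 0 < 2 * r),
    abs_of_nonneg (heatKernel_nonneg r d)]

theorem abs_heatKernelDx_le_of_abs_le_mul (hd : |d| ≤ m * r) :
    |heatKernelDx r d| ≤ m / 2 * gaussCoeff r := by
  rcases le_or_gt r 0 with hr | hr
  · rw [heatKernelDx_of_nonpos hr, gaussCoeff_of_nonpos hr, abs_zero, mul_zero]
  · have hslope : |d| / (2 * r) ≤ m / 2 := by
      rw [div_le_div_iff₀ (by positivity) two_pos]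
      linarith
    rw [abs_heatKernelDx_eq hr]
    exact mul_le_mul hslope (heatKernel_le_gaussCoeff r d) (heatKernel_nonneg r d)
      (le_trans (by positivity) hslope)

theorem abs_heatKernelDx_le_of_le_abs (ha : 0 < a) (hd : a ≤ |d|) :
    |heatKernelDx r d| ≤ 2 / a * gaussCoeff r := by
  rcases le_or_gt r 0 with hr | hr
  · rw [heatKernelDx_of_nonpos hr, gaussCoeff_of_nonpos hr, abs_zero, mul_zero]
  · have hd₀ : 0 < |d| := ha.trans_le hd
    have hcoeff := gaussCoeff_nonneg r
    calc |heatKernelDx r d|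
        = 2 / |d| * (d ^ 2 / (4 * r) * exp (-(d ^ 2 / (4 * r)))) * gaussCoeff r := by
          rw [abs_heatKernelDx_eq hr, heatKernel, scaledHeatKernel, pow_zero, ← sq_abs d]
          field_simp
          ring
      _ ≤ 2 / a * 1 * gaussCoeff r := by
          gcongr
          exact mul_exp_neg_le_one _
      _ = 2 / a * gaussCoeff r := by rw [mul_one]

theorem heatKernelDxx_eq (hr : 0 < r) (d : ℝ) :
    heatKernelDxx r d =
      r⁻¹ * ((d ^ 2 / (4 * r) - 1 / 2) * exp (-(d ^ 2 / (4 * r)))) * gaussCoeff r := by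
  simp only [heatKernelDxx, scaledHeatKernel]
  field_simp

theorem abs_heatKernelDxx_le (r d : ℝ) : |heatKernelDxx r d| ≤ 3 / 2 * r⁻¹ * gaussCoeff r := by
  rcases le_or_gt r 0 with hr | hr
  · rw [heatKernelDxx_of_nonpos hr, gaussCoeff_of_nonpos hr, abs_zero, mul_zero]
  · have hz : 0 ≤ d ^ 2 / (4 * r) := by positivity
    rw [heatKernelDxx_eq hr, abs_mul, abs_mul, abs_of_pos (gaussCoeff_pos hr),
      abs_of_pos (inv_pos.2 hr)]
    set z := d ^ 2 / (4 * r)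
    have hprofile : |(z - 1 / 2) * exp (-z)| ≤ 3 / 2 := by
      rw [abs_le]
      constructor <;> nlinarith [mul_exp_neg_le_one z, exp_le_one_iff.2 (neg_nonpos.2 hz),
        mul_nonneg hz (exp_pos (-z)).le, exp_pos (-z)]
    have hcoeff := gaussCoeff_nonneg r
    calc _ ≤ r⁻¹ * (3 / 2) * gaussCoeff r := by gcongr
      _ = _ := by ring

theorem abs_heatKernelDxx_le_of_le_abs (ha : 0 < a) (hd : a ≤ |d|) :
    |heatKernelDxx r d| ≤ 6 / a ^ 2 * gaussCoeff r := by
  rcases le_or_gt r 0 with hr | hr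
  · rw [heatKernelDxx_of_nonpos hr, gaussCoeff_of_nonpos hr, abs_zero, mul_zero]
  · have hd₀ : d ≠ 0 := abs_pos.1 (ha.trans_le hd)
    have hz : 0 ≤ d ^ 2 / (4 * r) := by positivity
    have hinv : r⁻¹ = 4 / d ^ 2 * (d ^ 2 / (4 * r)) := by field_simp
    rw [heatKernelDxx_eq hr, abs_mul, abs_of_pos (gaussCoeff_pos hr), hinv]
    set z := d ^ 2 / (4 * r)
    have hprofile : |z * ((z - 1 / 2) * exp (-z))| ≤ 3 / 2 := by
      rw [abs_le]
      constructor <;> nlinarith [mul_exp_neg_le_one z, sq_mul_exp_neg_le_one hz,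
        mul_nonneg hz (exp_pos (-z)).le, mul_nonneg (sq_nonneg z) (exp_pos (-z)).le]
    have hcoeff := gaussCoeff_nonneg r
    have hfar : 4 / d ^ 2 ≤ 4 / a ^ 2 := by rw [← sq_abs d]; gcongr
    rw [mul_assoc (4 / d ^ 2), abs_mul, abs_of_pos (by positivity : 0 < 4 / d ^ 2)]
    calc _ ≤ 4 / a ^ 2 * (3 / 2) * gaussCoeff r := by gcongr
      _ = _ := by ring

theorem abs_heatKernelDx_sub_le_of_abs_sub_le_mul (h : |d - d'| ≤ m * r) :
    |heatKernelDx r d - heatKernelDx r d'| ≤ 3 / 2 * m * gaussCoeff r := by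
  rcases le_or_gt r 0 with hr | hr
  · simp only [heatKernelDx_of_nonpos hr, gaussCoeff_of_nonpos hr, sub_zero, abs_zero, mul_zero,
      le_refl]
  · have hcoeff := gaussCoeff_nonneg r
    calc _ ≤ 3 / 2 * r⁻¹ * gaussCoeff r * |d - d'| :=
          convex_univ.norm_image_sub_le_of_norm_hasDerivWithin_le
            (fun x _ => (hasDerivAt_heatKernelDx_space r x).hasDerivWithinAt)
            (fun x _ => abs_heatKernelDxx_le r x) (mem_univ _) (mem_univ _)
      _ ≤ 3 / 2 * r⁻¹ * gaussCoeff r * (m * r) := by gcongr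
      _ = _ := by field_simp

theorem abs_heatKernelDx_sub_le_of_le (ha : 0 < a) (hd : a ≤ d) (hd' : a ≤ d') :
    |heatKernelDx r d - heatKernelDx r d'| ≤ 6 / a ^ 2 * gaussCoeff r * |d - d'| :=
  (convex_Ici a).norm_image_sub_le_of_norm_hasDerivWithin_le
    (fun x _ => (hasDerivAt_heatKernelDx_space r x).hasDerivWithinAt)
    (fun x hx => abs_heatKernelDxx_le_of_le_abs ha (le_trans hx (le_abs_self x))) hd' hd

theorem abs_heatKernel_sub_le_of_le (ha : 0 < a) (hd : a ≤ d) (hd' : a ≤ d') :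
    |heatKernel r d - heatKernel r d'| ≤ 2 / a * gaussCoeff r * |d - d'| :=
  (convex_Ici a).norm_image_sub_le_of_norm_hasDerivWithin_le
    (fun x _ => (hasDerivAt_heatKernel_space r x).hasDerivWithinAt)
    (fun x hx => abs_heatKernelDx_le_of_le_abs ha (le_trans hx (le_abs_self x))) hd' hd

end HeatKernelBounds

section CurvePotential

/-- The potential of the kernel `k` with density `w` along the space-time curve `(γ₁, γ₂)`. Layer
potentials (`γ₁ y = y`) and initial potentials (`γ₁ y = 0`, `γ₂ y = y`) are special cases. -/
def curvePotential (k : ℝ → ℝ → ℝ) (w γ₁ γ₂ : ℝ → ℝ) (t x : ℝ) : ℝ :=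
  ∫ y, w y * k (t - γ₁ y) (x - γ₂ y)

/-- An integrable density supported in `[α, β]` along a continuous space-time curve. -/
structure IsCurveDensity (w γ₁ γ₂ : ℝ → ℝ) (α β : ℝ) : Prop where
  integrable : Integrable w
  eq_zero_of_notMem : ∀ y ∉ Icc α β, w y = 0
  continuous_time : Continuous γ₁
  continuous_space : Continuous γ₂

namespace IsCurveDensity

variable {k k' : ℝ → ℝ → ℝ} {w γ₁ γ₂ : ℝ → ℝ} {α β : ℝ}

theorem curvePotential_eq_setIntegral (h : IsCurveDensity w γ₁ γ₂ α β) (t x : ℝ) :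
    curvePotential k w γ₁ γ₂ t x = ∫ y in Icc α β, w y * k (t - γ₁ y) (x - γ₂ y) :=
  (setIntegral_eq_integral_of_forall_compl_eq_zero fun y hy => by
    rw [h.eq_zero_of_notMem y hy, zero_mul]).symm

theorem continuous_curve (h : IsCurveDensity w γ₁ γ₂ α β) : Continuous fun y => (γ₁ y, γ₂ y) :=
  h.continuous_time.prodMk h.continuous_space

theorem exists_closedBall_sub_ne_zero (h : IsCurveDensity w γ₁ γ₂ α β) {z : ℝ × ℝ}
    (hz : ∀ y ∈ Icc α β, (γ₁ y, γ₂ y) ≠ z) :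
    ∃ ε > 0, ∀ z' ∈ Metric.closedBall z ε, ∀ y ∈ Icc α β, z' - (γ₁ y, γ₂ y) ≠ 0 := by
  have hcompact := isCompact_Icc.image (s := Icc α β) h.continuous_curve
  have hnhds : ((fun y => (γ₁ y, γ₂ y)) '' Icc α β)ᶜ ∈ 𝓝 z := by
    refine hcompact.isClosed.isOpen_compl.mem_nhds ?_
    rintro ⟨y, hy, rfl⟩
    exact hz y hy rfl
  obtain ⟨ε, hε, hball⟩ := Metric.nhds_basis_closedBall.mem_iff.1 hnhds
  exact ⟨ε, hε, fun z' hz' y hy h₀ => hball hz' ⟨y, hy, (sub_eq_zero.1 h₀).symm⟩⟩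

theorem exists_kernel_bound (h : IsCurveDensity w γ₁ γ₂ α β) (hk : ContinuousOffOrigin k)
    {z : ℝ × ℝ} {ε : ℝ}
    (hz : ∀ z' ∈ Metric.closedBall z ε, ∀ y ∈ Icc α β, z' - (γ₁ y, γ₂ y) ≠ 0) :
    ∃ C, ∀ z' ∈ Metric.closedBall z ε, ∀ y ∈ Icc α β,
      |k (z'.1 - γ₁ y) (z'.2 - γ₂ y)| ≤ C := by
  have hcont : ContinuousOn (fun q : (ℝ × ℝ) × ℝ => |k (q.1.1 - γ₁ q.2) (q.1.2 - γ₂ q.2)|)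
      (Metric.closedBall z ε ×ˢ Icc α β) := by
    intro q hq
    have hdiff : Continuous fun q : (ℝ × ℝ) × ℝ => q.1 - (γ₁ q.2, γ₂ q.2) :=
      continuous_fst.sub (h.continuous_curve.comp continuous_snd)
    exact ((hk (hz q.1 hq.1 q.2 hq.2)).comp (f := fun q : (ℝ × ℝ) × ℝ => q.1 - (γ₁ q.2, γ₂ q.2))
      hdiff.continuousAt).abs.continuousWithinAt
  obtain ⟨C, hC⟩ := ((isCompact_closedBall z ε).prod isCompact_Icc).bddAbove_image hcont
  exact ⟨C, fun z' hz' y hy => hC ⟨(z', y), ⟨hz', hy⟩, rfl⟩⟩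

theorem aestronglyMeasurable_mul (h : IsCurveDensity w γ₁ γ₂ α β) (hk : ContinuousOffOrigin k)
    {z : ℝ × ℝ} (hz : ∀ y ∈ Icc α β, z - (γ₁ y, γ₂ y) ≠ 0) :
    AEStronglyMeasurable (fun y => w y * k (z.1 - γ₁ y) (z.2 - γ₂ y))
      (volume.restrict (Icc α β)) := by
  refine h.integrable.aestronglyMeasurable.restrict.mul
    (ContinuousOn.aestronglyMeasurable (fun y hy => ?_) measurableSet_Icc)
  exact ((hk (hz y hy)).comp (f := fun y : ℝ => z - (γ₁ y, γ₂ y))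
    (continuous_const.sub h.continuous_curve).continuousAt).continuousWithinAt

theorem ae_norm_mul_le {C t x : ℝ} (hC : ∀ y ∈ Icc α β, |k (t - γ₁ y) (x - γ₂ y)| ≤ C) :
    ∀ᵐ y ∂volume.restrict (Icc α β), ‖w y * k (t - γ₁ y) (x - γ₂ y)‖ ≤ |w y| * C := by
  filter_upwards [ae_restrict_mem measurableSet_Icc] with y hy
  rw [norm_mul]
  exact mul_le_mul_of_nonneg_left (hC y hy) (norm_nonneg _)

theorem continuousAt_curvePotential (h : IsCurveDensity w γ₁ γ₂ α β) (hk : ContinuousOffOrigin k)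
    {z : ℝ × ℝ} (hz : ∀ y ∈ Icc α β, (γ₁ y, γ₂ y) ≠ z) :
    ContinuousAt (fun q : ℝ × ℝ => curvePotential k w γ₁ γ₂ q.1 q.2) z := by
  simp only [h.curvePotential_eq_setIntegral]
  obtain ⟨ε, hε, havoid⟩ := h.exists_closedBall_sub_ne_zero hz
  obtain ⟨C, hC⟩ := h.exists_kernel_bound hk havoid
  have hball : ∀ᶠ z' in 𝓝 z, z' ∈ Metric.closedBall z ε := Metric.closedBall_mem_nhds z hε
  refine continuousAt_of_dominated (bound := fun y => |w y| * C) ?_ ?_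
    (h.integrable.abs.mul_const C).restrict ?_
  · filter_upwards [hball] with z' hz' using h.aestronglyMeasurable_mul hk (havoid z' hz')
  · filter_upwards [hball] with z' hz' using ae_norm_mul_le (hC z' hz')
  · filter_upwards [ae_restrict_mem measurableSet_Icc] with y hy
    exact continuousAt_const.mul ((hk (havoid z (Metric.mem_closedBall_self hε.le) y hy)).comp
      (f := fun q : ℝ × ℝ => q - (γ₁ y, γ₂ y)) (by fun_prop))

theorem hasDerivAt_curvePotential_comp (h : IsCurveDensity w γ₁ γ₂ α β)
    (hk : ContinuousOffOrigin k) (hk' : ContinuousOffOrigin k') {c : ℝ → ℝ × ℝ}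
    (hc : Continuous c) {x₀ : ℝ} (hx₀ : ∀ y ∈ Icc α β, (γ₁ y, γ₂ y) ≠ c x₀)
    (hderiv : ∀ x y, c x - (γ₁ y, γ₂ y) ≠ 0 →
      HasDerivAt (fun x => k ((c x).1 - γ₁ y) ((c x).2 - γ₂ y))
        (k' ((c x).1 - γ₁ y) ((c x).2 - γ₂ y)) x) :
    HasDerivAt (fun x => curvePotential k w γ₁ γ₂ (c x).1 (c x).2)
      (curvePotential k' w γ₁ γ₂ (c x₀).1 (c x₀).2) x₀ := by
  simp only [h.curvePotential_eq_setIntegral]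
  obtain ⟨ε, hε, havoid⟩ := h.exists_closedBall_sub_ne_zero hx₀
  obtain ⟨C, hC⟩ := h.exists_kernel_bound hk havoid
  obtain ⟨C', hC'⟩ := h.exists_kernel_bound hk' havoid
  have hcenter : c x₀ ∈ Metric.closedBall (c x₀) ε := Metric.mem_closedBall_self hε.le
  have hball : c ⁻¹' Metric.closedBall (c x₀) ε ∈ 𝓝 x₀ :=
    hc.continuousAt.preimage_mem_nhds (Metric.closedBall_mem_nhds _ hε)
  refine (hasDerivAt_integral_of_dominated_loc_of_deriv_le
    (F := fun x y => w y * k ((c x).1 - γ₁ y) ((c x).2 - γ₂ y))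
    (F' := fun x y => w y * k' ((c x).1 - γ₁ y) ((c x).2 - γ₂ y))
    (bound := fun y => |w y| * C') hball ?_ ?_ (h.aestronglyMeasurable_mul hk' (havoid _ hcenter))
    ?_ (h.integrable.abs.mul_const C').restrict ?_).2
  · filter_upwards [hball] with x hx using h.aestronglyMeasurable_mul hk (havoid _ hx)
  · exact (h.integrable.abs.mul_const C).restrict.mono'
      (h.aestronglyMeasurable_mul hk (havoid _ hcenter)) (ae_norm_mul_le (hC _ hcenter))
  · filter_upwards [ae_restrict_mem measurableSet_Icc] with y hy x hx
    rw [norm_mul]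
    exact mul_le_mul_of_nonneg_left (hC' _ hx y hy) (norm_nonneg _)
  · filter_upwards [ae_restrict_mem measurableSet_Icc] with y hy x hx
    exact (hderiv x y (havoid _ hx y hy)).const_mul _

variable {t x : ℝ}

theorem hasDerivAt_heatPotential_time (h : IsCurveDensity w γ₁ γ₂ α β)
    (hz : ∀ y ∈ Icc α β, (γ₁ y, γ₂ y) ≠ (t, x)) :
    HasDerivAt (fun τ => curvePotential heatKernel w γ₁ γ₂ τ x)
      (curvePotential heatKernelDxx w γ₁ γ₂ t x) t :=
  h.hasDerivAt_curvePotential_comp continuousOffOrigin_heatKernel continuousOffOrigin_heatKernelDxx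
    (c := fun τ => (τ, x)) (by fun_prop) hz fun τ y hne =>
      (hasDerivAt_heatKernel_time hne).comp_sub_const τ (γ₁ y)

theorem hasDerivAt_heatPotential_space (h : IsCurveDensity w γ₁ γ₂ α β)
    (hz : ∀ y ∈ Icc α β, (γ₁ y, γ₂ y) ≠ (t, x)) :
    HasDerivAt (curvePotential heatKernel w γ₁ γ₂ t)
      (curvePotential heatKernelDx w γ₁ γ₂ t x) x :=
  h.hasDerivAt_curvePotential_comp continuousOffOrigin_heatKernel continuousOffOrigin_heatKernelDx
    (c := fun ξ => (t, ξ)) (by fun_prop) hz fun ξ y _ =>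
      (hasDerivAt_heatKernel_space (t - γ₁ y) _).comp_sub_const ξ (γ₂ y)

theorem hasDerivAt_heatPotentialDx_space (h : IsCurveDensity w γ₁ γ₂ α β)
    (hz : ∀ y ∈ Icc α β, (γ₁ y, γ₂ y) ≠ (t, x)) :
    HasDerivAt (curvePotential heatKernelDx w γ₁ γ₂ t)
      (curvePotential heatKernelDxx w γ₁ γ₂ t x) x :=
  h.hasDerivAt_curvePotential_comp continuousOffOrigin_heatKernelDx
    continuousOffOrigin_heatKernelDxx (c := fun ξ => (t, ξ)) (by fun_prop) hz fun ξ y _ =>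
      (hasDerivAt_heatKernelDx_space (t - γ₁ y) _).comp_sub_const ξ (γ₂ y)

end IsCurveDensity

end CurvePotential

section GaussCoeffDomination

variable {F : ℝ → ℝ} {C T : ℝ}

theorem hasDerivAt_sqrt_div_pi {r : ℝ} (hr : 0 < r) :
    HasDerivAt (fun r : ℝ => √(r / π)) (gaussCoeff r) r := by
  refine (((hasDerivAt_id' r).div_const π).sqrt (by positivity)).congr_deriv ?_
  have hscale : 4 * π * r = (2 * π) ^ 2 * (r / π) := by
    field_simp
    ring
  rw [gaussCoeff, hscale, sqrt_mul (by positivity), sqrt_sq (by positivity)]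
  field_simp

theorem integrableOn_gaussCoeff (T : ℝ) : IntegrableOn gaussCoeff (Ioc 0 T) :=
  intervalIntegral.integrableOn_deriv_of_nonneg (g := fun r : ℝ => √(r / π))
    (by fun_prop) (fun _ hr => hasDerivAt_sqrt_div_pi hr.1) fun r _ => gaussCoeff_nonneg r

theorem setIntegral_gaussCoeff_le_sqrt (hT : 0 ≤ T) : ∫ r in Ioc 0 T, gaussCoeff r ≤ √T := by
  rw [← intervalIntegral.integral_of_le hT,
    intervalIntegral.integral_eq_sub_of_hasDerivAt_of_le hT (f := fun r : ℝ => √(r / π))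
      (by fun_prop) (fun r hr => hasDerivAt_sqrt_div_pi hr.1)
      ((intervalIntegrable_iff_integrableOn_Ioc_of_le hT).2 (integrableOn_gaussCoeff T))]
  simpa only [zero_div, sqrt_zero, sub_zero] using
    sqrt_le_sqrt (div_le_self hT (by linarith [pi_gt_three]))

theorem integrable_indicator_gaussCoeff (C T : ℝ) :
    Integrable ((Ioc 0 T).indicator fun r => C * gaussCoeff r) :=
  (integrable_indicator_iff measurableSet_Ioc).2 ((integrableOn_gaussCoeff T).const_mul C)

theorem norm_le_indicator_gaussCoeff (hF : ∀ r, |F r| ≤ C * gaussCoeff r)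
    (hsupp : ∀ r, T < r → F r = 0) (r : ℝ) :
    ‖F r‖ ≤ (Ioc 0 T).indicator (fun r => C * gaussCoeff r) r := by
  by_cases h : r ∈ Ioc 0 T
  · rw [indicator_of_mem h]
    exact hF r
  · rw [indicator_of_notMem h]
    rcases le_or_gt r 0 with hr | hr
    · simpa only [gaussCoeff_of_nonpos hr, mul_zero, Real.norm_eq_abs] using hF r
    · rw [hsupp r (not_le.1 fun hrT => h ⟨hr, hrT⟩), norm_zero]

theorem abs_integral_le_mul_sqrt (hT : 0 ≤ T) (hC : 0 ≤ C) (hF : ∀ r, |F r| ≤ C * gaussCoeff r)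
    (hsupp : ∀ r, T < r → F r = 0) : |∫ r, F r| ≤ C * √T := by
  refine (norm_integral_le_of_norm_le (integrable_indicator_gaussCoeff C T)
    (ae_of_all _ (norm_le_indicator_gaussCoeff hF hsupp))).trans ?_
  rw [integral_indicator measurableSet_Ioc, integral_const_mul]
  exact mul_le_mul_of_nonneg_left (setIntegral_gaussCoeff_le_sqrt hT) hC

theorem integrable_of_abs_le_gaussCoeff (hm : Measurable F) (hF : ∀ r, |F r| ≤ C * gaussCoeff r)
    (hsupp : ∀ r, T < r → F r = 0) : Integrable F :=
  (integrable_indicator_gaussCoeff C T).mono' hm.aestronglyMeasurable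
    (ae_of_all _ (norm_le_indicator_gaussCoeff hF hsupp))

end GaussCoeffDomination

section LayerDensity

/-- A density on `(0, δ)` that is continuous and bounded by `R` there, extended by `0`; the two
endpoints may be discontinuities. -/
structure IsLayerDensity (ρ : ℝ → ℝ) (R δ : ℝ) : Prop where
  continuousOn : ContinuousOn ρ (Ioo 0 δ)
  abs_le : ∀ y, |ρ y| ≤ R
  eq_zero_of_notMem : ∀ y ∉ Ioo 0 δ, ρ y = 0

/-- The potential of the kernel `k` with density `ρ` along the graph `x = q t`. -/
abbrev layerPotential (k : ℝ → ℝ → ℝ) (ρ q : ℝ → ℝ) : ℝ → ℝ → ℝ :=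
  curvePotential k ρ (fun y => y) q

theorem layerPotential_eq_integral (k : ℝ → ℝ → ℝ) (ρ q : ℝ → ℝ) (t x : ℝ) :
    layerPotential k ρ q t x = ∫ r, ρ (t - r) * k r (x - q (t - r)) := by
  rw [layerPotential, curvePotential, ← integral_sub_left_eq_self _ volume t]
  simp only [sub_sub_cancel]

namespace IsLayerDensity

variable {ρ ρ' q k k' : ℝ → ℝ} {R δ C D E t : ℝ}

theorem bound_nonneg (h : IsLayerDensity ρ R δ) : 0 ≤ R := (abs_nonneg _).trans (h.abs_le 0)

theorem continuousAt (h : IsLayerDensity ρ R δ) {y : ℝ} (hy₀ : y ≠ 0) (hyδ : y ≠ δ) :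
    ContinuousAt ρ y := by
  by_cases hy : y ∈ Ioo 0 δ
  · exact h.continuousOn.continuousAt (Ioo_mem_nhds hy.1 hy.2)
  · have hy' : y ∈ (Icc 0 δ)ᶜ := fun hmem => hy ⟨hmem.1.lt_of_ne' hy₀, hmem.2.lt_of_ne hyδ⟩
    refine (continuousAt_const (y := (0 : ℝ))).congr ?_
    filter_upwards [isClosed_Icc.isOpen_compl.mem_nhds hy'] with z hz
    exact (h.eq_zero_of_notMem z fun hmem => hz (Ioo_subset_Icc_self hmem)).symm

theorem eq_indicator (h : IsLayerDensity ρ R δ) : ρ = (Ioo 0 δ).indicator ρ :=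
  (indicator_eq_self.2 (Function.support_subset_iff'.2 h.eq_zero_of_notMem)).symm

theorem measurable (h : IsLayerDensity ρ R δ) : Measurable ρ := by
  classical
  rw [h.eq_indicator, ← piecewise_eq_indicator]
  exact h.continuousOn.measurable_piecewise continuousOn_const measurableSet_Ioo

theorem integrable (h : IsLayerDensity ρ R δ) : Integrable ρ := by
  rw [h.eq_indicator, integrable_indicator_iff measurableSet_Ioo]
  exact Measure.integrableOn_of_bounded measure_Ioo_lt_top.ne h.measurable.aestronglyMeasurable
    (ae_of_all _ h.abs_le)

theorem isCurveDensity (h : IsLayerDensity ρ R δ) (hq : Continuous q) :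
    IsCurveDensity ρ (fun y => y) q 0 δ where
  integrable := h.integrable
  eq_zero_of_notMem := fun y hy => h.eq_zero_of_notMem y fun hmem => hy (Ioo_subset_Icc_self hmem)
  continuous_time := continuous_id
  continuous_space := hq

theorem apply_sub_eq_zero (h : IsLayerDensity ρ R δ) {T r : ℝ} (ht : t ≤ T) (hr : T < r) :
    ρ (t - r) = 0 :=
  h.eq_zero_of_notMem _ fun hmem => by linarith [hmem.1]

theorem abs_mul_le (h : IsLayerDensity ρ R δ) {κ r : ℝ} (hκ : |κ| ≤ C * gaussCoeff r) :
    |ρ (t - r) * κ| ≤ R * C * gaussCoeff r := by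
  rw [abs_mul, mul_assoc]
  exact mul_le_mul (h.abs_le _) hκ (abs_nonneg _) h.bound_nonneg

theorem abs_integral_mul_le (h : IsLayerDensity ρ R δ) (ht : 0 ≤ t) (hC : 0 ≤ C)
    (hk : ∀ r, |k r| ≤ C * gaussCoeff r) : |∫ r, ρ (t - r) * k r| ≤ R * C * √t :=
  abs_integral_le_mul_sqrt ht (mul_nonneg h.bound_nonneg hC) (fun r => h.abs_mul_le (hk r))
    fun r hr => by rw [h.apply_sub_eq_zero le_rfl hr, zero_mul]

theorem integrable_mul (h : IsLayerDensity ρ R δ) (hm : Measurable k)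
    (hk : ∀ r, |k r| ≤ C * gaussCoeff r) : Integrable fun r => ρ (t - r) * k r :=
  integrable_of_abs_le_gaussCoeff (T := t) ((h.measurable.comp (by fun_prop)).mul hm)
    (fun r => h.abs_mul_le (hk r)) fun r hr => by rw [h.apply_sub_eq_zero le_rfl hr, zero_mul]

theorem abs_integral_mul_sub_le (h : IsLayerDensity ρ R δ) (h' : IsLayerDensity ρ' R δ)
    (ht : 0 ≤ t) (hC : 0 ≤ C) (hD : 0 ≤ D) (hm : Measurable k) (hm' : Measurable k')
    (hk : ∀ r, |k r| ≤ C * gaussCoeff r) (hk' : ∀ r, |k' r| ≤ C * gaussCoeff r)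
    (hkk' : ∀ r ≤ t, |k r - k' r| ≤ D * gaussCoeff r) (hρ : ∀ y, |ρ y - ρ' y| ≤ E) :
    |(∫ r, ρ (t - r) * k r) - ∫ r, ρ' (t - r) * k' r| ≤ (R * D + E * C) * √t := by
  have hR := h.bound_nonneg
  have hE : 0 ≤ E := (abs_nonneg _).trans (hρ 0)
  rw [← integral_sub (h.integrable_mul hm hk) (h'.integrable_mul hm' hk')]
  refine abs_integral_le_mul_sqrt ht (by positivity) (fun r => ?_) fun r hr => by
    rw [h.apply_sub_eq_zero le_rfl hr, h'.apply_sub_eq_zero le_rfl hr, zero_mul, zero_mul, sub_zero]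
  rcases le_or_gt r t with hr | hr
  · calc |ρ (t - r) * k r - ρ' (t - r) * k' r|
        = |ρ (t - r) * (k r - k' r) + (ρ (t - r) - ρ' (t - r)) * k' r| := by
          congr 1
          ring
      _ ≤ |ρ (t - r)| * |k r - k' r| + |ρ (t - r) - ρ' (t - r)| * |k' r| := by
          rw [← abs_mul, ← abs_mul]
          exact abs_add_le _ _
      _ ≤ R * (D * gaussCoeff r) + E * (C * gaussCoeff r) := by
          gcongr
          exacts [h.abs_le _, hkk' r hr, hρ _, hk' r]
      _ = (R * D + E * C) * gaussCoeff r := by ring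
  · rw [h.apply_sub_eq_zero le_rfl hr, h'.apply_sub_eq_zero le_rfl hr, zero_mul, zero_mul, sub_zero,
      abs_zero]
    exact mul_nonneg (by positivity) (gaussCoeff_nonneg r)

theorem continuousAt_integral_mul (h : IsLayerDensity ρ R δ) {k : ℝ × ℝ → ℝ → ℝ} {z₀ : ℝ × ℝ}
    (hm : ∀ z, Measurable (k z)) (hk : ∀ z r, |k z r| ≤ C * gaussCoeff r)
    (hc : ∀ r > 0, ContinuousAt (fun z => k z r) z₀) :
    ContinuousAt (fun z : ℝ × ℝ => ∫ r, ρ (z.1 - r) * k z r) z₀ := by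
  have htime : ∀ᶠ z : ℝ × ℝ in 𝓝 z₀, z.1 < z₀.1 + 1 :=
    (continuous_fst.tendsto z₀).eventually (gt_mem_nhds (lt_add_one _))
  refine continuousAt_of_dominated
    (bound := (Ioc 0 (z₀.1 + 1)).indicator fun r => R * C * gaussCoeff r) ?_ ?_
    (integrable_indicator_gaussCoeff _ _) ?_
  · filter_upwards with z
    exact ((h.measurable.comp (by fun_prop)).mul (hm z)).aestronglyMeasurable
  · filter_upwards [htime] with z hz
    exact ae_of_all _ (norm_le_indicator_gaussCoeff (fun r => h.abs_mul_le (hk z r)) fun r hr => by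
      rw [h.apply_sub_eq_zero hz.le hr, zero_mul])
  · filter_upwards [Measure.ae_ne volume z₀.1, Measure.ae_ne volume (z₀.1 - δ)] with r hr₀ hrδ
    rcases le_or_gt r 0 with hr | hr
    · refine (continuousAt_const (y := (0 : ℝ))).congr (Eventually.of_forall fun z => ?_)
      have hzero := hk z r
      rw [gaussCoeff_of_nonpos hr, mul_zero, abs_nonpos_iff] at hzero
      simp only [hzero, mul_zero]
    · refine ContinuousAt.mul ?_ (hc r hr)
      exact (h.continuousAt (sub_ne_zero.2 hr₀.symm) (fun hrδ' => hrδ (by linarith))).comp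
        (f := fun z : ℝ × ℝ => z.1 - r) (by fun_prop)

end IsLayerDensity

end LayerDensity

section JumpRelation

theorem continuous_of_abs_sub_le_mul {q : ℝ → ℝ} {Q : ℝ} (hq : ∀ y z, |q y - q z| ≤ Q * |y - z|) :
    Continuous q :=
  (LipschitzWith.of_dist_le_mul (K := Q.toNNReal) fun y z =>
    (hq y z).trans (mul_le_mul_of_nonneg_right (le_coe_toNNReal Q) (abs_nonneg _))).continuous

/-- The profile of the heat kernel at unit time. The substitution `y = r ^ (-1 / 2)` turns the flux
through the line `x = 1` into its integral over the half-line. -/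
def unitGaussian (y : ℝ) : ℝ := (√(4 * π))⁻¹ * exp (-(1 / 4) * y ^ 2)

theorem integrable_unitGaussian : Integrable unitGaussian :=
  (integrable_exp_neg_mul_sq (by norm_num)).const_mul _

theorem integral_Ioi_unitGaussian : ∫ y in Ioi 0, unitGaussian y = 1 / 2 := by
  have hpi : π / (1 / 4) = 4 * π := by ring
  have hne : √(4 * π) ≠ 0 := by positivity
  simp only [unitGaussian]
  rw [integral_const_mul, integral_gaussian_Ioi, hpi]
  field_simp

theorem rpow_smul_unitGaussian_eq_neg_heatKernelDx {r : ℝ} (hr : 0 < r) :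
    (|(-(1 / 2) : ℝ)| * r ^ ((-(1 / 2) : ℝ) - 1)) • unitGaussian (r ^ (-(1 / 2) : ℝ)) =
      -heatKernelDx r 1 := by
  have hsq : (r ^ (-(1 / 2) : ℝ)) ^ 2 = r⁻¹ := by
    rw [← rpow_natCast, ← rpow_mul hr.le, ← rpow_neg_one]
    norm_num
  have hpow : r ^ ((-(1 / 2) : ℝ) - 1) = r⁻¹ * (√r)⁻¹ := by
    rw [sqrt_eq_rpow, ← rpow_neg hr.le, ← rpow_neg_one r, ← rpow_add hr]
    norm_num
  have hexp : -(1 / 4) * r⁻¹ = -(1 ^ 2 / (4 * r)) := by field_simp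
  simp only [unitGaussian, hsq, hpow, heatKernelDx, scaledHeatKernel, gaussCoeff]
  rw [sqrt_mul (by positivity) r, abs_of_neg (by norm_num), hexp]
  simp only [smul_eq_mul, mul_inv]
  ring

theorem integrable_neg_heatKernelDx_one : Integrable fun r => -heatKernelDx r 1 := by
  have hIoi : IntegrableOn (fun r => -heatKernelDx r 1) (Ioi 0) :=
    ((integrableOn_Ioi_comp_rpow_iff unitGaussian (by norm_num)).2
      integrable_unitGaussian.integrableOn).congr_fun
        (fun _ hr => rpow_smul_unitGaussian_eq_neg_heatKernelDx hr) measurableSet_Ioi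
  refine (integrableOn_iff_integrable_of_support_subset ?_).1 hIoi
  refine Function.support_subset_iff'.2 fun r hr => ?_
  rw [heatKernelDx_of_nonpos (not_lt.1 hr), neg_zero]

theorem integral_neg_heatKernelDx_one : ∫ r, -heatKernelDx r 1 = 1 / 2 := by
  rw [← setIntegral_eq_integral_of_forall_compl_eq_zero (s := Ioi 0) fun r hr => by
      rw [heatKernelDx_of_nonpos (not_lt.1 hr), neg_zero],
    ← setIntegral_congr_fun measurableSet_Ioi
      fun _ hr => rpow_smul_unitGaussian_eq_neg_heatKernelDx hr,
    integral_comp_rpow_Ioi unitGaussian (by norm_num), integral_Ioi_unitGaussian]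

/-- The modulus of the gradient, at distance `d`, of the potential of a layer on a vertical line,
after the parabolic rescaling `r = d ^ 2 * m`; unlike the gradient itself it has no jump at `d = 0`.
-/
def flatLayer (ρ : ℝ → ℝ) (t d : ℝ) : ℝ := ∫ m, ρ (t - d ^ 2 * m) * -heatKernelDx m 1

variable {ρ q : ℝ → ℝ} {R δ Q : ℝ}

theorem flatLayer_zero (ρ : ℝ → ℝ) (t : ℝ) : flatLayer ρ t 0 = 1 / 2 * ρ t := by
  simp only [flatLayer, ne_eq, OfNat.ofNat_ne_zero, not_false_eq_true, zero_pow, zero_mul, sub_zero]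
  rw [integral_const_mul, integral_neg_heatKernelDx_one, mul_comm]

theorem sq_mul_heatKernelDx_sq_mul {d : ℝ} (hd : d ≠ 0) (m : ℝ) :
    d ^ 2 * heatKernelDx (d ^ 2 * m) d = Real.sign d * heatKernelDx m 1 := by
  rcases le_or_gt m 0 with hm | hm
  · rw [heatKernelDx_of_nonpos hm,
      heatKernelDx_of_nonpos (mul_nonpos_of_nonneg_of_nonpos (sq_nonneg d) hm), mul_zero, mul_zero]
  have hsign : Real.sign d = d / |d| := by
    rcases lt_or_gt_of_ne hd with h | h
    · rw [Real.sign_of_neg h, abs_of_neg h, div_neg, div_self hd]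
    · rw [Real.sign_of_pos h, abs_of_pos h, div_self hd]
  have hexp : d ^ 2 / (4 * (d ^ 2 * m)) = 1 ^ 2 / (4 * m) := by field_simp
  have habs : |d| ≠ 0 := abs_ne_zero.2 hd
  simp only [heatKernelDx, scaledHeatKernel, gaussCoeff_sq_mul, hsign, hexp]
  field_simp

theorem integral_mul_heatKernelDx_eq (ρ : ℝ → ℝ) (t d : ℝ) :
    ∫ r, ρ (t - r) * heatKernelDx r d = -(Real.sign d * flatLayer ρ t d) := by
  rcases eq_or_ne d 0 with rfl | hd
  · simp only [heatKernelDx_zero, mul_zero, integral_zero, Real.sign_zero, zero_mul, neg_zero]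
  have hd2 : 0 < d ^ 2 := by positivity
  have hscale := Measure.integral_comp_mul_left (fun r => ρ (t - r) * heatKernelDx r d) (d ^ 2)
  rw [abs_of_pos (inv_pos.2 hd2), smul_eq_mul, eq_inv_mul_iff_mul_eq₀ hd2.ne'] at hscale
  rw [← hscale, flatLayer, ← integral_const_mul, ← integral_const_mul, ← integral_neg]
  refine integral_congr_ae (ae_of_all _ fun m => ?_)
  linear_combination ρ (t - d ^ 2 * m) * sq_mul_heatKernelDx_sq_mul hd m

theorem continuousAt_sign_mul {X : Type*} [TopologicalSpace X] {F d : X → ℝ} {z₀ : X}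
    (hF : ContinuousAt F z₀) (hd : ContinuousAt d z₀) (hzero : d z₀ = 0 → F z₀ = 0) :
    ContinuousAt (fun z => Real.sign (d z) * F z) z₀ := by
  rcases lt_trichotomy (d z₀) 0 with h | h | h
  · refine hF.neg.congr ?_
    filter_upwards [hd.eventually (gt_mem_nhds h)] with z hz
    rw [Real.sign_of_neg hz, neg_one_mul, Pi.neg_apply]
  · have hlim : Tendsto (fun z => |F z|) (𝓝 z₀) (𝓝 0) := by
      simpa only [ContinuousAt, hzero h, abs_zero] using hF.abs
    rw [ContinuousAt, h, Real.sign_zero, zero_mul]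
    refine squeeze_zero_norm (fun z => ?_) hlim
    rw [norm_mul, Real.norm_eq_abs, Real.norm_eq_abs]
    rcases Real.sign_apply_eq (d z) with hz | hz | hz <;> rw [hz] <;> simp
  · refine hF.congr ?_
    filter_upwards [hd.eventually (lt_mem_nhds h)] with z hz
    rw [Real.sign_of_pos hz, one_mul]

/-- The gradient of the layer potential along `x = q t` with its jump removed: the first term is the
error of freezing the curve at time `t`, the second the flat layer minus its boundary value. -/
def regularizedLayerGradient (ρ q : ℝ → ℝ) (t x : ℝ) : ℝ :=
  (∫ r, ρ (t - r) * (heatKernelDx r (x - q (t - r)) - heatKernelDx r (x - q t))) +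
    Real.sign (x - q t) * (1 / 2 * ρ t - flatLayer ρ t (x - q t))

theorem measurable_heatKernelDx_sub (hq : Continuous q) (t x : ℝ) :
    Measurable fun r => heatKernelDx r (x - q (t - r)) - heatKernelDx r (x - q t) := by
  have hq' := hq.measurable
  exact (measurable_heatKernelDx measurable_id (by fun_prop)).sub
    (measurable_heatKernelDx measurable_id measurable_const)

theorem abs_heatKernelDx_sub_frozen_le (hq : ∀ y z, |q y - q z| ≤ Q * |y - z|) (t x r : ℝ) :
    |heatKernelDx r (x - q (t - r)) - heatKernelDx r (x - q t)| ≤ 3 / 2 * Q * gaussCoeff r := by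
  rcases le_or_gt r 0 with hr | hr
  · simp only [heatKernelDx_of_nonpos hr, gaussCoeff_of_nonpos hr, sub_zero, abs_zero, mul_zero,
      le_refl]
  · apply abs_heatKernelDx_sub_le_of_abs_sub_le_mul
    simpa only [sub_sub_sub_cancel_left, sub_sub_cancel, abs_of_pos hr] using hq t (t - r)

namespace IsLayerDensity

theorem continuousAt_flatLayer (h : IsLayerDensity ρ R δ) {z₀ : ℝ × ℝ} (hz₀ : z₀.1 ∈ Ioo 0 δ) :
    ContinuousAt (fun z : ℝ × ℝ => flatLayer ρ z.1 z.2) z₀ := by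
  refine continuousAt_of_dominated (bound := fun m => R * |-heatKernelDx m 1|) ?_ ?_
    (integrable_neg_heatKernelDx_one.abs.const_mul R) ?_
  · filter_upwards with z
    exact ((h.measurable.comp (by fun_prop)).mul
      (measurable_heatKernelDx measurable_id measurable_const).neg).aestronglyMeasurable
  · filter_upwards with z
    filter_upwards with m
    rw [norm_mul]
    exact mul_le_mul_of_nonneg_right (h.abs_le _) (norm_nonneg _)
  · filter_upwards [Measure.ae_ne volume (z₀.1 / z₀.2 ^ 2),
      Measure.ae_ne volume ((z₀.1 - δ) / z₀.2 ^ 2)] with m hm₀ hmδ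
    have hne : z₀.1 - z₀.2 ^ 2 * m ≠ 0 ∧ z₀.1 - z₀.2 ^ 2 * m ≠ δ := by
      rcases eq_or_ne z₀.2 0 with hd | hd
      · rw [hd, zero_pow two_ne_zero, zero_mul, sub_zero]
        exact ⟨hz₀.1.ne', hz₀.2.ne⟩
      · refine ⟨fun h0 => hm₀ ?_, fun hδ => hmδ ?_⟩ <;> field_simp <;> linarith
    exact ((h.continuousAt hne.1 hne.2).comp (f := fun z : ℝ × ℝ => z.1 - z.2 ^ 2 * m)
      (by fun_prop)).mul continuousAt_const

theorem continuousAt_regularizedLayerGradient (h : IsLayerDensity ρ R δ)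
    (hq : ∀ y z, |q y - q z| ≤ Q * |y - z|) {z₀ : ℝ × ℝ} (hz₀ : z₀.1 ∈ Ioo 0 δ) :
    ContinuousAt (fun z : ℝ × ℝ => regularizedLayerGradient ρ q z.1 z.2) z₀ := by
  have hqc := continuous_of_abs_sub_le_mul hq
  refine ContinuousAt.add ?_
    (continuousAt_sign_mul (d := fun z : ℝ × ℝ => z.2 - q z.1) ?_ (by fun_prop) ?_)
  · refine h.continuousAt_integral_mul
      (k := fun z r => heatKernelDx r (z.2 - q (z.1 - r)) - heatKernelDx r (z.2 - q z.1))
      (fun z => measurable_heatKernelDx_sub hqc z.1 z.2)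
      (fun z r => abs_heatKernelDx_sub_frozen_le hq z.1 z.2 r) fun r hr => ?_
    have hkernel : ∀ g : ℝ × ℝ → ℝ, Continuous g →
        ContinuousAt (fun z => heatKernelDx r (g z)) z₀ := fun g hg =>
      (continuousOffOrigin_heatKernelDx (fun h0 => hr.ne' (Prod.ext_iff.1 h0).1)).comp
        (f := fun z => (r, g z)) (by fun_prop)
    exact (hkernel _ (by fun_prop)).sub (hkernel _ (by fun_prop))
  · have hρ : ContinuousAt (fun z : ℝ × ℝ => ρ z.1) z₀ :=
      (h.continuousAt hz₀.1.ne' hz₀.2.ne).comp (f := Prod.fst) continuousAt_fst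
    exact (continuousAt_const.mul hρ).sub ((h.continuousAt_flatLayer (z₀ := (z₀.1, z₀.2 - q z₀.1))
      hz₀).comp (f := fun z : ℝ × ℝ => (z.1, z.2 - q z.1)) (by fun_prop))
  · intro h0
    rw [h0, flatLayer_zero, sub_self]

theorem layerPotential_heatKernelDx_eq (h : IsLayerDensity ρ R δ)
    (hq : ∀ y z, |q y - q z| ≤ Q * |y - z|) (t x : ℝ) :
    layerPotential heatKernelDx ρ q t x =
      regularizedLayerGradient ρ q t x - 1 / 2 * ρ t * Real.sign (x - q t) := by
  have hfrozen : Integrable fun r => ρ (t - r) * heatKernelDx r (x - q t) := by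
    rcases eq_or_ne (x - q t) 0 with h0 | h0
    · simp only [h0, heatKernelDx_zero, mul_zero]
      exact integrable_zero _ _ _
    · exact h.integrable_mul (measurable_heatKernelDx measurable_id measurable_const)
        fun r => abs_heatKernelDx_le_of_le_abs (abs_pos.2 h0) le_rfl
  have hsplit : ∫ r, ρ (t - r) * heatKernelDx r (x - q (t - r)) =
      (∫ r, ρ (t - r) * (heatKernelDx r (x - q (t - r)) - heatKernelDx r (x - q t))) +
        ∫ r, ρ (t - r) * heatKernelDx r (x - q t) := by
    rw [← integral_add (h.integrable_mul
      (measurable_heatKernelDx_sub (continuous_of_abs_sub_le_mul hq) t x)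
      (abs_heatKernelDx_sub_frozen_le hq t x)) hfrozen]
    simp only [mul_sub, sub_add_cancel]
  rw [layerPotential_eq_integral, hsplit, integral_mul_heatKernelDx_eq, regularizedLayerGradient]
  ring

end IsLayerDensity

end JumpRelation

section HeatKernelIntegrals

variable {t : ℝ}

theorem heatKernel_eq (t y : ℝ) :
    heatKernel t y = gaussCoeff t * exp (-(1 / (4 * t)) * y ^ 2) := by
  simp only [heatKernel, scaledHeatKernel, pow_zero, one_mul]
  congr 2
  ring

theorem integrable_heatKernel (ht : 0 < t) : Integrable (heatKernel t) := by
  rw [funext (heatKernel_eq t)]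
  exact (integrable_exp_neg_mul_sq (by positivity)).const_mul _

theorem integral_heatKernel (ht : 0 < t) : ∫ y, heatKernel t y = 1 := by
  have hvar : π / (1 / (4 * t)) = 4 * π * t := by field_simp
  have hne : √(4 * π * t) ≠ 0 := by positivity
  simp only [heatKernel_eq]
  rw [integral_const_mul, integral_gaussian, gaussCoeff, hvar, inv_mul_cancel₀ hne]

theorem abs_div_mul_exp_le {y : ℝ} (ht : 0 < t) :
    |y| / (2 * √t) * exp (-(1 / (4 * t)) * y ^ 2) ≤ exp (-(1 / (4 * (2 * t))) * y ^ 2) := by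
  set w := |y| / (2 * √t)
  have hw : y ^ 2 / (8 * t) = w ^ 2 / 2 := by
    rw [div_pow, sq_abs, mul_pow, sq_sqrt ht.le]
    field_simp
    norm_num
  have hle : w ≤ exp (y ^ 2 / (8 * t)) := by
    rw [hw]
    nlinarith [add_one_le_exp (w ^ 2 / 2), sq_nonneg (w - 1)]
  calc w * exp (-(1 / (4 * t)) * y ^ 2)
      ≤ exp (y ^ 2 / (8 * t)) * exp (-(1 / (4 * t)) * y ^ 2) := by gcongr
    _ = exp (-(1 / (4 * (2 * t))) * y ^ 2) := by
        rw [← exp_add]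
        congr 1
        field_simp
        ring

theorem abs_heatKernelDx_le_heatKernel (ht : 0 < t) (y : ℝ) :
    |heatKernelDx t y| ≤ 2 / √t * heatKernel (2 * t) y := by
  have := sqrt_pos.2 ht
  have hcoeff : gaussCoeff t = √2 * gaussCoeff (2 * t) := by
    rw [gaussCoeff, gaussCoeff, mul_left_comm, sqrt_mul zero_le_two, mul_inv]
    field_simp
  have hsqrt2 : √2 ≤ 2 := (sqrt_le_left zero_le_two).2 (by norm_num)
  have hnonneg := gaussCoeff_nonneg (2 * t)
  calc |heatKernelDx t y|
      = √2 / √t * gaussCoeff (2 * t) * (|y| / (2 * √t) * exp (-(1 / (4 * t)) * y ^ 2)) := by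
        rw [abs_heatKernelDx_eq ht, heatKernel_eq, hcoeff]
        nth_rw 1 [← sq_sqrt ht.le]
        field_simp
    _ ≤ 2 / √t * gaussCoeff (2 * t) * exp (-(1 / (4 * (2 * t))) * y ^ 2) := by
        gcongr
        exact abs_div_mul_exp_le ht
    _ = 2 / √t * heatKernel (2 * t) y := by rw [heatKernel_eq, mul_assoc]

theorem integrable_heatKernelDx (ht : 0 < t) : Integrable (heatKernelDx t) :=
  ((integrable_heatKernel (t := 2 * t) (by positivity)).const_mul (2 / √t)).mono'
    (measurable_heatKernelDx measurable_const measurable_id).aestronglyMeasurable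
    (ae_of_all _ (abs_heatKernelDx_le_heatKernel ht))

theorem integral_abs_heatKernelDx_le (ht : 0 < t) : ∫ y, |heatKernelDx t y| ≤ 2 / √t := by
  have ht2 : 0 < 2 * t := by positivity
  calc ∫ y, |heatKernelDx t y| ≤ ∫ y, 2 / √t * heatKernel (2 * t) y :=
        integral_mono (integrable_heatKernelDx ht).abs ((integrable_heatKernel ht2).const_mul _)
          (abs_heatKernelDx_le_heatKernel ht)
    _ = 2 / √t := by rw [integral_const_mul, integral_heatKernel ht2, mul_one]

end HeatKernelIntegrals

section InitialDensity

/-- The initial datum after even reflection at `x = 0` and extension by zero beyond `± s₁`: an even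
nonnegative function bounded by `M` with Lipschitz constant `L`. -/
structure IsInitialDensity (Φ : ℝ → ℝ) (L M s₁ : ℝ) : Prop where
  even : ∀ x, Φ (-x) = Φ x
  abs_sub_le : ∀ x y, |Φ x - Φ y| ≤ L * |x - y|
  nonneg : ∀ x, 0 ≤ Φ x
  le_bound : ∀ x, Φ x ≤ M
  eq_zero_of_le_abs : ∀ x, s₁ ≤ |x| → Φ x = 0

/-- The potential of the kernel `k` with density `Φ` on the line `t = 0`. -/
abbrev initialPotential (k : ℝ → ℝ → ℝ) (Φ : ℝ → ℝ) : ℝ → ℝ → ℝ :=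
  curvePotential k Φ (fun _ => 0) (fun y => y)

theorem initialPotential_eq_integral (k : ℝ → ℝ → ℝ) (Φ : ℝ → ℝ) (t x : ℝ) :
    initialPotential k Φ t x = ∫ y, Φ (x - y) * k t y := by
  rw [initialPotential, curvePotential, ← integral_sub_left_eq_self _ volume x]
  simp only [sub_sub_cancel, sub_zero]

namespace IsInitialDensity

variable {Φ : ℝ → ℝ} {k : ℝ → ℝ → ℝ} {L M s₁ t : ℝ}

theorem continuous (h : IsInitialDensity Φ L M s₁) : Continuous Φ :=
  continuous_of_abs_sub_le_mul h.abs_sub_le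

theorem lipschitz_nonneg (h : IsInitialDensity Φ L M s₁) : 0 ≤ L := by
  simpa only [sub_zero, abs_one, mul_one] using (abs_nonneg _).trans (h.abs_sub_le 1 0)

theorem eq_zero_of_notMem (h : IsInitialDensity Φ L M s₁) {x : ℝ} (hx : x ∉ Icc (-s₁) s₁) :
    Φ x = 0 :=
  h.eq_zero_of_le_abs x (not_lt.1 fun hlt => hx (abs_le.1 hlt.le))

theorem isCurveDensity (h : IsInitialDensity Φ L M s₁) :
    IsCurveDensity Φ (fun _ => 0) (fun y => y) (-s₁) s₁ where
  integrable := h.continuous.integrable_of_hasCompactSupport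
    (HasCompactSupport.intro isCompact_Icc fun _ hx => h.eq_zero_of_notMem hx)
  eq_zero_of_notMem := fun _ hx => h.eq_zero_of_notMem hx
  continuous_time := continuous_const
  continuous_space := continuous_id

theorem integrable_mul (h : IsInitialDensity Φ L M s₁) {κ : ℝ → ℝ} (hκ : Integrable κ) (x : ℝ) :
    Integrable fun y => Φ (x - y) * κ y := by
  refine hκ.bdd_mul (c := M) (h.continuous.comp (by fun_prop)).aestronglyMeasurable
    (ae_of_all _ fun y => ?_)
  rw [Real.norm_eq_abs, abs_of_nonneg (h.nonneg _)]
  exact h.le_bound _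

theorem abs_integral_mul_sub_le (h : IsInitialDensity Φ L M s₁) {κ : ℝ → ℝ} (hκ : Integrable κ)
    (x x' : ℝ) :
    |(∫ y, Φ (x - y) * κ y) - ∫ y, Φ (x' - y) * κ y| ≤ L * |x - x'| * ∫ y, |κ y| := by
  rw [← integral_sub (h.integrable_mul hκ x) (h.integrable_mul hκ x'), ← integral_const_mul,
    ← Real.norm_eq_abs]
  refine norm_integral_le_of_norm_le (hκ.abs.const_mul _) (ae_of_all _ fun y => ?_)
  rw [← sub_mul, norm_mul]
  refine mul_le_mul_of_nonneg_right ?_ (abs_nonneg _)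
  simpa only [sub_sub_sub_cancel_right, Real.norm_eq_abs] using h.abs_sub_le (x - y) (x' - y)

theorem abs_initialPotential_sub_le (h : IsInitialDensity Φ L M s₁) (ht : 0 < t) (x x' : ℝ) :
    |initialPotential heatKernel Φ t x - initialPotential heatKernel Φ t x'| ≤ L * |x - x'| := by
  rw [initialPotential_eq_integral, initialPotential_eq_integral]
  simpa only [abs_of_nonneg (heatKernel_nonneg _ _), integral_heatKernel ht, mul_one] using
    h.abs_integral_mul_sub_le (integrable_heatKernel ht) x x'

theorem abs_initialPotential_heatKernelDx_sub_le (h : IsInitialDensity Φ L M s₁) (ht : 0 < t)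
    (x x' : ℝ) :
    |initialPotential heatKernelDx Φ t x - initialPotential heatKernelDx Φ t x'| ≤
      L * |x - x'| * (2 / √t) := by
  rw [initialPotential_eq_integral, initialPotential_eq_integral]
  exact (h.abs_integral_mul_sub_le (integrable_heatKernelDx ht) x x').trans
    (mul_le_mul_of_nonneg_left (integral_abs_heatKernelDx_le ht)
      (mul_nonneg h.lipschitz_nonneg (abs_nonneg _)))

theorem initial_line_ne {z : ℝ × ℝ} (hz : 0 < z.1) : ∀ y ∈ Icc (-s₁) s₁, ((0 : ℝ), y) ≠ z :=
  fun _ _ h0 => hz.ne (Prod.ext_iff.1 h0).1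

theorem continuousAt_initialPotential (h : IsInitialDensity Φ L M s₁) (hk : ContinuousOffOrigin k)
    {z : ℝ × ℝ} (hz : 0 < z.1) :
    ContinuousAt (fun q : ℝ × ℝ => initialPotential k Φ q.1 q.2) z :=
  h.isCurveDensity.continuousAt_curvePotential hk (initial_line_ne hz)

theorem abs_initialPotential_heatKernelDx_le (h : IsInitialDensity Φ L M s₁) (ht : 0 < t) (x : ℝ) :
    |initialPotential heatKernelDx Φ t x| ≤ L :=
  (h.isCurveDensity.hasDerivAt_heatPotential_space (initial_line_ne (z := (t, x)) ht)).le_of_lip'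
    h.lipschitz_nonneg (Eventually.of_forall fun y => h.abs_initialPotential_sub_le ht y x)

theorem abs_initialPotential_sub_initial_le (h : IsInitialDensity Φ L M s₁) (ht : 0 < t) (x : ℝ) :
    |initialPotential heatKernel Φ t x - Φ x| ≤ 4 * L * √t := by
  have hL := h.lipschitz_nonneg
  have hmass : Φ x = ∫ y, Φ x * heatKernel t y := by
    rw [integral_const_mul, integral_heatKernel ht, mul_one]
  rw [initialPotential_eq_integral, hmass, ← integral_sub
    (h.integrable_mul (integrable_heatKernel ht) x) ((integrable_heatKernel ht).const_mul _),
    ← Real.norm_eq_abs]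
  have hpointwise : ∀ y, ‖Φ (x - y) * heatKernel t y - Φ x * heatKernel t y‖ ≤
      2 * t * L * |heatKernelDx t y| := fun y =>
    calc ‖Φ (x - y) * heatKernel t y - Φ x * heatKernel t y‖
        = |Φ (x - y) - Φ x| * heatKernel t y := by
          rw [← sub_mul, norm_mul, Real.norm_eq_abs, Real.norm_eq_abs,
            abs_of_nonneg (heatKernel_nonneg t y)]
      _ ≤ L * |y| * heatKernel t y := by
          refine mul_le_mul_of_nonneg_right ?_ (heatKernel_nonneg t y)
          simpa only [sub_sub_cancel_left, abs_neg] using h.abs_sub_le (x - y) x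
      _ = 2 * t * L * |heatKernelDx t y| := by
          rw [abs_heatKernelDx_eq ht]
          field_simp
  calc ‖∫ y, Φ (x - y) * heatKernel t y - Φ x * heatKernel t y‖
      ≤ ∫ y, 2 * t * L * |heatKernelDx t y| := norm_integral_le_of_norm_le
        ((integrable_heatKernelDx ht).abs.const_mul _) (ae_of_all _ hpointwise)
    _ ≤ 2 * t * L * (2 / √t) := by
        rw [integral_const_mul]
        exact mul_le_mul_of_nonneg_left (integral_abs_heatKernelDx_le ht) (by positivity)
    _ = 4 * L * √t := by
        nth_rw 1 [← mul_self_sqrt ht.le]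
        field_simp
        ring

theorem initialPotential_heatKernelDx_neg (h : IsInitialDensity Φ L M s₁) (t x : ℝ) :
    initialPotential heatKernelDx Φ t (-x) = -initialPotential heatKernelDx Φ t x := by
  rw [initialPotential_eq_integral, initialPotential_eq_integral, ← integral_neg_eq_self,
    ← integral_neg]
  refine integral_congr_ae (ae_of_all _ fun y => ?_)
  have hreflect : Φ (-x - -y) = Φ (x - y) := by rw [← h.even, neg_sub_neg, neg_sub]
  simp only [heatKernelDx_neg, hreflect, mul_neg]

end IsInitialDensity

end InitialDensity

namespace IsLayerDensity

variable {ρ q : ℝ → ℝ} {R δ t : ℝ}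

theorem continuousAt_layerPotential_heatKernel (h : IsLayerDensity ρ R δ) (hq : Continuous q)
    (z₀ : ℝ × ℝ) : ContinuousAt (fun z : ℝ × ℝ => layerPotential heatKernel ρ q z.1 z.2) z₀ := by
  have hqm := hq.measurable
  simp only [layerPotential_eq_integral]
  refine h.continuousAt_integral_mul (k := fun z r => heatKernel r (z.2 - q (z.1 - r))) (C := 1)
    (fun z => measurable_heatKernel measurable_id (by fun_prop))
    (fun z r => by rw [one_mul]; exact abs_heatKernel_le_gaussCoeff _ _) fun r hr => ?_
  exact (continuousOffOrigin_heatKernel fun h0 => hr.ne' (Prod.ext_iff.1 h0).1).comp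
    (f := fun z : ℝ × ℝ => (r, z.2 - q (z.1 - r))) (by fun_prop)

theorem abs_layerPotential_le (h : IsLayerDensity ρ R δ) {k : ℝ → ℝ → ℝ} {C x : ℝ} (ht : 0 ≤ t)
    (hC : 0 ≤ C) (hk : ∀ r, |k r (x - q (t - r))| ≤ C * gaussCoeff r) :
    |layerPotential k ρ q t x| ≤ R * C * √t := by
  rw [layerPotential_eq_integral]
  exact h.abs_integral_mul_le ht hC hk

theorem abs_layerPotential_heatKernel_le (h : IsLayerDensity ρ R δ) (q : ℝ → ℝ) (ht : 0 ≤ t)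
    (x : ℝ) : |layerPotential heatKernel ρ q t x| ≤ R * √t := by
  simpa only [mul_one] using h.abs_layerPotential_le (q := q) (x := x) ht zero_le_one
    fun r => by rw [one_mul]; exact abs_heatKernel_le_gaussCoeff _ _

end IsLayerDensity

theorem layerPotential_heatKernelDx_neg (ρ q : ℝ → ℝ) (t x : ℝ) :
    layerPotential heatKernelDx ρ q t (-x) =
      -layerPotential heatKernelDx ρ (fun y => -q y) t x := by
  rw [layerPotential, layerPotential, curvePotential, curvePotential, ← integral_neg]
  refine integral_congr_ae (ae_of_all _ fun y => ?_)
  have hreflect : -x - q y = -(x - -q y) := by ring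
  simp only [hreflect, heatKernelDx_neg, mul_neg]

section StefanPotential

/-- The ansatz for the temperature: the potential of the reflected initial datum `Φ`, the flux `f`
through `x = 0`, and a sink of strength `ρ` along the front `x = s t` and its mirror image. -/
def stefanPotential (k : ℝ → ℝ → ℝ) (Φ f ρ s : ℝ → ℝ) (t x : ℝ) : ℝ :=
  initialPotential k Φ t x + 2 * layerPotential k f (fun _ => 0) t x - layerPotential k ρ s t x -
    layerPotential k ρ (fun y => -s y) t x

/-- The regularity of the data entering `stefanPotential`. -/
structure IsStefanDensity (Φ f ρ s : ℝ → ℝ) (L M s₁ R δ : ℝ) : Prop where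
  initial : IsInitialDensity Φ L M s₁
  flux : IsLayerDensity f R δ
  speed : IsLayerDensity ρ R δ
  abs_front_sub_le : ∀ y z, |s y - s z| ≤ R * |y - z|
  front_pos : ∀ y, 0 < s y
  front_zero : s 0 = s₁

/-- The continuous function agreeing with the space derivative of the potential on `0 < x < s t`;
the jump relations give its values at the two ends. -/
def interiorGradient (Φ f ρ s : ℝ → ℝ) (t x : ℝ) : ℝ :=
  initialPotential heatKernelDx Φ t x + 2 * regularizedLayerGradient f (fun _ => 0) t x -
    regularizedLayerGradient ρ s t x - regularizedLayerGradient ρ (fun y => -s y) t x - f t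

/-- The ansatz for the temperature, continued to `t ≤ 0` by the initial datum. -/
def stefanTemperature (Φ f ρ s : ℝ → ℝ) (t x : ℝ) : ℝ :=
  if t ≤ 0 then Φ x else stefanPotential heatKernel Φ f ρ s t x

variable {Φ f ρ s : ℝ → ℝ} {L M s₁ R δ t x : ℝ} {z : ℝ × ℝ}

theorem stefanTemperature_of_pos (ht : 0 < t) :
    stefanTemperature Φ f ρ s t x = stefanPotential heatKernel Φ f ρ s t x := if_neg ht.not_ge

theorem stefanTemperature_of_nonpos (ht : t ≤ 0) : stefanTemperature Φ f ρ s t x = Φ x := if_pos ht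

namespace IsStefanDensity

theorem continuous_front (h : IsStefanDensity Φ f ρ s L M s₁ R δ) : Continuous s :=
  continuous_of_abs_sub_le_mul h.abs_front_sub_le

theorem abs_neg_front_sub_le (h : IsStefanDensity Φ f ρ s L M s₁ R δ) (y z : ℝ) :
    |-s y - -s z| ≤ R * |y - z| := by
  rw [neg_sub_neg, abs_sub_comm]
  exact h.abs_front_sub_le y z

theorem flux_line_ne (hz : 0 < z.2) : ∀ y ∈ Icc 0 δ, (y, (0 : ℝ)) ≠ z :=
  fun _ _ h0 => hz.ne (Prod.ext_iff.1 h0).2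

theorem front_ne (hz : z.2 ≠ s z.1) : ∀ y ∈ Icc 0 δ, (y, s y) ≠ z := by
  rintro y - rfl
  exact hz rfl

theorem reflected_front_ne (h : IsStefanDensity Φ f ρ s L M s₁ R δ) (hz : 0 < z.2) :
    ∀ y ∈ Icc 0 δ, (y, -s y) ≠ z := by
  rintro y - rfl
  exact lt_asymm hz (neg_lt_zero.2 (h.front_pos y))

theorem hasDerivAt_stefanPotential_time (h : IsStefanDensity Φ f ρ s L M s₁ R δ) (ht : 0 < t)
    (hx : 0 < x) (hxs : x ≠ s t) :
    HasDerivAt (fun τ => stefanPotential heatKernel Φ f ρ s τ x)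
      (stefanPotential heatKernelDxx Φ f ρ s t x) t :=
  (((h.initial.isCurveDensity.hasDerivAt_heatPotential_time
      (IsInitialDensity.initial_line_ne ht)).add
    (((h.flux.isCurveDensity continuous_const).hasDerivAt_heatPotential_time
      (flux_line_ne hx)).const_mul 2)).sub
    ((h.speed.isCurveDensity h.continuous_front).hasDerivAt_heatPotential_time
      (front_ne hxs))).sub
    ((h.speed.isCurveDensity h.continuous_front.neg).hasDerivAt_heatPotential_time
      (h.reflected_front_ne hx))

theorem hasDerivAt_stefanPotential_space (h : IsStefanDensity Φ f ρ s L M s₁ R δ) (ht : 0 < t)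
    (hx : 0 < x) (hxs : x ≠ s t) :
    HasDerivAt (stefanPotential heatKernel Φ f ρ s t) (stefanPotential heatKernelDx Φ f ρ s t x)
      x :=
  (((h.initial.isCurveDensity.hasDerivAt_heatPotential_space
      (IsInitialDensity.initial_line_ne ht)).add
    (((h.flux.isCurveDensity continuous_const).hasDerivAt_heatPotential_space
      (flux_line_ne hx)).const_mul 2)).sub
    ((h.speed.isCurveDensity h.continuous_front).hasDerivAt_heatPotential_space
      (front_ne hxs))).sub
    ((h.speed.isCurveDensity h.continuous_front.neg).hasDerivAt_heatPotential_space
      (h.reflected_front_ne hx))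

theorem hasDerivAt_stefanPotentialDx_space (h : IsStefanDensity Φ f ρ s L M s₁ R δ) (ht : 0 < t)
    (hx : 0 < x) (hxs : x ≠ s t) :
    HasDerivAt (stefanPotential heatKernelDx Φ f ρ s t)
      (stefanPotential heatKernelDxx Φ f ρ s t x) x :=
  (((h.initial.isCurveDensity.hasDerivAt_heatPotentialDx_space
      (IsInitialDensity.initial_line_ne ht)).add
    (((h.flux.isCurveDensity continuous_const).hasDerivAt_heatPotentialDx_space
      (flux_line_ne hx)).const_mul 2)).sub
    ((h.speed.isCurveDensity h.continuous_front).hasDerivAt_heatPotentialDx_space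
      (front_ne hxs))).sub
    ((h.speed.isCurveDensity h.continuous_front.neg).hasDerivAt_heatPotentialDx_space
      (h.reflected_front_ne hx))

theorem continuousAt_stefanPotential {k : ℝ → ℝ → ℝ} (h : IsStefanDensity Φ f ρ s L M s₁ R δ)
    (hk : ContinuousOffOrigin k) (ht : 0 < z.1) (hx : 0 < z.2) (hxs : z.2 ≠ s z.1) :
    ContinuousAt (fun z : ℝ × ℝ => stefanPotential k Φ f ρ s z.1 z.2) z :=
  (((h.initial.continuousAt_initialPotential hk ht).add
    (((h.flux.isCurveDensity continuous_const).continuousAt_curvePotential hk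
      (flux_line_ne hx)).const_mul 2)).sub
    ((h.speed.isCurveDensity h.continuous_front).continuousAt_curvePotential hk
      (front_ne hxs))).sub
    ((h.speed.isCurveDensity h.continuous_front.neg).continuousAt_curvePotential hk
      (h.reflected_front_ne hx))

theorem continuousAt_stefanPotential_heatKernel (h : IsStefanDensity Φ f ρ s L M s₁ R δ)
    (hz : 0 < z.1) : ContinuousAt (fun z : ℝ × ℝ => stefanPotential heatKernel Φ f ρ s z.1 z.2) z :=
  (((h.initial.continuousAt_initialPotential continuousOffOrigin_heatKernel hz).add
    ((h.flux.continuousAt_layerPotential_heatKernel continuous_const z).const_mul 2)).sub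
    (h.speed.continuousAt_layerPotential_heatKernel h.continuous_front z)).sub
    (h.speed.continuousAt_layerPotential_heatKernel h.continuous_front.neg z)

theorem abs_stefanTemperature_sub_initial_le (h : IsStefanDensity Φ f ρ s L M s₁ R δ) (t x : ℝ) :
    |stefanTemperature Φ f ρ s t x - Φ x| ≤ (4 * L + 4 * R) * √t := by
  rcases le_or_gt t 0 with ht | ht
  · rw [stefanTemperature_of_nonpos ht, sub_self, abs_zero, sqrt_eq_zero_of_nonpos ht, mul_zero]
  · have hinitial := abs_le.1 (h.initial.abs_initialPotential_sub_initial_le ht x)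
    have hflux := abs_le.1 (h.flux.abs_layerPotential_heatKernel_le (fun _ => 0) ht.le x)
    have hfront := abs_le.1 (h.speed.abs_layerPotential_heatKernel_le s ht.le x)
    have hmirror := abs_le.1 (h.speed.abs_layerPotential_heatKernel_le (fun y => -s y) ht.le x)
    rw [stefanTemperature_of_pos ht, stefanPotential, abs_le]
    constructor <;> linarith [hinitial.1, hinitial.2]

theorem continuous_stefanTemperature (h : IsStefanDensity Φ f ρ s L M s₁ R δ) :
    Continuous fun z : ℝ × ℝ => stefanTemperature Φ f ρ s z.1 z.2 := by
  refine continuous_iff_continuousAt.2 fun z => ?_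
  rcases le_or_gt z.1 0 with hz | hz
  · have hdiff : Tendsto (fun z : ℝ × ℝ => stefanTemperature Φ f ρ s z.1 z.2 - Φ z.2) (𝓝 z)
        (𝓝 0) := by
      refine squeeze_zero_norm (fun z => h.abs_stefanTemperature_sub_initial_le z.1 z.2) ?_
      have hbound : Continuous fun z : ℝ × ℝ => (4 * L + 4 * R) * √z.1 := by fun_prop
      simpa only [sqrt_eq_zero_of_nonpos hz, mul_zero] using hbound.tendsto z
    have hsum := hdiff.add ((h.initial.continuous.comp continuous_snd).tendsto z)
    rw [ContinuousAt, stefanTemperature_of_nonpos hz]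
    simpa only [Function.comp_apply, sub_add_cancel, zero_add] using hsum
  · refine (h.continuousAt_stefanPotential_heatKernel hz).congr ?_
    filter_upwards [(continuous_fst.tendsto z).eventually (lt_mem_nhds hz)] with y hy
    exact (stefanTemperature_of_pos hy).symm

theorem abs_stefanTemperature_le (h : IsStefanDensity Φ f ρ s L M s₁ R δ) {T : ℝ} (ht : t ≤ T)
    (x : ℝ) : |stefanTemperature Φ f ρ s t x| ≤ M + (4 * L + 4 * R) * √T := by
  have hL := h.initial.lipschitz_nonneg
  have hR := h.flux.bound_nonneg
  have hmono : (4 * L + 4 * R) * √t ≤ (4 * L + 4 * R) * √T := by gcongr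
  have hdiff := abs_le.1 (h.abs_stefanTemperature_sub_initial_le t x)
  have hnonneg := h.initial.nonneg x
  have hle := h.initial.le_bound x
  rw [abs_le]
  constructor <;> linarith [hdiff.1, hdiff.2]

theorem continuous_stefanPotential_slice (h : IsStefanDensity Φ f ρ s L M s₁ R δ) (ht : 0 < t) :
    Continuous (stefanPotential heatKernel Φ f ρ s t) := by
  have hslice : Continuous fun x => stefanTemperature Φ f ρ s t x :=
    h.continuous_stefanTemperature.comp (by fun_prop : Continuous fun x : ℝ => (t, x))
  simpa only [stefanTemperature_of_pos ht] using hslice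

theorem stefanPotentialDx_zero (h : IsStefanDensity Φ f ρ s L M s₁ R δ) (t : ℝ) :
    stefanPotential heatKernelDx Φ f ρ s t 0 = 0 := by
  have hinitial := h.initial.initialPotential_heatKernelDx_neg t 0
  have hflux := layerPotential_heatKernelDx_neg f (fun _ => 0) t 0
  have hfront := layerPotential_heatKernelDx_neg ρ s t 0
  rw [neg_zero] at hinitial hflux hfront
  rw [stefanPotential]
  linarith

theorem continuousAt_interiorGradient (h : IsStefanDensity Φ f ρ s L M s₁ R δ)
    (hz : z.1 ∈ Ioo 0 δ) :
    ContinuousAt (fun z : ℝ × ℝ => interiorGradient Φ f ρ s z.1 z.2) z :=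
  ((((h.initial.continuousAt_initialPotential continuousOffOrigin_heatKernelDx hz.1).add
    ((h.flux.continuousAt_regularizedLayerGradient (Q := 0) (by simp) hz).const_mul 2)).sub
    (h.speed.continuousAt_regularizedLayerGradient h.abs_front_sub_le hz)).sub
    (h.speed.continuousAt_regularizedLayerGradient h.abs_neg_front_sub_le hz)).sub
    ((h.flux.continuousAt hz.1.ne' hz.2.ne).comp (f := Prod.fst) continuousAt_fst)

theorem continuous_interiorGradient_slice (h : IsStefanDensity Φ f ρ s L M s₁ R δ)
    (ht : t ∈ Ioo 0 δ) : Continuous (interiorGradient Φ f ρ s t) :=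
  continuous_iff_continuousAt.2 fun x =>
    (h.continuousAt_interiorGradient (z := (t, x)) ht).comp (f := fun x : ℝ => (t, x)) (by fun_prop)

theorem stefanPotentialDx_eq (h : IsStefanDensity Φ f ρ s L M s₁ R δ) (t x : ℝ) :
    stefanPotential heatKernelDx Φ f ρ s t x = interiorGradient Φ f ρ s t x +
      f t * (1 - Real.sign x) + 1 / 2 * ρ t * (Real.sign (x - s t) + Real.sign (x + s t)) := by
  rw [stefanPotential, h.flux.layerPotential_heatKernelDx_eq (Q := 0) (by simp),
    h.speed.layerPotential_heatKernelDx_eq h.abs_front_sub_le,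
    h.speed.layerPotential_heatKernelDx_eq h.abs_neg_front_sub_le, interiorGradient, sub_zero,
    sub_neg_eq_add]
  ring

theorem stefanPotentialDx_of_mem_Ioo (h : IsStefanDensity Φ f ρ s L M s₁ R δ)
    (hx : x ∈ Ioo 0 (s t)) :
    stefanPotential heatKernelDx Φ f ρ s t x = interiorGradient Φ f ρ s t x := by
  rw [h.stefanPotentialDx_eq, Real.sign_of_pos hx.1, Real.sign_of_neg (sub_neg.2 hx.2),
    Real.sign_of_pos (add_pos hx.1 (h.front_pos t))]
  ring

theorem stefanPotentialDx_of_front_lt (h : IsStefanDensity Φ f ρ s L M s₁ R δ) (hx : s t < x) :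
    stefanPotential heatKernelDx Φ f ρ s t x = interiorGradient Φ f ρ s t x + ρ t := by
  have hpos := h.front_pos t
  rw [h.stefanPotentialDx_eq, Real.sign_of_pos (hpos.trans hx), Real.sign_of_pos (sub_pos.2 hx),
    Real.sign_of_pos (add_pos (hpos.trans hx) hpos)]
  ring

theorem interiorGradient_zero (h : IsStefanDensity Φ f ρ s L M s₁ R δ) (t : ℝ) :
    interiorGradient Φ f ρ s t 0 = -f t := by
  have hzero := h.stefanPotentialDx_eq t 0
  have hpos := h.front_pos t
  rw [h.stefanPotentialDx_zero, Real.sign_zero, zero_sub, zero_add, Real.sign_of_pos hpos,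
    Real.sign_of_neg (neg_lt_zero.2 hpos)] at hzero
  linarith

theorem interiorGradient_front (h : IsStefanDensity Φ f ρ s L M s₁ R δ)
    (hρ : ρ t = -2 * stefanPotential heatKernelDx Φ f ρ s t (s t)) :
    interiorGradient Φ f ρ s t (s t) = -ρ t := by
  have hfront := h.stefanPotentialDx_eq t (s t)
  have hpos := h.front_pos t
  rw [sub_self, Real.sign_zero, Real.sign_of_pos hpos, Real.sign_of_pos (add_pos hpos hpos)]
    at hfront
  linarith

theorem hasDerivWithinAt_stefanPotential_zero (h : IsStefanDensity Φ f ρ s L M s₁ R δ)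
    (ht : t ∈ Ioo 0 δ) :
    HasDerivWithinAt (stefanPotential heatKernel Φ f ρ s t) (-f t) (Ici 0) 0 := by
  have hderiv := fun x (hx : x ∈ Ioo 0 (s t)) =>
    h.hasDerivAt_stefanPotential_space ht.1 hx.1 hx.2.ne
  refine hasDerivWithinAt_Ici_of_tendsto_deriv (s := Ioo 0 (s t))
    (fun x hx => (hderiv x hx).differentiableAt.differentiableWithinAt)
    (h.continuous_stefanPotential_slice ht.1).continuousWithinAt (Ioo_mem_nhdsGT (h.front_pos t)) ?_
  have hlim := ((h.continuous_interiorGradient_slice ht).tendsto 0).mono_left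
    (nhdsWithin_le_nhds (s := Ioi 0))
  rw [h.interiorGradient_zero] at hlim
  refine hlim.congr' ?_
  filter_upwards [Ioo_mem_nhdsGT (h.front_pos t)] with x hx
  rw [(hderiv x hx).deriv, h.stefanPotentialDx_of_mem_Ioo hx]

theorem hasDerivWithinAt_stefanPotential_front_left (h : IsStefanDensity Φ f ρ s L M s₁ R δ)
    (ht : t ∈ Ioo 0 δ) (hρ : ρ t = -2 * stefanPotential heatKernelDx Φ f ρ s t (s t)) :
    HasDerivWithinAt (stefanPotential heatKernel Φ f ρ s t) (-ρ t) (Iic (s t)) (s t) := by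
  have hderiv := fun x (hx : x ∈ Ioo 0 (s t)) =>
    h.hasDerivAt_stefanPotential_space ht.1 hx.1 hx.2.ne
  refine hasDerivWithinAt_Iic_of_tendsto_deriv (s := Ioo 0 (s t))
    (fun x hx => (hderiv x hx).differentiableAt.differentiableWithinAt)
    (h.continuous_stefanPotential_slice ht.1).continuousWithinAt (Ioo_mem_nhdsLT (h.front_pos t)) ?_
  have hlim := ((h.continuous_interiorGradient_slice ht).tendsto (s t)).mono_left
    (nhdsWithin_le_nhds (s := Iio (s t)))
  rw [h.interiorGradient_front hρ] at hlim
  refine hlim.congr' ?_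
  filter_upwards [Ioo_mem_nhdsLT (h.front_pos t)] with x hx
  rw [(hderiv x hx).deriv, h.stefanPotentialDx_of_mem_Ioo hx]

theorem hasDerivWithinAt_stefanPotential_front_right (h : IsStefanDensity Φ f ρ s L M s₁ R δ)
    (ht : t ∈ Ioo 0 δ) (hρ : ρ t = -2 * stefanPotential heatKernelDx Φ f ρ s t (s t)) :
    HasDerivWithinAt (stefanPotential heatKernel Φ f ρ s t) 0 (Ici (s t)) (s t) := by
  have hderiv := fun x (hx : x ∈ Ioi (s t)) =>
    h.hasDerivAt_stefanPotential_space ht.1 ((h.front_pos t).trans hx) (ne_of_gt hx)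
  refine hasDerivWithinAt_Ici_of_tendsto_deriv (s := Ioi (s t))
    (fun x hx => (hderiv x hx).differentiableAt.differentiableWithinAt)
    (h.continuous_stefanPotential_slice ht.1).continuousWithinAt self_mem_nhdsWithin ?_
  have hlim := (((h.continuous_interiorGradient_slice ht).tendsto (s t)).add_const (ρ t)).mono_left
    (nhdsWithin_le_nhds (s := Ioi (s t)))
  rw [h.interiorGradient_front hρ, neg_add_cancel] at hlim
  refine hlim.congr' ?_
  filter_upwards [self_mem_nhdsWithin] with x hx
  rw [(hderiv x hx).deriv, h.stefanPotentialDx_of_front_lt hx]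

theorem hasHeatDerivAt_stefanTemperature (h : IsStefanDensity Φ f ρ s L M s₁ R δ) (ht : 0 < t)
    (hx : 0 < x) (hxs : x ≠ s t) :
    HasHeatDerivAt (stefanTemperature Φ f ρ s) (stefanPotential heatKernelDxx Φ f ρ s t x)
      (stefanPotential heatKernelDxx Φ f ρ s t x) t x where
  time := by
    refine (h.hasDerivAt_stefanPotential_time ht hx hxs).congr_of_eventuallyEq ?_
    filter_upwards [lt_mem_nhds ht] with τ hτ using stefanTemperature_of_pos hτ
  space := by
    have hslice : stefanTemperature Φ f ρ s t = stefanPotential heatKernel Φ f ρ s t :=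
      funext fun _ => stefanTemperature_of_pos ht
    refine ⟨stefanPotential heatKernelDx Φ f ρ s t, ?_,
      h.hasDerivAt_stefanPotentialDx_space ht hx hxs⟩
    rw [hslice]
    filter_upwards [lt_mem_nhds hx, isOpen_ne.mem_nhds hxs] with y hy hys
    exact h.hasDerivAt_stefanPotential_space ht hy hys

end IsStefanDensity

end StefanPotential

section CaloricParabola

/-- A positive solution of the heat equation whose growth in `x` dominates bounded perturbations. -/
def caloricParabola (X t x : ℝ) : ℝ := (x - X) ^ 2 + 2 * t + 1

variable {X t x : ℝ}

theorem caloricParabola_pos (X x : ℝ) (ht : 0 ≤ t) : 0 < caloricParabola X t x := by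
  unfold caloricParabola
  positivity

theorem continuous_caloricParabola (X : ℝ) :
    Continuous fun q : ℝ × ℝ => caloricParabola X q.1 q.2 := by
  unfold caloricParabola
  fun_prop

theorem hasDerivAt_caloricParabola_space (X t x : ℝ) :
    HasDerivAt (caloricParabola X t) (2 * (x - X)) x := by
  have hsq := ((((hasDerivAt_id x).sub_const X).fun_pow 2).add_const (2 * t)).add_const 1
  exact hsq.congr_deriv (by simp)

theorem hasHeatDerivAt_caloricParabola (X t x : ℝ) :
    HasHeatDerivAt (caloricParabola X) 2 2 t x where
  time := (((hasDerivAt_const_mul (2 : ℝ)).const_add ((x - X) ^ 2)).add_const 1)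
  space := ⟨fun y => 2 * (y - X), .of_forall (hasDerivAt_caloricParabola_space X t),
    by simpa only [id, mul_one] using ((hasDerivAt_id x).sub_const X).const_mul 2⟩

theorem exists_ge_le_mul_sub_sq {ε : ℝ} (hε : 0 < ε) (B x X₀ : ℝ) :
    ∃ X, x ≤ X ∧ B ≤ ε * (X - X₀) ^ 2 := by
  have hBε : 0 ≤ |B| / ε := by positivity
  refine ⟨X₀ + |x - X₀| + |B| / ε + 1, by linarith [le_abs_self (x - X₀)], ?_⟩
  have hsq : |B| / ε ≤ (X₀ + |x - X₀| + |B| / ε + 1 - X₀) ^ 2 := by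
    nlinarith [abs_nonneg (x - X₀)]
  rw [div_le_iff₀' hε] at hsq
  exact (le_abs_self B).trans hsq

end CaloricParabola

section BoundaryEquations

/-- The densities solve the boundary integral equations of the Stefan problem: the sink strength
`ρ` is the speed of the front and balances the jump of the gradient there, and the flux `f` through
`x = 0` is the `p`-th power of the boundary temperature. -/
structure SolvesBoundaryEquations (p : ℝ) (Φ f ρ s : ℝ → ℝ) (L M s₁ R δ : ℝ) : Prop
    extends IsStefanDensity Φ f ρ s L M s₁ R δ where
  flux_nonneg : ∀ t, 0 ≤ f t
  hasDerivAt_front : ∀ t ∈ Ioo 0 δ, HasDerivAt s (ρ t) t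
  speed_eq : ∀ t ∈ Ioo 0 δ, ρ t = -2 * stefanPotential heatKernelDx Φ f ρ s t (s t)
  flux_eq : ∀ t ∈ Ioo 0 δ, 0 ≤ stefanPotential heatKernel Φ f ρ s t 0 →
    f t = stefanPotential heatKernel Φ f ρ s t 0 ^ p

/-- The potential on `0 ≤ x ≤ s t`, continued by its tangent lines across the two ends, so that the
one-sided space derivatives there become two-sided. -/
def extendedTemperature (Φ f ρ s : ℝ → ℝ) (t x : ℝ) : ℝ :=
  if t ≤ 0 then Φ x
  else if x < 0 then stefanPotential heatKernel Φ f ρ s t 0 - f t * x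
  else if x ≤ s t then stefanPotential heatKernel Φ f ρ s t x
  else -ρ t * (x - s t)

variable {Φ f ρ s : ℝ → ℝ} {p L M s₁ R δ t x T : ℝ}

theorem extendedTemperature_of_nonpos (ht : t ≤ 0) : extendedTemperature Φ f ρ s t x = Φ x :=
  if_pos ht

theorem extendedTemperature_of_mem_Icc (ht : 0 < t) (hx : x ∈ Icc 0 (s t)) :
    extendedTemperature Φ f ρ s t x = stefanPotential heatKernel Φ f ρ s t x := by
  rw [extendedTemperature, if_neg ht.not_ge, if_neg hx.1.not_gt, if_pos hx.2]

theorem extendedTemperature_of_neg (ht : 0 < t) (hx : x < 0) :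
    extendedTemperature Φ f ρ s t x = stefanPotential heatKernel Φ f ρ s t 0 - f t * x := by
  rw [extendedTemperature, if_neg ht.not_ge, if_pos hx]

theorem extendedTemperature_of_front_lt (ht : 0 < t) (hs : 0 ≤ s t) (hx : s t < x) :
    extendedTemperature Φ f ρ s t x = -ρ t * (x - s t) := by
  rw [extendedTemperature, if_neg ht.not_ge, if_neg (hs.trans hx.le).not_gt, if_neg hx.not_ge]

namespace IsStefanDensity

theorem hasHeatDerivAt_sub_caloricParabola (h : IsStefanDensity Φ f ρ s L M s₁ R δ) (e ε X : ℝ)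
    (ht : 0 < t) (hx : 0 < x) (hxs : x ≠ s t) :
    ∃ α c, HasHeatDerivAt
      (fun τ y => e * stefanTemperature Φ f ρ s τ y - ε * caloricParabola X τ y) α c t x ∧ α ≤ c :=
  ⟨_, _, ((h.hasHeatDerivAt_stefanTemperature ht hx hxs).const_mul e).sub
    ((hasHeatDerivAt_caloricParabola X t x).const_mul ε), le_rfl⟩

theorem continuous_sub_caloricParabola (h : IsStefanDensity Φ f ρ s L M s₁ R δ) (e ε X : ℝ) :
    Continuous fun q : ℝ × ℝ =>
      e * stefanTemperature Φ f ρ s q.1 q.2 - ε * caloricParabola X q.1 q.2 :=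
  (h.continuous_stefanTemperature.const_mul e).sub ((continuous_caloricParabola X).const_mul ε)

theorem hasDerivWithinAt_sub_caloricParabola {u' : ℝ} {S : Set ℝ}
    (hu : HasDerivWithinAt (stefanPotential heatKernel Φ f ρ s t) u' S x) (e ε X : ℝ)
    (ht : 0 < t) :
    HasDerivWithinAt (fun y => e * stefanTemperature Φ f ρ s t y - ε * caloricParabola X t y)
      (e * u' - ε * (2 * (x - X))) S x := by
  simp only [stefanTemperature_of_pos ht]
  exact (hu.const_mul e).sub
    ((hasDerivAt_caloricParabola_space X t x).hasDerivWithinAt.const_mul ε)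

theorem front_lt (h : IsStefanDensity Φ f ρ s L M s₁ R δ) (ht : t ∈ Icc 0 δ) :
    s t < s₁ + R * δ + 1 := by
  have hLip := (abs_le.1 (h.abs_front_sub_le t 0)).2
  rw [h.front_zero, sub_zero, abs_of_nonneg ht.1] at hLip
  have hmono : R * t ≤ R * δ := mul_le_mul_of_nonneg_left ht.2 h.flux.bound_nonneg
  linarith

-- On `[s τ, X]` the parabola centred at `X₀` beyond the front has negative slope at the front and,
-- for `X` large, dominates the bounded potential at `X`.
theorem mul_stefanTemperature_le_caloricParabola (h : IsStefanDensity Φ f ρ s L M s₁ R δ)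
    (hρ : ∀ t ∈ Ioo 0 δ, ρ t = -2 * stefanPotential heatKernelDx Φ f ρ s t (s t)) {e ε : ℝ}
    (he : |e| = 1) (hε : 0 < ε) (ht : t ∈ Ioo 0 δ) (hx : s t ≤ x) :
    e * stefanTemperature Φ f ρ s t x ≤ ε * caloricParabola (s₁ + R * δ + 1) t x := by
  set X₀ := s₁ + R * δ + 1
  set B := M + (4 * L + 4 * R) * √t
  have hB : ∀ τ ≤ t, ∀ y, e * stefanTemperature Φ f ρ s τ y ≤ B := fun τ hτ y => by
    refine (le_abs_self _).trans ?_
    rw [abs_mul, he, one_mul]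
    exact h.abs_stefanTemperature_le hτ y
  obtain ⟨X, hxX, hXdom⟩ := exists_ge_le_mul_sub_sq hε B x X₀
  refine sub_nonpos.1 (heat_subsolution_nonpos (a := s) (b := fun _ => X) (T := t)
    (W := fun τ y => e * stefanTemperature Φ f ρ s τ y - ε * caloricParabola X₀ τ y)
    h.continuous_front.continuousOn continuousOn_const
    (h.continuous_sub_caloricParabola e ε X₀).continuousOn ?_ ?_ ?_ ?_
    t ⟨ht.1.le, le_rfl⟩ x ⟨hx, hxX⟩)
  · intro y hy
    have hΦ : Φ y = 0 :=
      h.initial.eq_zero_of_le_abs y (by rw [← h.front_zero]; exact hy.1.trans (le_abs_self y))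
    rw [stefanTemperature_of_nonpos le_rfl, hΦ, mul_zero, zero_sub, neg_nonpos]
    exact mul_nonneg hε.le (caloricParabola_pos X₀ y le_rfl).le
  · intro τ hτ
    have hpos : 0 < ε * (2 * τ + 1) := mul_pos hε (by linarith [hτ.1])
    have hle := hB τ hτ.2 X
    rw [caloricParabola]
    linarith
  · intro τ hτ _
    have hτδ : τ ∈ Ioo 0 δ := ⟨hτ.1, hτ.2.trans_lt ht.2⟩
    refine ⟨_, ?_, hasDerivWithinAt_sub_caloricParabola
      (h.hasDerivWithinAt_stefanPotential_front_right hτδ (hρ τ hτδ)) e ε X₀ hτ.1⟩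
    have hslope : ε * (2 * (s τ - X₀)) < 0 :=
      mul_neg_of_pos_of_neg hε (by linarith [h.front_lt (Ioo_subset_Icc_self hτδ)])
    linarith
  · intro τ hτ y hy
    exact h.hasHeatDerivAt_sub_caloricParabola e ε X₀ hτ.1 ((h.front_pos τ).trans hy.1) hy.1.ne'

end IsStefanDensity

namespace SolvesBoundaryEquations

theorem stefanPotential_of_front_le (h : SolvesBoundaryEquations p Φ f ρ s L M s₁ R δ)
    (ht : t ∈ Ioo 0 δ) (hx : s t ≤ x) : stefanPotential heatKernel Φ f ρ s t x = 0 := by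
  have hsigned : ∀ e : ℝ, |e| = 1 → e * stefanPotential heatKernel Φ f ρ s t x ≤ 0 := by
    intro e he
    refine le_of_forall_pos_le_add_mul (c := caloricParabola (s₁ + R * δ + 1) t x) fun ε hε => ?_
    rw [zero_add, ← stefanTemperature_of_pos ht.1]
    exact h.mul_stefanTemperature_le_caloricParabola h.speed_eq he hε ht hx
  have hle := hsigned 1 abs_one
  have hge := hsigned (-1) (by rw [abs_neg, abs_one])
  linarith

theorem stefanPotential_nonneg (h : SolvesBoundaryEquations p Φ f ρ s L M s₁ R δ)
    (ht : t ∈ Ioo 0 δ) (hx : x ∈ Icc 0 (s t)) : 0 ≤ stefanPotential heatKernel Φ f ρ s t x := by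
  suffices -1 * stefanPotential heatKernel Φ f ρ s t x ≤ 0 by linarith
  refine le_of_forall_pos_le_add_mul (c := caloricParabola 1 t x) fun ε hε => ?_
  rw [zero_add, ← stefanTemperature_of_pos ht.1]
  have hbarrier : ∀ τ y : ℝ, 0 ≤ τ → 0 ≤ ε * caloricParabola 1 τ y := fun τ y hτ =>
    mul_nonneg hε.le (caloricParabola_pos 1 y hτ).le
  refine sub_nonpos.1 (heat_subsolution_nonpos (a := fun _ => 0) (b := s) (T := t)
    (W := fun τ y => -1 * stefanTemperature Φ f ρ s τ y - ε * caloricParabola 1 τ y)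
    continuousOn_const h.continuous_front.continuousOn
    (h.continuous_sub_caloricParabola (-1) ε 1).continuousOn ?_ ?_ ?_ ?_
    t ⟨ht.1.le, le_rfl⟩ x hx)
  · intro y _
    rw [stefanTemperature_of_nonpos le_rfl]
    linarith [h.initial.nonneg y, hbarrier 0 y le_rfl]
  · intro τ hτ
    rw [stefanTemperature_of_pos hτ.1,
      h.stefanPotential_of_front_le ⟨hτ.1, hτ.2.trans_lt ht.2⟩ le_rfl]
    linarith [hbarrier τ (s τ) hτ.1.le]
  · intro τ hτ _
    refine ⟨_, ?_, IsStefanDensity.hasDerivWithinAt_sub_caloricParabola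
      (h.hasDerivWithinAt_stefanPotential_zero ⟨hτ.1, hτ.2.trans_lt ht.2⟩) (-1) ε 1 hτ.1⟩
    linarith [h.flux_nonneg τ]
  · intro τ hτ y hy
    exact h.hasHeatDerivAt_sub_caloricParabola (-1) ε 1 hτ.1 hy.1 hy.2.ne

theorem zero_mem_Icc (h : SolvesBoundaryEquations p Φ f ρ s L M s₁ R δ) (t : ℝ) :
    (0 : ℝ) ∈ Icc 0 (s t) :=
  left_mem_Icc.2 (h.front_pos t).le

theorem front_mem_Icc (h : SolvesBoundaryEquations p Φ f ρ s L M s₁ R δ) (t : ℝ) :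
    s t ∈ Icc 0 (s t) :=
  right_mem_Icc.2 (h.front_pos t).le

theorem hasDerivAt_extendedTemperature_zero (h : SolvesBoundaryEquations p Φ f ρ s L M s₁ R δ)
    (ht : t ∈ Ioo 0 δ) : HasDerivAt (extendedTemperature Φ f ρ s t) (-f t) 0 := by
  have hzero := extendedTemperature_of_mem_Icc (Φ := Φ) (f := f) (ρ := ρ) ht.1 (h.zero_mem_Icc t)
  rw [← hasDerivWithinAt_univ, ← Iic_union_Ici (a := (0 : ℝ))]
  refine HasDerivWithinAt.union ?_ ?_
  · have hline : HasDerivWithinAt (fun x => stefanPotential heatKernel Φ f ρ s t 0 - f t * x)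
        (-f t) (Iic 0) 0 := ((hasDerivAt_const_mul (f t)).const_sub _).hasDerivWithinAt
    refine hline.congr (fun y hy => ?_) (by rw [hzero, mul_zero, sub_zero])
    rcases (show y ≤ 0 from hy).eq_or_lt with rfl | hneg
    · rw [hzero, mul_zero, sub_zero]
    · exact extendedTemperature_of_neg ht.1 hneg
  · refine (h.hasDerivWithinAt_stefanPotential_zero ht).congr_of_eventuallyEq ?_ hzero
    filter_upwards [self_mem_nhdsWithin, nhdsWithin_le_nhds (gt_mem_nhds (h.front_pos t))]
      with y hy₀ hys using extendedTemperature_of_mem_Icc ht.1 ⟨hy₀, hys.le⟩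

theorem hasDerivAt_extendedTemperature_front (h : SolvesBoundaryEquations p Φ f ρ s L M s₁ R δ)
    (ht : t ∈ Ioo 0 δ) : HasDerivAt (extendedTemperature Φ f ρ s t) (-ρ t) (s t) := by
  have hfront := extendedTemperature_of_mem_Icc (Φ := Φ) (f := f) (ρ := ρ) ht.1 (h.front_mem_Icc t)
  have hzero := hfront.trans (h.stefanPotential_of_front_le ht le_rfl)
  rw [← hasDerivWithinAt_univ, ← Iic_union_Ici (a := s t)]
  refine HasDerivWithinAt.union ?_ ?_
  · refine (h.hasDerivWithinAt_stefanPotential_front_left ht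
      (h.speed_eq t ht)).congr_of_eventuallyEq ?_ hfront
    filter_upwards [self_mem_nhdsWithin, nhdsWithin_le_nhds (lt_mem_nhds (h.front_pos t))]
      with y hys hy₀ using extendedTemperature_of_mem_Icc ht.1 ⟨hy₀.le, hys⟩
  · have hline : HasDerivWithinAt (fun x => -ρ t * (x - s t)) (-ρ t) (Ici (s t)) (s t) := by
      simpa only [id, mul_one] using
        (((hasDerivAt_id (s t)).sub_const (s t)).const_mul (-ρ t)).hasDerivWithinAt
    refine hline.congr (fun y hy => ?_) (by rw [hzero, sub_self, mul_zero])
    rcases (show s t ≤ y from hy).eq_or_lt with hys | hys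
    · rw [← hys, hzero, sub_self, mul_zero]
    · exact extendedTemperature_of_front_lt ht.1 (h.front_pos t).le hys

theorem hasDerivAt_extendedTemperature_space (h : SolvesBoundaryEquations p Φ f ρ s L M s₁ R δ)
    (ht : t ∈ Ioo 0 δ) (hx : x ∈ Icc 0 (s t)) :
    HasDerivAt (extendedTemperature Φ f ρ s t) (interiorGradient Φ f ρ s t x) x := by
  rcases hx.1.eq_or_lt with rfl | hx₀
  · rw [h.interiorGradient_zero]
    exact h.hasDerivAt_extendedTemperature_zero ht
  rcases hx.2.eq_or_lt with rfl | hxs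
  · rw [h.interiorGradient_front (h.speed_eq t ht)]
    exact h.hasDerivAt_extendedTemperature_front ht
  rw [← h.stefanPotentialDx_of_mem_Ioo ⟨hx₀, hxs⟩]
  refine (h.hasDerivAt_stefanPotential_space ht.1 hx₀ hxs.ne).congr_of_eventuallyEq ?_
  filter_upwards [Ioo_mem_nhds hx₀ hxs] with y hy
  exact extendedTemperature_of_mem_Icc ht.1 (Ioo_subset_Icc_self hy)

theorem hasDerivAt_extendedTemperature_time (h : SolvesBoundaryEquations p Φ f ρ s L M s₁ R δ)
    (ht : 0 < t) (hx : x ∈ Ioo 0 (s t)) :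
    HasDerivAt (fun τ => extendedTemperature Φ f ρ s τ x)
      (stefanPotential heatKernelDxx Φ f ρ s t x) t := by
  refine (h.hasDerivAt_stefanPotential_time ht hx.1 hx.2.ne).congr_of_eventuallyEq ?_
  filter_upwards [lt_mem_nhds ht, (h.continuous_front.tendsto t).eventually (lt_mem_nhds hx.2)]
    with τ hτ hxτ using extendedTemperature_of_mem_Icc hτ ⟨hx.1.le, hxτ.le⟩

theorem hasDerivAt_deriv_extendedTemperature (h : SolvesBoundaryEquations p Φ f ρ s L M s₁ R δ)
    (ht : t ∈ Ioo 0 δ) (hx : x ∈ Ioo 0 (s t)) :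
    HasDerivAt (deriv (extendedTemperature Φ f ρ s t))
      (stefanPotential heatKernelDxx Φ f ρ s t x) x := by
  refine (h.hasDerivAt_stefanPotentialDx_space ht.1 hx.1 hx.2.ne).congr_of_eventuallyEq ?_
  filter_upwards [Ioo_mem_nhds hx.1 hx.2] with y hy
  rw [(h.hasDerivAt_extendedTemperature_space ht (Ioo_subset_Icc_self hy)).deriv,
    h.stefanPotentialDx_of_mem_Ioo hy]

theorem extendedTemperature_eq_stefanTemperature (ht : 0 ≤ t) (hx : x ∈ Icc 0 (s t)) :
    extendedTemperature Φ f ρ s t x = stefanTemperature Φ f ρ s t x := by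
  rcases ht.eq_or_lt with rfl | ht
  · rw [extendedTemperature_of_nonpos le_rfl, stefanTemperature_of_nonpos le_rfl]
  · rw [extendedTemperature_of_mem_Icc ht hx, stefanTemperature_of_pos ht]

theorem extendedTemperature_nonneg (h : SolvesBoundaryEquations p Φ f ρ s L M s₁ R δ)
    (ht : t ∈ Ico 0 δ) (hx : x ∈ Icc 0 (s t)) : 0 ≤ extendedTemperature Φ f ρ s t x := by
  rcases ht.1.eq_or_lt with rfl | ht₀
  · rw [extendedTemperature_of_nonpos le_rfl]
    exact h.initial.nonneg x
  · rw [extendedTemperature_of_mem_Icc ht₀ hx]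
    exact h.stefanPotential_nonneg ⟨ht₀, ht.2⟩ hx

theorem isSolOn (h : SolvesBoundaryEquations p Φ f ρ s L M s₁ R δ) (hT : T ∈ Ioo 0 δ) :
    IsSolOn p s₁ Φ T s (extendedTemperature Φ f ρ s) := by
  have hsub : ∀ {t}, t ∈ Ioc 0 T → t ∈ Ioo 0 δ := fun ht => ⟨ht.1, ht.2.trans_lt hT.2⟩
  have htime := fun t (ht : t ∈ Ioc 0 T) x (hx : x ∈ Ioo 0 (s t)) =>
    h.hasDerivAt_extendedTemperature_time ht.1 hx
  have hspace := fun t (ht : t ∈ Ioc 0 T) x (hx : x ∈ Icc 0 (s t)) =>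
    h.hasDerivAt_extendedTemperature_space (hsub ht) hx
  have hspace₂ := fun t (ht : t ∈ Ioc 0 T) x (hx : x ∈ Ioo 0 (s t)) =>
    h.hasDerivAt_deriv_extendedTemperature (hsub ht) hx
  have hcont : ContinuousOn (fun q : ℝ × ℝ => stefanPotential heatKernelDxx Φ f ρ s q.1 q.2)
      {q : ℝ × ℝ | q.1 ∈ Ioc 0 T ∧ q.2 ∈ Ioo 0 (s q.1)} := fun q hq =>
    (h.continuousAt_stefanPotential continuousOffOrigin_heatKernelDxx hq.1.1 hq.2.1
      hq.2.2.ne).continuousWithinAt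
  exact
    { T_pos := hT.1
      s_cont := h.continuous_front.continuousOn
      s_diff := fun t ht => (h.hasDerivAt_front t (hsub ht)).differentiableAt
      s_deriv_cont := (h.speed.continuousOn.mono fun t ht => hsub ht).congr fun t ht =>
        (h.hasDerivAt_front t (hsub ht)).deriv
      s_pos := fun t _ => h.front_pos t
      ut_diff := fun t ht x hx => (htime t ht x hx).differentiableAt
      ux_diff := fun t ht x hx => (hspace t ht x (Ioo_subset_Icc_self hx)).differentiableAt
      uxx_diff := fun t ht x hx => (hspace₂ t ht x hx).differentiableAt
      ut_cont := hcont.congr fun q hq => (htime q.1 hq.1 q.2 hq.2).deriv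
      uxx_cont := hcont.congr fun q hq => (hspace₂ q.1 hq.1 q.2 hq.2).deriv
      ux_cont := ContinuousOn.congr (f := fun q : ℝ × ℝ => interiorGradient Φ f ρ s q.1 q.2)
        (fun q hq => (h.continuousAt_interiorGradient (hsub hq.1)).continuousWithinAt)
        fun q hq => (hspace q.1 hq.1 q.2 hq.2).deriv
      u_cont := h.continuous_stefanTemperature.continuousOn.congr fun q hq =>
        extendedTemperature_eq_stefanTemperature hq.1.1 hq.2
      u_nonneg := fun t ht x hx => h.extendedTemperature_nonneg ⟨ht.1, ht.2.trans_lt hT.2⟩ hx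
      heat := fun t ht x hx => by rw [(htime t ht x hx).deriv, (hspace₂ t ht x hx).deriv]
      bc_zero := fun t ht => by
        have hzero := extendedTemperature_of_mem_Icc (Φ := Φ) (f := f) (ρ := ρ) ht.1
          (h.zero_mem_Icc t)
        rw [(h.hasDerivAt_extendedTemperature_zero (hsub ht)).deriv, neg_neg, hzero]
        exact h.flux_eq t (hsub ht) (h.stefanPotential_nonneg (hsub ht) (h.zero_mem_Icc t))
      bc_free := fun t ht => by
        rw [extendedTemperature_of_mem_Icc ht.1 (h.front_mem_Icc t),
          h.stefanPotential_of_front_le (hsub ht) le_rfl]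
      stefan := fun t ht => by
        rw [(h.hasDerivAt_front t (hsub ht)).deriv,
          (h.hasDerivAt_extendedTemperature_front (hsub ht)).deriv, neg_neg]
      init := fun x _ => extendedTemperature_of_nonpos le_rfl
      init_s := h.front_zero }

end SolvesBoundaryEquations

end BoundaryEquations

section LayerPotentialAlongCurve

variable {ρ ρ' q q' g : ℝ → ℝ} {k : ℝ → ℝ → ℝ} {R C D E δ t x x' : ℝ}

theorem abs_heatKernelDx_increment_le (hq : ∀ y z, |q y - q z| ≤ R * |y - z|) (t r : ℝ) :
    |heatKernelDx r (q t - q (t - r))| ≤ R / 2 * gaussCoeff r := by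
  rcases le_or_gt r 0 with hr | hr
  · rw [heatKernelDx_of_nonpos hr, gaussCoeff_of_nonpos hr, abs_zero, mul_zero]
  · refine abs_heatKernelDx_le_of_abs_le_mul ((hq _ _).trans_eq ?_)
    rw [sub_sub_cancel, abs_of_pos hr]

theorem abs_heatKernelDx_increment_sub_le
    (hqq' : ∀ y z, |q y - q' y - (q z - q' z)| ≤ E * |y - z|) (t r : ℝ) :
    |heatKernelDx r (q t - q (t - r)) - heatKernelDx r (q' t - q' (t - r))| ≤
      3 / 2 * E * gaussCoeff r := by
  rcases le_or_gt r 0 with hr | hr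
  · simp only [heatKernelDx_of_nonpos hr, gaussCoeff_of_nonpos hr, sub_zero, abs_zero, mul_zero,
      le_refl]
  · refine abs_heatKernelDx_sub_le_of_abs_sub_le_mul ?_
    have hincr := hqq' t (t - r)
    rwa [sub_sub_cancel, abs_of_pos hr, sub_sub_sub_comm] at hincr

namespace IsLayerDensity

theorem abs_layerPotential_sub_le (h : IsLayerDensity ρ R δ) (h' : IsLayerDensity ρ' R δ)
    (hkm : Measurable (Function.uncurry k)) (hq : Measurable q) (hq' : Measurable q')
    (ht : 0 ≤ t) (hC : 0 ≤ C) (hD : 0 ≤ D)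
    (hk : ∀ r, |k r (x - q (t - r))| ≤ C * gaussCoeff r)
    (hk' : ∀ r, |k r (x' - q' (t - r))| ≤ C * gaussCoeff r)
    (hkk' : ∀ r, |k r (x - q (t - r)) - k r (x' - q' (t - r))| ≤ D * gaussCoeff r)
    (hρ : ∀ y, |ρ y - ρ' y| ≤ E) :
    |layerPotential k ρ q t x - layerPotential k ρ' q' t x'| ≤ (R * D + E * C) * √t := by
  rw [layerPotential_eq_integral, layerPotential_eq_integral]
  exact h.abs_integral_mul_sub_le h' ht hC hD
    (hkm.comp (measurable_id.prodMk (by fun_prop : Measurable fun r => x - q (t - r))))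
    (hkm.comp (measurable_id.prodMk (by fun_prop : Measurable fun r => x' - q' (t - r))))
    hk hk' (fun r _ => hkk' r) hρ

theorem continuous_layerPotential_heatKernelDx_along (h : IsLayerDensity ρ R δ)
    (hq : Continuous q) (hg : Continuous g)
    (hk : ∀ t r, |heatKernelDx r (g t - q (t - r))| ≤ C * gaussCoeff r) :
    Continuous fun t => layerPotential heatKernelDx ρ q t (g t) := by
  refine continuous_iff_continuousAt.2 fun t => ?_
  have hqm := hq.measurable
  simp only [layerPotential_eq_integral]
  refine (h.continuousAt_integral_mul (k := fun z r => heatKernelDx r (g z.1 - q (z.1 - r)))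
    (z₀ := (t, 0)) (fun z => measurable_heatKernelDx measurable_id (by fun_prop))
    (fun z => hk z.1) fun r hr => ?_).comp (f := fun t : ℝ => (t, (0 : ℝ))) (by fun_prop)
  exact (continuousOffOrigin_heatKernelDx fun h0 => hr.ne' (Prod.ext_iff.1 h0).1).comp
    (f := fun z : ℝ × ℝ => (r, g z.1 - q (z.1 - r))) (by fun_prop)

end IsLayerDensity

end LayerPotentialAlongCurve

section FrontOfSpeed

/-- The front starting at `s₁` and moving with speed `ρ`. -/
def frontOfSpeed (s₁ : ℝ) (ρ : ℝ → ℝ) (y : ℝ) : ℝ := s₁ + ∫ z in (0 : ℝ)..y, ρ z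

variable {ρ ρ' : ℝ → ℝ} {R E δ s₁ t : ℝ}

theorem frontOfSpeed_zero (s₁ : ℝ) (ρ : ℝ → ℝ) : frontOfSpeed s₁ ρ 0 = s₁ := by
  rw [frontOfSpeed, intervalIntegral.integral_same, add_zero]

namespace IsLayerDensity

theorem sub (h : IsLayerDensity ρ R δ) (h' : IsLayerDensity ρ' R δ)
    (hE : ∀ y, |ρ y - ρ' y| ≤ E) : IsLayerDensity (fun y => ρ y - ρ' y) E δ where
  continuousOn := h.continuousOn.sub h'.continuousOn
  abs_le := hE
  eq_zero_of_notMem := fun y hy => by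
    rw [h.eq_zero_of_notMem y hy, h'.eq_zero_of_notMem y hy, sub_zero]

theorem abs_frontOfSpeed_sub_le (h : IsLayerDensity ρ R δ) (s₁ y z : ℝ) :
    |frontOfSpeed s₁ ρ y - frontOfSpeed s₁ ρ z| ≤ R * |y - z| := by
  rw [frontOfSpeed, frontOfSpeed, add_sub_add_left_eq_sub,
    intervalIntegral.integral_interval_sub_left h.integrable.intervalIntegrable
      h.integrable.intervalIntegrable]
  exact intervalIntegral.norm_integral_le_of_norm_le_const (f := ρ) (C := R)
    fun x _ => h.abs_le x

theorem integral_abs_le (h : IsLayerDensity ρ R δ) (hδ : 0 ≤ δ) : ∫ x, |ρ x| ≤ R * δ := by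
  have hsupp : ∫ x, |ρ x| = ∫ x in Ioo 0 δ, |ρ x| :=
    (setIntegral_eq_integral_of_forall_compl_eq_zero fun x hx => by
      rw [h.eq_zero_of_notMem x hx, abs_zero]).symm
  calc ∫ x, |ρ x| ≤ ∫ _ in Ioo 0 δ, R := by
        rw [hsupp]
        exact setIntegral_mono h.integrable.abs.integrableOn
          (integrableOn_const measure_Ioo_lt_top.ne) h.abs_le
    _ = R * δ := by simp [hδ, mul_comm]

theorem abs_frontOfSpeed_sub_start_le (h : IsLayerDensity ρ R δ) (hδ : 0 ≤ δ) (s₁ y : ℝ) :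
    |frontOfSpeed s₁ ρ y - s₁| ≤ R * δ := by
  rw [frontOfSpeed, add_sub_cancel_left]
  exact (intervalIntegral.norm_integral_le_integral_norm_uIoc.trans
    (setIntegral_le_integral h.integrable.norm (ae_of_all _ fun x => norm_nonneg _))).trans
    (h.integral_abs_le hδ)

theorem hasDerivAt_frontOfSpeed (h : IsLayerDensity ρ R δ) (s₁ : ℝ) (ht : t ∈ Ioo 0 δ) :
    HasDerivAt (frontOfSpeed s₁ ρ) (ρ t) t :=
  (intervalIntegral.integral_hasDerivAt_right h.integrable.intervalIntegrable
    h.measurable.stronglyMeasurable.stronglyMeasurableAtFilter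
    (h.continuousAt ht.1.ne' ht.2.ne)).const_add s₁

theorem frontOfSpeed_sub_frontOfSpeed (h : IsLayerDensity ρ R δ) (h' : IsLayerDensity ρ' R δ)
    (s₁ y : ℝ) : frontOfSpeed s₁ ρ y - frontOfSpeed s₁ ρ' y =
      frontOfSpeed s₁ (fun z => ρ z - ρ' z) y - s₁ := by
  rw [frontOfSpeed, frontOfSpeed, frontOfSpeed, intervalIntegral.integral_sub
    h.integrable.intervalIntegrable h'.integrable.intervalIntegrable]
  ring

end IsLayerDensity

end FrontOfSpeed

section BoundaryEstimates

variable {Φ f ρ s f' ρ' s' : ℝ → ℝ} {L M s₁ R δ a E F t : ℝ}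

theorem abs_stefanPotential_sub_le {k : ℝ → ℝ → ℝ} {x x' b c d e : ℝ}
    (hinitial : |initialPotential k Φ t x - initialPotential k Φ t x'| ≤ b)
    (hflux : |layerPotential k f (fun _ => 0) t x - layerPotential k f' (fun _ => 0) t x'| ≤ c)
    (hfront : |layerPotential k ρ s t x - layerPotential k ρ' s' t x'| ≤ d)
    (hmirror : |layerPotential k ρ (fun y => -s y) t x -
      layerPotential k ρ' (fun y => -s' y) t x'| ≤ e) :
    |stefanPotential k Φ f ρ s t x - stefanPotential k Φ f' ρ' s' t x'| ≤ b + 2 * c + d + e := by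
  rw [abs_le] at hinitial hflux hfront hmirror
  rw [stefanPotential, stefanPotential, abs_le]
  constructor <;> linarith [hinitial.1, hinitial.2]

namespace IsStefanDensity

theorem abs_heatKernelDx_flux_le (ha : 0 < a) (hs : ∀ y, a ≤ s y) (t r : ℝ) :
    |heatKernelDx r (s t - 0)| ≤ 2 / a * gaussCoeff r :=
  abs_heatKernelDx_le_of_le_abs ha (by rw [sub_zero]; exact (hs t).trans (le_abs_self _))

theorem abs_heatKernelDx_mirror_le (ha : 0 < a) (hs : ∀ y, a ≤ s y) (t r : ℝ) :
    |heatKernelDx r (s t - -s (t - r))| ≤ 2 / a * gaussCoeff r :=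
  abs_heatKernelDx_le_of_le_abs ha (by
    rw [sub_neg_eq_add]
    exact (by linarith [hs t, hs (t - r)] : a ≤ _).trans (le_abs_self _))

theorem abs_stefanPotentialDx_front_le (h : IsStefanDensity Φ f ρ s L M s₁ R δ) (ha : 0 < a)
    (hs : ∀ y, a ≤ s y) (ht : 0 < t) :
    |stefanPotential heatKernelDx Φ f ρ s t (s t)| ≤ L + (R * (6 / a) + R * (R / 2)) * √t := by
  have hR := h.flux.bound_nonneg
  have hinitial := abs_le.1 (h.initial.abs_initialPotential_heatKernelDx_le ht (s t))
  have hflux := abs_le.1 (h.flux.abs_layerPotential_le (q := fun _ => 0) ht.le (by positivity)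
    (abs_heatKernelDx_flux_le ha hs t))
  have hfront := abs_le.1 (h.speed.abs_layerPotential_le ht.le (by positivity)
    (abs_heatKernelDx_increment_le h.abs_front_sub_le t))
  have hmirror := abs_le.1 (h.speed.abs_layerPotential_le (q := fun y => -s y) ht.le
    (by positivity) (abs_heatKernelDx_mirror_le ha hs t))
  have hsum : R * (6 / a) * √t = 3 * (R * (2 / a) * √t) := by ring
  rw [stefanPotential, abs_le, add_mul, hsum]
  constructor <;> linarith [hinitial.1, hinitial.2]

theorem continuousOn_stefanPotentialDx_front (h : IsStefanDensity Φ f ρ s L M s₁ R δ)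
    (ha : 0 < a) (hs : ∀ y, a ≤ s y) :
    ContinuousOn (fun t => stefanPotential heatKernelDx Φ f ρ s t (s t)) (Ioi 0) := by
  have hsc := h.continuous_front
  have hinitial : ContinuousOn (fun t => initialPotential heatKernelDx Φ t (s t)) (Ioi 0) :=
    fun t ht => ((h.initial.continuousAt_initialPotential (z := (t, s t))
      continuousOffOrigin_heatKernelDx ht).comp (f := fun t => (t, s t))
      (by fun_prop)).continuousWithinAt
  have hflux := h.flux.continuous_layerPotential_heatKernelDx_along continuous_const hsc
    (abs_heatKernelDx_flux_le ha hs)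
  have hfront := h.speed.continuous_layerPotential_heatKernelDx_along hsc hsc
    (abs_heatKernelDx_increment_le h.abs_front_sub_le)
  have hmirror := h.speed.continuous_layerPotential_heatKernelDx_along hsc.neg hsc
    (abs_heatKernelDx_mirror_le ha hs)
  exact ((hinitial.add (hflux.const_mul 2).continuousOn).sub hfront.continuousOn).sub
    hmirror.continuousOn

theorem abs_stefanPotential_zero_sub_le (h : IsStefanDensity Φ f ρ s L M s₁ R δ)
    (h' : IsStefanDensity Φ f' ρ' s' L M s₁ R δ) (ha : 0 < a) (hs : ∀ y, a ≤ s y)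
    (hs' : ∀ y, a ≤ s' y) (hf : ∀ y, |f y - f' y| ≤ F) (hρ : ∀ y, |ρ y - ρ' y| ≤ E)
    (hss' : ∀ y, |s y - s' y| ≤ E) (ht : 0 < t) :
    |stefanPotential heatKernel Φ f ρ s t 0 - stefanPotential heatKernel Φ f' ρ' s' t 0| ≤
      (2 * F + (4 * (R / a) + 2) * E) * √t := by
  have hE : 0 ≤ E := (abs_nonneg _).trans (hρ 0)
  have hsm := h.continuous_front.measurable
  have hsm' := h'.continuous_front.measurable
  have hkm : Measurable (Function.uncurry heatKernel) :=
    measurable_heatKernel measurable_fst measurable_snd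
  have hk : ∀ r d, |heatKernel r d| ≤ 1 * gaussCoeff r := fun r d => by
    rw [one_mul]; exact abs_heatKernel_le_gaussCoeff r d
  have hmirrorKernel : ∀ r, |heatKernel r (s (t - r)) - heatKernel r (s' (t - r))| ≤
      2 / a * E * gaussCoeff r := fun r => by
    have hcoeff := gaussCoeff_nonneg r
    calc _ ≤ 2 / a * gaussCoeff r * |s (t - r) - s' (t - r)| :=
          abs_heatKernel_sub_le_of_le ha (hs _) (hs' _)
      _ ≤ 2 / a * gaussCoeff r * E := by gcongr; exact hss' _
      _ = 2 / a * E * gaussCoeff r := by ring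
  have hflux := h.flux.abs_layerPotential_sub_le (q := fun _ => 0) (q' := fun _ => 0) (x := 0)
    (x' := 0) (D := 0) h'.flux hkm measurable_const measurable_const ht.le zero_le_one le_rfl
    (fun r => hk r _) (fun r => hk r _) (fun r => by rw [sub_self, abs_zero, zero_mul]) hf
  have hfront := h.speed.abs_layerPotential_sub_le (x := 0) (x' := 0) h'.speed hkm hsm hsm' ht.le
    zero_le_one (by positivity : 0 ≤ 2 / a * E) (fun r => hk r _) (fun r => hk r _)
    (fun r => by simpa only [zero_sub, heatKernel_neg] using hmirrorKernel r) hρ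
  have hmirror := h.speed.abs_layerPotential_sub_le (q := fun y => -s y) (q' := fun y => -s' y)
    (x := 0) (x' := 0) h'.speed hkm hsm.neg hsm'.neg ht.le zero_le_one
    (by positivity : 0 ≤ 2 / a * E) (fun r => hk r _) (fun r => hk r _)
    (fun r => by simpa only [zero_sub, neg_neg] using hmirrorKernel r) hρ
  refine (abs_stefanPotential_sub_le (b := 0) (by rw [sub_self, abs_zero]) hflux hfront
    hmirror).trans_eq ?_
  ring

theorem abs_initialPotentialDx_front_sub_le (h : IsStefanDensity Φ f ρ s L M s₁ R δ)
    (h' : IsStefanDensity Φ f' ρ' s' L M s₁ R δ)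
    (hlip : ∀ y z, |s y - s' y - (s z - s' z)| ≤ E * |y - z|) (ht : 0 < t) :
    |initialPotential heatKernelDx Φ t (s t) - initialPotential heatKernelDx Φ t (s' t)| ≤
      2 * L * E * √t := by
  have hL := h.initial.lipschitz_nonneg
  have hfronts := hlip t 0
  rw [h.front_zero, h'.front_zero, sub_self, sub_zero, sub_zero, abs_of_pos ht] at hfronts
  calc _ ≤ L * |s t - s' t| * (2 / √t) := h.initial.abs_initialPotential_heatKernelDx_sub_le ht _ _
    _ ≤ L * (E * t) * (2 / √t) := by gcongr
    _ = 2 * L * E * (t / √t) := by ring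
    _ = 2 * L * E * √t := by rw [div_sqrt]

theorem abs_layerPotentialDx_flux_sub_le (h : IsStefanDensity Φ f ρ s L M s₁ R δ)
    (h' : IsStefanDensity Φ f' ρ' s' L M s₁ R δ) (ha : 0 < a) (hs : ∀ y, a ≤ s y)
    (hs' : ∀ y, a ≤ s' y) (hf : ∀ y, |f y - f' y| ≤ F) (hss' : ∀ y, |s y - s' y| ≤ E)
    (ht : 0 ≤ t) :
    |layerPotential heatKernelDx f (fun _ => 0) t (s t) -
      layerPotential heatKernelDx f' (fun _ => 0) t (s' t)| ≤
      (R * (6 / a ^ 2 * E) + F * (2 / a)) * √t := by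
  have hE : 0 ≤ E := (abs_nonneg _).trans (hss' 0)
  refine h.flux.abs_layerPotential_sub_le h'.flux
    (measurable_heatKernelDx measurable_fst measurable_snd) measurable_const measurable_const ht
    (by positivity) (by positivity) (abs_heatKernelDx_flux_le ha hs t)
    (abs_heatKernelDx_flux_le ha hs' t) (fun r => ?_) hf
  have hcoeff := gaussCoeff_nonneg r
  rw [sub_zero, sub_zero]
  calc _ ≤ 6 / a ^ 2 * gaussCoeff r * |s t - s' t| :=
        abs_heatKernelDx_sub_le_of_le ha (hs t) (hs' t)
    _ ≤ 6 / a ^ 2 * gaussCoeff r * E := by gcongr; exact hss' t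
    _ = 6 / a ^ 2 * E * gaussCoeff r := by ring

theorem abs_layerPotentialDx_mirror_sub_le (h : IsStefanDensity Φ f ρ s L M s₁ R δ)
    (h' : IsStefanDensity Φ f' ρ' s' L M s₁ R δ) (ha : 0 < a) (hs : ∀ y, a ≤ s y)
    (hs' : ∀ y, a ≤ s' y) (hρ : ∀ y, |ρ y - ρ' y| ≤ E) (hss' : ∀ y, |s y - s' y| ≤ E)
    (ht : 0 ≤ t) :
    |layerPotential heatKernelDx ρ (fun y => -s y) t (s t) -
      layerPotential heatKernelDx ρ' (fun y => -s' y) t (s' t)| ≤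
      (R * (6 / a ^ 2 * (2 * E)) + E * (2 / a)) * √t := by
  have hE : 0 ≤ E := (abs_nonneg _).trans (hss' 0)
  refine h.speed.abs_layerPotential_sub_le h'.speed
    (measurable_heatKernelDx measurable_fst measurable_snd) h.continuous_front.measurable.neg
    h'.continuous_front.measurable.neg ht (by positivity) (by positivity)
    (abs_heatKernelDx_mirror_le ha hs t) (abs_heatKernelDx_mirror_le ha hs' t) (fun r => ?_) hρ
  have hcoeff := gaussCoeff_nonneg r
  have hsum : |s t + s (t - r) - (s' t + s' (t - r))| ≤ 2 * E := by
    rw [add_sub_add_comm, two_mul]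
    exact (abs_add_le _ _).trans (add_le_add (hss' t) (hss' (t - r)))
  rw [sub_neg_eq_add, sub_neg_eq_add]
  calc _ ≤ 6 / a ^ 2 * gaussCoeff r * |s t + s (t - r) - (s' t + s' (t - r))| :=
        abs_heatKernelDx_sub_le_of_le ha (by linarith [hs t, hs (t - r)])
          (by linarith [hs' t, hs' (t - r)])
    _ ≤ 6 / a ^ 2 * gaussCoeff r * (2 * E) := by gcongr
    _ = 6 / a ^ 2 * (2 * E) * gaussCoeff r := by ring

theorem abs_stefanPotentialDx_front_sub_le (h : IsStefanDensity Φ f ρ s L M s₁ R δ)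
    (h' : IsStefanDensity Φ f' ρ' s' L M s₁ R δ) (ha : 0 < a) (hs : ∀ y, a ≤ s y)
    (hs' : ∀ y, a ≤ s' y) (hf : ∀ y, |f y - f' y| ≤ F) (hρ : ∀ y, |ρ y - ρ' y| ≤ E)
    (hss' : ∀ y, |s y - s' y| ≤ E)
    (hlip : ∀ y z, |s y - s' y - (s z - s' z)| ≤ E * |y - z|) (ht : 0 < t) :
    |stefanPotential heatKernelDx Φ f ρ s t (s t) -
      stefanPotential heatKernelDx Φ f' ρ' s' t (s' t)| ≤
      (4 * (F / a) + (2 * L + 24 * (R / a ^ 2) + 2 * R + 2 / a) * E) * √t := by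
  have hE : 0 ≤ E := (abs_nonneg _).trans (hρ 0)
  have hR := h.flux.bound_nonneg
  have hkm : Measurable (Function.uncurry heatKernelDx) :=
    measurable_heatKernelDx measurable_fst measurable_snd
  have hfront := h.speed.abs_layerPotential_sub_le h'.speed hkm h.continuous_front.measurable
    h'.continuous_front.measurable ht.le (by positivity : 0 ≤ R / 2)
    (by positivity : 0 ≤ 3 / 2 * E) (abs_heatKernelDx_increment_le h.abs_front_sub_le t)
    (abs_heatKernelDx_increment_le h'.abs_front_sub_le t)
    (abs_heatKernelDx_increment_sub_le hlip t) hρ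
  refine (abs_stefanPotential_sub_le (h.abs_initialPotentialDx_front_sub_le h' hlip ht)
    (h.abs_layerPotentialDx_flux_sub_le h' ha hs hs' hf hss' ht.le) hfront
    (h.abs_layerPotentialDx_mirror_sub_le h' ha hs hs' hρ hss' ht.le)).trans_eq ?_
  ring

end IsStefanDensity

end BoundaryEstimates

section TraceSpace

variable {p M R δ y : ℝ}

/-- The space in which the fixed-point argument takes place: bounded continuous functions of time
on `(0, δ)`. -/
abbrev TraceSpace (δ : ℝ) : Type := BoundedContinuousFunction (Ioo (0 : ℝ) δ) ℝ

/-- The extension of a trace by `0` to all times. -/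
def zeroExtension (g : TraceSpace δ) : ℝ → ℝ := Function.extend Subtype.val g 0

theorem zeroExtension_of_mem (g : TraceSpace δ) (hy : y ∈ Ioo 0 δ) :
    zeroExtension g y = g ⟨y, hy⟩ :=
  Subtype.val_injective.extend_apply g 0 ⟨y, hy⟩

theorem zeroExtension_of_notMem (g : TraceSpace δ) (hy : y ∉ Ioo 0 δ) : zeroExtension g y = 0 :=
  Function.extend_apply' _ _ _ fun ⟨z, hz⟩ => hy (hz ▸ z.2)

theorem continuousOn_zeroExtension (g : TraceSpace δ) :
    ContinuousOn (zeroExtension g) (Ioo 0 δ) := by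
  rw [continuousOn_iff_continuous_domRestrict]
  exact g.continuous.congr fun y => (zeroExtension_of_mem g y.2).symm

theorem abs_zeroExtension_sub_le (g g' : TraceSpace δ) (y : ℝ) :
    |zeroExtension g y - zeroExtension g' y| ≤ dist g g' := by
  by_cases hy : y ∈ Ioo 0 δ
  · rw [zeroExtension_of_mem g hy, zeroExtension_of_mem g' hy]
    exact BoundedContinuousFunction.dist_coe_le_dist (f := g) (g := g') ⟨y, hy⟩
  · rw [zeroExtension_of_notMem g hy, zeroExtension_of_notMem g' hy, sub_zero, abs_zero]
    exact dist_nonneg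

/-- The flux prescribed at `x = 0` by a candidate trace of the temperature there, truncated to
`[0, M + 1]` so that its `p`-th power is bounded and Lipschitz. -/
def truncatedFlux (p M : ℝ) (g : TraceSpace δ) (y : ℝ) : ℝ :=
  clamp 0 (M + 1) (zeroExtension g y) ^ p

/-- A candidate speed of the front, truncated to `[-R, R]`. -/
def truncatedSpeed (R : ℝ) (g : TraceSpace δ) (y : ℝ) : ℝ := clamp (-R) R (zeroExtension g y)

theorem truncatedFlux_nonneg (hM : 0 ≤ M) (g : TraceSpace δ) (y : ℝ) :
    0 ≤ truncatedFlux p M g y :=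
  rpow_nonneg (clamp_mem_Icc (by linarith) _).1 _

theorem isLayerDensity_truncatedFlux (hp : 0 < p) (hM : 0 ≤ M) (hR : (M + 1) ^ p ≤ R)
    (g : TraceSpace δ) : IsLayerDensity (truncatedFlux p M g) R δ where
  continuousOn := by
    have hclamp : Continuous (clamp 0 (M + 1)) := by fun_prop
    exact (hclamp.comp_continuousOn (continuousOn_zeroExtension g)).rpow_const
      fun _ _ => Or.inr hp.le
  abs_le := fun y => by
    have hmem := clamp_mem_Icc (by linarith : (0 : ℝ) ≤ M + 1) (zeroExtension g y)
    rw [abs_of_nonneg (truncatedFlux_nonneg hM g y)]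
    exact (rpow_le_rpow hmem.1 hmem.2 hp.le).trans hR
  eq_zero_of_notMem := fun y hy => by
    rw [truncatedFlux, zeroExtension_of_notMem g hy, clamp_of_mem ⟨le_rfl, by linarith⟩,
      zero_rpow hp.ne']

theorem isLayerDensity_truncatedSpeed (hR : 0 ≤ R) (g : TraceSpace δ) :
    IsLayerDensity (truncatedSpeed R g) R δ where
  continuousOn := by
    have hclamp : Continuous (clamp (-R) R) := by fun_prop
    exact hclamp.comp_continuousOn (continuousOn_zeroExtension g)
  abs_le := fun y => abs_le.2 (clamp_mem_Icc (by linarith) _)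
  eq_zero_of_notMem := fun y hy => by
    rw [truncatedSpeed, zeroExtension_of_notMem g hy, clamp_of_mem ⟨by linarith, hR⟩]

theorem abs_truncatedFlux_sub_le (hp : 1 ≤ p) (hM : 0 ≤ M) (g g' : TraceSpace δ) (y : ℝ) :
    |truncatedFlux p M g y - truncatedFlux p M g' y| ≤ p * (M + 1) ^ (p - 1) * dist g g' := by
  have hmem := clamp_mem_Icc (by linarith : (0 : ℝ) ≤ M + 1)
  refine (abs_rpow_sub_rpow_le hp (hmem _) (hmem _)).trans ?_
  gcongr
  exact (abs_clamp_sub_clamp_le _ _ _ _).trans (abs_zeroExtension_sub_le g g' y)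

theorem abs_truncatedSpeed_sub_le (R : ℝ) (g g' : TraceSpace δ) (y : ℝ) :
    |truncatedSpeed R g y - truncatedSpeed R g' y| ≤ dist g g' :=
  (abs_clamp_sub_clamp_le _ _ _ _).trans (abs_zeroExtension_sub_le g g' y)

end TraceSpace

section ContractionTime

/-- The conditions on the time span `δ` (and on the bound `R` for flux and speed) under which the
boundary equations define a contraction, for initial data that are `L`-Lipschitz, at most `M`, and
supported in `[0, s₁]` with `2 * b ≤ s₁`. -/
structure IsContractionTime (p L M b R δ : ℝ) : Prop where
  one_le : 1 ≤ p
  bound_nonneg : 0 ≤ M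
  b_pos : 0 < b
  flux_le : (M + 1) ^ p ≤ R
  pos : 0 < δ
  le_one : δ ≤ 1
  mul_le : R * δ ≤ b
  temperature_le : ∀ t ∈ Ioo 0 δ, (4 * L + 4 * R) * √t ≤ 1
  speed_le : ∀ t ∈ Ioo 0 δ, 2 * (L + (R * (6 / b) + R * (R / 2)) * √t) ≤ R
  temperature_contracts : ∀ t ∈ Ioo 0 δ,
    (2 * (p * (M + 1) ^ (p - 1)) + (4 * (R / b) + 2)) * √t ≤ 1 / 2
  speed_contracts : ∀ t ∈ Ioo 0 δ,
    2 * (4 * (p * (M + 1) ^ (p - 1) / b) + (2 * L + 24 * (R / b ^ 2) + 2 * R + 2 / b)) * √t ≤ 1 / 2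

theorem eventually_mul_sqrt_le {e : ℝ} (c : ℝ) (he : 0 < e) : ∀ᶠ t in 𝓝[>] (0 : ℝ), c * √t ≤ e := by
  have hcont : Continuous fun t : ℝ => c * √t := by fun_prop
  refine nhdsWithin_le_nhds ((hcont.tendsto 0).eventually (ge_mem_nhds ?_))
  rwa [sqrt_zero, mul_zero]

theorem exists_isContractionTime {p L M b : ℝ} (hp : 1 ≤ p) (hL : 0 ≤ L) (hM : 0 ≤ M)
    (hb : 0 < b) : ∃ R δ, IsContractionTime p L M b R δ := by
  obtain ⟨R, hR⟩ : ∃ R, R = 2 * L + 1 + (M + 1) ^ p := ⟨_, rfl⟩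
  have hpow : 0 ≤ (M + 1) ^ p := by positivity
  obtain ⟨δ, hδ, hall⟩ := (mem_nhdsGT_iff_exists_Ioo_subset (a := (0 : ℝ))).1 <|
    (eventually_mul_sqrt_le R hb).and <|
    (eventually_mul_sqrt_le (4 * L + 4 * R) one_pos).and <|
    (eventually_mul_sqrt_le (R * (6 / b) + R * (R / 2)) one_half_pos).and <|
    (eventually_mul_sqrt_le (2 * (p * (M + 1) ^ (p - 1)) + (4 * (R / b) + 2)) one_half_pos).and <|
    eventually_mul_sqrt_le (2 * (4 * (p * (M + 1) ^ (p - 1) / b) +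
      (2 * L + 24 * (R / b ^ 2) + 2 * R + 2 / b))) one_half_pos
  have hδ₀ : 0 < δ := hδ
  have hδ' : min 1 (δ / 2) ∈ Ioo 0 δ :=
    ⟨by positivity, (min_le_right _ _).trans_lt (half_lt_self hδ₀)⟩
  have hsub : ∀ t ∈ Ioo 0 (min 1 (δ / 2)), t ∈ Ioo 0 δ := fun t ht => ⟨ht.1, ht.2.trans hδ'.2⟩
  have hsqrt : min 1 (δ / 2) ≤ √(min 1 (δ / 2)) :=
    le_sqrt_of_sq_le (pow_le_of_le_one hδ'.1.le (min_le_left _ _) two_ne_zero)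
  refine ⟨R, min 1 (δ / 2), hp, hM, hb, by linarith, hδ'.1, min_le_left _ _,
    (mul_le_mul_of_nonneg_left hsqrt (by linarith)).trans (hall hδ').1,
    fun t ht => (hall (hsub t ht)).2.1, fun t ht => ?_,
    fun t ht => (hall (hsub t ht)).2.2.2.1, fun t ht => (hall (hsub t ht)).2.2.2.2⟩
  linarith [(hall (hsub t ht)).2.2.1]

end ContractionTime

section FixedPoint

variable {δ : ℝ}

/-- The front driven by the truncated speed of a pair of traces (temperature at `x = 0`, speed). -/
def traceFront (R s₁ : ℝ) (x : TraceSpace δ × TraceSpace δ) : ℝ → ℝ :=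
  frontOfSpeed s₁ (truncatedSpeed R x.2)

/-- The Stefan potential whose flux, speed and front are given by a pair of traces. -/
def tracePotential (k : ℝ → ℝ → ℝ) (p M R s₁ : ℝ) (Φ : ℝ → ℝ) (x : TraceSpace δ × TraceSpace δ) :
    ℝ → ℝ → ℝ :=
  stefanPotential k Φ (truncatedFlux p M x.1) (truncatedSpeed R x.2) (traceFront R s₁ x)

/-- The speed that the temperature generated by a pair of traces demands of the front. -/
def tracePotentialSpeed (p M R s₁ : ℝ) (Φ : ℝ → ℝ) (x : TraceSpace δ × TraceSpace δ) (t : ℝ) : ℝ :=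
  -2 * tracePotential heatKernelDx p M R s₁ Φ x t (traceFront R s₁ x t)

namespace IsContractionTime

variable {p L M b R s₁ t : ℝ} {Φ : ℝ → ℝ}

theorem R_nonneg (h : IsContractionTime p L M b R δ) : 0 ≤ R :=
  (rpow_nonneg (by linarith [h.bound_nonneg]) p).trans h.flux_le

theorem isLayerDensity_flux (h : IsContractionTime p L M b R δ) (g : TraceSpace δ) :
    IsLayerDensity (truncatedFlux p M g) R δ :=
  isLayerDensity_truncatedFlux (one_pos.trans_le h.one_le) h.bound_nonneg h.flux_le g

theorem le_traceFront (h : IsContractionTime p L M b R δ) (hs₁ : 2 * b ≤ s₁)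
    (x : TraceSpace δ × TraceSpace δ) (y : ℝ) : b ≤ traceFront R s₁ x y := by
  have hfront := (isLayerDensity_truncatedSpeed h.R_nonneg x.2).abs_frontOfSpeed_sub_start_le
    h.pos.le s₁ y
  have hmul := h.mul_le
  rw [traceFront]
  linarith [(abs_le.1 hfront).1]

theorem isStefanDensity (h : IsContractionTime p L M b R δ) (hΦ : IsInitialDensity Φ L M s₁)
    (hs₁ : 2 * b ≤ s₁) (x : TraceSpace δ × TraceSpace δ) :
    IsStefanDensity Φ (truncatedFlux p M x.1) (truncatedSpeed R x.2) (traceFront R s₁ x)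
      L M s₁ R δ where
  initial := hΦ
  flux := h.isLayerDensity_flux x.1
  speed := isLayerDensity_truncatedSpeed h.R_nonneg x.2
  abs_front_sub_le := (isLayerDensity_truncatedSpeed h.R_nonneg x.2).abs_frontOfSpeed_sub_le s₁
  front_pos := fun y => h.b_pos.trans_le (h.le_traceFront hs₁ x y)
  front_zero := frontOfSpeed_zero s₁ _

theorem abs_tracePotential_zero_le (h : IsContractionTime p L M b R δ)
    (hΦ : IsInitialDensity Φ L M s₁) (hs₁ : 2 * b ≤ s₁) (x : TraceSpace δ × TraceSpace δ)
    (ht : t ∈ Ioo 0 δ) : |tracePotential heatKernel p M R s₁ Φ x t 0| ≤ M + 1 := by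
  have hle := (h.isStefanDensity hΦ hs₁ x).abs_stefanTemperature_le (le_refl t) 0
  rw [stefanTemperature_of_pos ht.1] at hle
  exact hle.trans (add_le_add_right (h.temperature_le t ht) M)

theorem abs_tracePotentialSpeed_le (h : IsContractionTime p L M b R δ)
    (hΦ : IsInitialDensity Φ L M s₁) (hs₁ : 2 * b ≤ s₁) (x : TraceSpace δ × TraceSpace δ)
    (ht : t ∈ Ioo 0 δ) : |tracePotentialSpeed p M R s₁ Φ x t| ≤ R := by
  have hle := (h.isStefanDensity hΦ hs₁ x).abs_stefanPotentialDx_front_le h.b_pos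
    (h.le_traceFront hs₁ x) ht.1
  rw [tracePotentialSpeed, abs_mul, abs_neg, abs_two]
  exact (mul_le_mul_of_nonneg_left hle zero_le_two).trans (h.speed_le t ht)

theorem exists_boundaryMap (h : IsContractionTime p L M b R δ) (hΦ : IsInitialDensity Φ L M s₁)
    (hs₁ : 2 * b ≤ s₁) : ∃ F : TraceSpace δ × TraceSpace δ → TraceSpace δ × TraceSpace δ,
      ∀ x, ∀ t : Ioo 0 δ, (F x).1 t = tracePotential heatKernel p M R s₁ Φ x t 0 ∧
        (F x).2 t = tracePotentialSpeed p M R s₁ Φ x t := by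
  have htemperature (x : TraceSpace δ × TraceSpace δ) :
      ContinuousOn (fun t => tracePotential heatKernel p M R s₁ Φ x t 0) (Ioo 0 δ) := fun t ht =>
    (((h.isStefanDensity hΦ hs₁ x).continuousAt_stefanPotential_heatKernel (z := (t, 0)) ht.1).comp
      (f := fun t : ℝ => (t, (0 : ℝ))) (x := t) (by fun_prop)).continuousWithinAt
  have hspeed (x : TraceSpace δ × TraceSpace δ) :
      ContinuousOn (tracePotentialSpeed p M R s₁ Φ x) (Ioo 0 δ) :=
    (((h.isStefanDensity hΦ hs₁ x).continuousOn_stefanPotentialDx_front h.b_pos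
      (h.le_traceFront hs₁ x)).mono fun t ht => ht.1).const_mul _
  exact ⟨fun x => (BoundedContinuousFunction.ofNormedAddCommGroup _ (htemperature x).domRestrict
      (M + 1) fun t => h.abs_tracePotential_zero_le hΦ hs₁ x t.2,
    BoundedContinuousFunction.ofNormedAddCommGroup _ (hspeed x).domRestrict R
      fun t => h.abs_tracePotentialSpeed_le hΦ hs₁ x t.2), fun x t => ⟨rfl, rfl⟩⟩

theorem abs_truncatedFlux_sub_le_dist (h : IsContractionTime p L M b R δ)
    (x x' : TraceSpace δ × TraceSpace δ) (y : ℝ) :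
    |truncatedFlux p M x.1 y - truncatedFlux p M x'.1 y| ≤ p * (M + 1) ^ (p - 1) * dist x x' := by
  have hp := h.one_le
  have hM := h.bound_nonneg
  refine (abs_truncatedFlux_sub_le hp hM x.1 x'.1 y).trans ?_
  gcongr
  exact le_max_left _ _

theorem abs_truncatedSpeed_sub_le_dist (x x' : TraceSpace δ × TraceSpace δ) (y : ℝ) :
    |truncatedSpeed R x.2 y - truncatedSpeed R x'.2 y| ≤ dist x x' :=
  (abs_truncatedSpeed_sub_le R x.2 x'.2 y).trans (le_max_right _ _)

theorem isLayerDensity_speed_sub (h : IsContractionTime p L M b R δ)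
    (x x' : TraceSpace δ × TraceSpace δ) : IsLayerDensity
      (fun y => truncatedSpeed R x.2 y - truncatedSpeed R x'.2 y) (dist x x') δ :=
  (isLayerDensity_truncatedSpeed h.R_nonneg x.2).sub
    (isLayerDensity_truncatedSpeed h.R_nonneg x'.2) (abs_truncatedSpeed_sub_le_dist x x')

theorem traceFront_sub_traceFront (h : IsContractionTime p L M b R δ) (s₁ : ℝ)
    (x x' : TraceSpace δ × TraceSpace δ) (y : ℝ) : traceFront R s₁ x y - traceFront R s₁ x' y =
      frontOfSpeed s₁ (fun z => truncatedSpeed R x.2 z - truncatedSpeed R x'.2 z) y - s₁ :=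
  (isLayerDensity_truncatedSpeed h.R_nonneg x.2).frontOfSpeed_sub_frontOfSpeed
    (isLayerDensity_truncatedSpeed h.R_nonneg x'.2) s₁ y

theorem abs_traceFront_sub_le (h : IsContractionTime p L M b R δ) (s₁ : ℝ)
    (x x' : TraceSpace δ × TraceSpace δ) (y : ℝ) :
    |traceFront R s₁ x y - traceFront R s₁ x' y| ≤ dist x x' := by
  rw [h.traceFront_sub_traceFront]
  exact ((h.isLayerDensity_speed_sub x x').abs_frontOfSpeed_sub_start_le h.pos.le s₁ y).trans
    (mul_le_of_le_one_right dist_nonneg h.le_one)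

theorem abs_traceFront_sub_sub_le (h : IsContractionTime p L M b R δ) (s₁ : ℝ)
    (x x' : TraceSpace δ × TraceSpace δ) (y z : ℝ) :
    |traceFront R s₁ x y - traceFront R s₁ x' y - (traceFront R s₁ x z - traceFront R s₁ x' z)| ≤
      dist x x' * |y - z| := by
  rw [h.traceFront_sub_traceFront, h.traceFront_sub_traceFront, sub_sub_sub_cancel_right]
  exact (h.isLayerDensity_speed_sub x x').abs_frontOfSpeed_sub_le s₁ y z

theorem abs_tracePotential_zero_sub_le (h : IsContractionTime p L M b R δ)
    (hΦ : IsInitialDensity Φ L M s₁) (hs₁ : 2 * b ≤ s₁) (x x' : TraceSpace δ × TraceSpace δ)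
    (ht : t ∈ Ioo 0 δ) :
    |tracePotential heatKernel p M R s₁ Φ x t 0 - tracePotential heatKernel p M R s₁ Φ x' t 0| ≤
      1 / 2 * dist x x' :=
  calc _ ≤ (2 * (p * (M + 1) ^ (p - 1) * dist x x') + (4 * (R / b) + 2) * dist x x') * √t :=
        (h.isStefanDensity hΦ hs₁ x).abs_stefanPotential_zero_sub_le (h.isStefanDensity hΦ hs₁ x')
          h.b_pos (h.le_traceFront hs₁ x) (h.le_traceFront hs₁ x')
          (h.abs_truncatedFlux_sub_le_dist x x') (abs_truncatedSpeed_sub_le_dist x x')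
          (h.abs_traceFront_sub_le s₁ x x') ht.1
    _ = (2 * (p * (M + 1) ^ (p - 1)) + (4 * (R / b) + 2)) * √t * dist x x' := by ring
    _ ≤ 1 / 2 * dist x x' := by gcongr; exact h.temperature_contracts t ht

theorem abs_tracePotentialSpeed_sub_le (h : IsContractionTime p L M b R δ)
    (hΦ : IsInitialDensity Φ L M s₁) (hs₁ : 2 * b ≤ s₁) (x x' : TraceSpace δ × TraceSpace δ)
    (ht : t ∈ Ioo 0 δ) :
    |tracePotentialSpeed p M R s₁ Φ x t - tracePotentialSpeed p M R s₁ Φ x' t| ≤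
      1 / 2 * dist x x' := by
  have hle := (h.isStefanDensity hΦ hs₁ x).abs_stefanPotentialDx_front_sub_le
    (h.isStefanDensity hΦ hs₁ x') h.b_pos (h.le_traceFront hs₁ x) (h.le_traceFront hs₁ x')
    (h.abs_truncatedFlux_sub_le_dist x x') (abs_truncatedSpeed_sub_le_dist x x')
    (h.abs_traceFront_sub_le s₁ x x') (h.abs_traceFront_sub_sub_le s₁ x x') ht.1
  rw [tracePotentialSpeed, tracePotentialSpeed, ← mul_sub, abs_mul, abs_neg, abs_two]
  calc _ ≤ 2 * ((4 * (p * (M + 1) ^ (p - 1) * dist x x' / b) +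
          (2 * L + 24 * (R / b ^ 2) + 2 * R + 2 / b) * dist x x') * √t) :=
        mul_le_mul_of_nonneg_left hle zero_le_two
    _ = 2 * (4 * (p * (M + 1) ^ (p - 1) / b) + (2 * L + 24 * (R / b ^ 2) + 2 * R + 2 / b)) * √t *
          dist x x' := by ring
    _ ≤ 1 / 2 * dist x x' := by gcongr; exact h.speed_contracts t ht

theorem exists_fixedPoint (h : IsContractionTime p L M b R δ) (hΦ : IsInitialDensity Φ L M s₁)
    (hs₁ : 2 * b ≤ s₁) : ∃ x : TraceSpace δ × TraceSpace δ, ∀ t ∈ Ioo 0 δ,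
      zeroExtension x.1 t = tracePotential heatKernel p M R s₁ Φ x t 0 ∧
      zeroExtension x.2 t = tracePotentialSpeed p M R s₁ Φ x t := by
  obtain ⟨F, hF⟩ := h.exists_boundaryMap hΦ hs₁
  have hcontracting : ContractingWith (1 / 2) F := by
    refine ⟨by norm_num, LipschitzWith.of_dist_le_mul fun x x' => ?_⟩
    have hdist : 0 ≤ 1 / 2 * dist x x' := by positivity
    rw [show (((1 / 2 : NNReal) : NNReal) : ℝ) = 1 / 2 by norm_num, Prod.dist_eq]
    refine max_le ((BoundedContinuousFunction.dist_le hdist).2 fun t => ?_)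
      ((BoundedContinuousFunction.dist_le hdist).2 fun t => ?_)
    · rw [(hF x t).1, (hF x' t).1]
      exact h.abs_tracePotential_zero_sub_le hΦ hs₁ x x' t.2
    · rw [(hF x t).2, (hF x' t).2]
      exact h.abs_tracePotentialSpeed_sub_le hΦ hs₁ x x' t.2
  obtain ⟨x, hx⟩ : ∃ x, F x = x := ⟨_, hcontracting.fixedPoint_isFixedPt⟩
  refine ⟨x, fun t ht => ?_⟩
  rw [zeroExtension_of_mem _ ht, zeroExtension_of_mem _ ht, ← (hF x ⟨t, ht⟩).1,
    ← (hF x ⟨t, ht⟩).2, hx]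
  exact ⟨rfl, rfl⟩

/-- The a priori bounds make the truncations inactive at a fixed point. -/
theorem exists_solvesBoundaryEquations (h : IsContractionTime p L M b R δ)
    (hΦ : IsInitialDensity Φ L M s₁) (hs₁ : 2 * b ≤ s₁) :
    ∃ f ρ s, SolvesBoundaryEquations p Φ f ρ s L M s₁ R δ := by
  obtain ⟨x, hx⟩ := h.exists_fixedPoint hΦ hs₁
  refine ⟨_, _, _, { h.isStefanDensity hΦ hs₁ x with
    flux_nonneg := truncatedFlux_nonneg h.bound_nonneg x.1
    hasDerivAt_front := fun t ht =>
      (isLayerDensity_truncatedSpeed h.R_nonneg x.2).hasDerivAt_frontOfSpeed s₁ ht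
    speed_eq := fun t ht => ?_
    flux_eq := fun t ht hnonneg => ?_ }⟩
  · have hle := abs_le.1 (h.abs_tracePotentialSpeed_le hΦ hs₁ x ht)
    rw [truncatedSpeed, (hx t ht).2]
    exact clamp_of_mem hle
  · have hle := (abs_le.1 (h.abs_tracePotential_zero_le hΦ hs₁ x ht)).2
    rw [truncatedFlux, (hx t ht).1]
    exact congrArg (· ^ p) (clamp_of_mem ⟨hnonneg, hle⟩)

end IsContractionTime

theorem isInitialDensity_reflect {φ : ℝ → ℝ} {L M s₁ : ℝ} (hs₁ : 0 ≤ s₁) (hL : 0 ≤ L)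
    (hφL : ∀ x ∈ Icc 0 s₁, ∀ y ∈ Icc 0 s₁, |φ x - φ y| ≤ L * |x - y|)
    (hφ : ∀ x ∈ Icc 0 s₁, φ x ∈ Icc 0 M) (hφs₁ : φ s₁ = 0) :
    IsInitialDensity (fun x => φ (min |x| s₁)) L M s₁ := by
  have hmem (x : ℝ) : min |x| s₁ ∈ Icc 0 s₁ := ⟨le_min (abs_nonneg _) hs₁, min_le_right _ _⟩
  have hmin (x y : ℝ) : |min |x| s₁ - min |y| s₁| ≤ |x - y| :=
    calc _ ≤ |(|x| - |y|)| := by simpa using abs_min_sub_min_le_max |x| s₁ |y| s₁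
      _ ≤ |x - y| := abs_abs_sub_abs_le x y
  exact {
    even := fun x => by simp only [abs_neg]
    abs_sub_le := fun x y => (hφL _ (hmem x) _ (hmem y)).trans
      (mul_le_mul_of_nonneg_left (hmin x y) hL)
    nonneg := fun x => (hφ _ (hmem x)).1
    le_bound := fun x => (hφ _ (hmem x)).2
    eq_zero_of_le_abs := fun x hx => by rw [min_eq_right hx, hφs₁] }

theorem exists_isSolOn_of_abs_sub_le {p a L M : ℝ} (hp : 1 ≤ p) (ha : 0 < a) (hL : 0 ≤ L)
    (hM : 0 ≤ M) : ∃ δ > 0, ∀ s₁ ≥ a, ∀ φ : ℝ → ℝ,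
      (∀ x ∈ Icc 0 s₁, ∀ y ∈ Icc 0 s₁, |φ x - φ y| ≤ L * |x - y|) →
      (∀ x ∈ Icc 0 s₁, φ x ∈ Icc 0 M) → φ s₁ = 0 → ∃ s u, IsSolOn p s₁ φ δ s u := by
  obtain ⟨R, δ, h⟩ := exists_isContractionTime hp hL hM (half_pos ha)
  have hδ := h.pos
  refine ⟨δ / 2, half_pos hδ, fun s₁ hs₁ φ hφL hφ hφs₁ => ?_⟩
  obtain ⟨f, ρ, s, hsolves⟩ := h.exists_solvesBoundaryEquations
    (isInitialDensity_reflect (ha.le.trans hs₁) hL hφL hφ hφs₁) (by linarith)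
  have hsol := hsolves.isSolOn ⟨half_pos hδ, half_lt_self hδ⟩
  exact ⟨s, _, { hsol with
    init := fun x hx => by rw [hsol.init x hx, abs_of_nonneg hx.1, min_eq_left hx.2] }⟩

end FixedPoint

section LocalityInTime

/-- Problem (P) without its initial condition on general sets of times: the equations hold at times
in `I`, and continuity and positivity at times in `J`. -/
structure SolvesStefanOn (p : ℝ) (I J : Set ℝ) (s : ℝ → ℝ) (u : ℝ → ℝ → ℝ) : Prop where
  s_cont : ContinuousOn s J
  s_diff : ∀ t ∈ I, DifferentiableAt ℝ s t
  s_deriv_cont : ContinuousOn (deriv s) I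
  s_pos : ∀ t ∈ J, 0 < s t
  ut_diff : ∀ t ∈ I, ∀ x ∈ Ioo 0 (s t), DifferentiableAt ℝ (fun τ => u τ x) t
  ux_diff : ∀ t ∈ I, ∀ x ∈ Ioo 0 (s t), DifferentiableAt ℝ (u t) x
  uxx_diff : ∀ t ∈ I, ∀ x ∈ Ioo 0 (s t), DifferentiableAt ℝ (deriv (u t)) x
  ut_cont : ContinuousOn (fun q : ℝ × ℝ => deriv (fun τ => u τ q.2) q.1)
    {q : ℝ × ℝ | q.1 ∈ I ∧ q.2 ∈ Ioo 0 (s q.1)}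
  uxx_cont : ContinuousOn (fun q : ℝ × ℝ => deriv (deriv (u q.1)) q.2)
    {q : ℝ × ℝ | q.1 ∈ I ∧ q.2 ∈ Ioo 0 (s q.1)}
  ux_cont : ContinuousOn (fun q : ℝ × ℝ => deriv (u q.1) q.2)
    {q : ℝ × ℝ | q.1 ∈ I ∧ q.2 ∈ Icc 0 (s q.1)}
  u_cont : ContinuousOn (fun q : ℝ × ℝ => u q.1 q.2) {q : ℝ × ℝ | q.1 ∈ J ∧ q.2 ∈ Icc 0 (s q.1)}
  u_nonneg : ∀ t ∈ J, ∀ x ∈ Icc 0 (s t), 0 ≤ u t x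
  heat : ∀ t ∈ I, ∀ x ∈ Ioo 0 (s t), deriv (fun τ => u τ x) t = deriv (deriv (u t)) x
  bc_zero : ∀ t ∈ I, -deriv (u t) 0 = u t 0 ^ p
  bc_free : ∀ t ∈ I, u t (s t) = 0
  stefan : ∀ t ∈ I, deriv s t = -deriv (u t) (s t)

/-- The pairs `(s, u)` and `(s', u')` have the same front at the times in `I`, and `u`, `u'` agree
up to it. The two-sided space derivatives, which at the ends of `[0, s t]` are not determined by
the values of `u` there, are required to agree as well. -/
structure PhaseEqOn (I : Set ℝ) (s : ℝ → ℝ) (u : ℝ → ℝ → ℝ) (s' : ℝ → ℝ) (u' : ℝ → ℝ → ℝ) :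
    Prop where
  front_eq : ∀ t ∈ I, s t = s' t
  eq : ∀ t ∈ I, ∀ x ∈ Icc 0 (s t), u t x = u' t x
  deriv_eq : ∀ t ∈ I, ∀ x ∈ Icc 0 (s t), deriv (u t) x = deriv (u' t) x

variable {p T : ℝ} {I I' J J' U : Set ℝ} {s s' : ℝ → ℝ} {u u' : ℝ → ℝ → ℝ} {t x : ℝ}

namespace PhaseEqOn

theorem symm (h : PhaseEqOn I s u s' u') : PhaseEqOn I s' u' s u where
  front_eq t ht := (h.front_eq t ht).symm
  eq t ht x hx := (h.eq t ht x (h.front_eq t ht ▸ hx)).symm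
  deriv_eq t ht x hx := (h.deriv_eq t ht x (h.front_eq t ht ▸ hx)).symm

theorem eventuallyEq_front (h : PhaseEqOn I s u s' u') (hI : IsOpen I) (ht : t ∈ I) :
    s =ᶠ[𝓝 t] s' :=
  eventually_of_mem (hI.mem_nhds ht) h.front_eq

theorem eventuallyEq_slice (h : PhaseEqOn I s u s' u') (ht : t ∈ I) (hx : x ∈ Ioo 0 (s t)) :
    u t =ᶠ[𝓝 x] u' t :=
  eventually_of_mem (isOpen_Ioo.mem_nhds hx) fun y hy => h.eq t ht y (Ioo_subset_Icc_self hy)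

theorem eventuallyEq_deriv_slice (h : PhaseEqOn I s u s' u') (ht : t ∈ I) (hx : x ∈ Ioo 0 (s t)) :
    deriv (u t) =ᶠ[𝓝 x] deriv (u' t) :=
  eventually_of_mem (isOpen_Ioo.mem_nhds hx) fun y hy => h.deriv_eq t ht y (Ioo_subset_Icc_self hy)

theorem eventuallyEq_time (h : PhaseEqOn I s u s' u') (hI : IsOpen I) (hs : ContinuousAt s t)
    (ht : t ∈ I) (hx : x ∈ Ioo 0 (s t)) : (fun τ => u τ x) =ᶠ[𝓝 t] fun τ => u' τ x := by
  filter_upwards [hI.mem_nhds ht, hs.eventually (lt_mem_nhds hx.2)] with τ hτ hxτ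
  exact h.eq τ hτ x ⟨hx.1.le, hxτ.le⟩

theorem piecewise_left {r t₁ T : ℝ} (h : PhaseEqOn (Ioo t₁ T) s u s' u') (hr : t₁ ≤ r) :
    PhaseEqOn (Iio T) s u ((Iic r).piecewise s s') ((Iic r).piecewise u u') := by
  have hmem : ∀ t ∈ Iio T, t ∉ Iic r → t ∈ Ioo t₁ T := fun t ht hrt =>
    ⟨hr.trans_lt (not_le.1 hrt), ht⟩
  constructor <;> intro t ht <;> by_cases hrt : t ∈ Iic r
  · rw [piecewise_eq_of_mem _ _ _ hrt]
  · simpa only [piecewise_eq_of_notMem _ _ _ hrt] using h.front_eq t (hmem t ht hrt)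
  · simp only [piecewise_eq_of_mem _ _ _ hrt, implies_true]
  · simpa only [piecewise_eq_of_notMem _ _ _ hrt] using h.eq t (hmem t ht hrt)
  · simp only [piecewise_eq_of_mem _ _ _ hrt, implies_true]
  · simpa only [piecewise_eq_of_notMem _ _ _ hrt] using h.deriv_eq t (hmem t ht hrt)

theorem piecewise_right {r t₁ T : ℝ} (h : PhaseEqOn (Ioo t₁ T) s u s' u') (hr : r < T) :
    PhaseEqOn (Ioi t₁) s' u' ((Iic r).piecewise s s') ((Iic r).piecewise u u') := by
  have hmem : ∀ t ∈ Ioi t₁, t ∈ Iic r → t ∈ Ioo t₁ T := fun t ht hrt =>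
    ⟨ht, (mem_Iic.1 hrt).trans_lt hr⟩
  constructor <;> intro t ht <;> by_cases hrt : t ∈ Iic r
  · simpa only [piecewise_eq_of_mem _ _ _ hrt] using h.symm.front_eq t (hmem t ht hrt)
  · rw [piecewise_eq_of_notMem _ _ _ hrt]
  · simpa only [piecewise_eq_of_mem _ _ _ hrt] using h.symm.eq t (hmem t ht hrt)
  · simp only [piecewise_eq_of_notMem _ _ _ hrt, implies_true]
  · simpa only [piecewise_eq_of_mem _ _ _ hrt] using h.symm.deriv_eq t (hmem t ht hrt)
  · simp only [piecewise_eq_of_notMem _ _ _ hrt, implies_true]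

end PhaseEqOn

namespace SolvesStefanOn

theorem isSolOn {s₀ : ℝ} {φ : ℝ → ℝ} (h : SolvesStefanOn p (Ioc 0 T) (Icc 0 T) s u) (hT : 0 < T)
    (hinit : ∀ x ∈ Icc 0 s₀, u 0 x = φ x) (hs : s 0 = s₀) : IsSolOn p s₀ φ T s u :=
  { h with T_pos := hT, init := hinit, init_s := hs }

theorem mono (h : SolvesStefanOn p I J s u) (hI : I' ⊆ I) (hJ : J' ⊆ J) :
    SolvesStefanOn p I' J' s u where
  s_cont := h.s_cont.mono hJ
  s_diff t ht := h.s_diff t (hI ht)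
  s_deriv_cont := h.s_deriv_cont.mono hI
  s_pos t ht := h.s_pos t (hJ ht)
  ut_diff t ht := h.ut_diff t (hI ht)
  ux_diff t ht := h.ux_diff t (hI ht)
  uxx_diff t ht := h.uxx_diff t (hI ht)
  ut_cont := h.ut_cont.mono fun _ hq => ⟨hI hq.1, hq.2⟩
  uxx_cont := h.uxx_cont.mono fun _ hq => ⟨hI hq.1, hq.2⟩
  ux_cont := h.ux_cont.mono fun _ hq => ⟨hI hq.1, hq.2⟩
  u_cont := h.u_cont.mono fun _ hq => ⟨hJ hq.1, hq.2⟩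
  u_nonneg t ht := h.u_nonneg t (hJ ht)
  heat t ht := h.heat t (hI ht)
  bc_zero t ht := h.bc_zero t (hI ht)
  bc_free t ht := h.bc_free t (hI ht)
  stefan t ht := h.stefan t (hI ht)

theorem comp_const_add (h : SolvesStefanOn p I J s u) (c : ℝ) :
    SolvesStefanOn p ((c + ·) ⁻¹' I) ((c + ·) ⁻¹' J) (fun t => s (c + t)) fun t => u (c + t) := by
  have hshift : Continuous fun q : ℝ × ℝ => (c + q.1, q.2) := by fun_prop
  have hadd : Continuous fun t : ℝ => c + t := by fun_prop
  have hadd_diff {t : ℝ} : DifferentiableAt ℝ (fun τ => c + τ) t := by fun_prop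
  have hderiv : deriv (fun t => s (c + t)) = fun t => deriv s (c + t) :=
    funext (deriv_comp_const_add s c)
  have hderiv_time (t x : ℝ) : deriv (fun τ => u (c + τ) x) t = deriv (fun τ => u τ x) (c + t) :=
    deriv_comp_const_add (fun τ => u τ x) c t
  exact {
    s_cont := h.s_cont.comp hadd.continuousOn fun _ ht => ht
    s_diff := fun t ht => (h.s_diff _ ht).comp t hadd_diff
    s_deriv_cont := by
      rw [hderiv]
      exact h.s_deriv_cont.comp hadd.continuousOn fun _ ht => ht
    s_pos := fun t => h.s_pos _
    ut_diff := fun t ht x hx => (h.ut_diff _ ht x hx).comp t hadd_diff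
    ux_diff := fun t => h.ux_diff _
    uxx_diff := fun t => h.uxx_diff _
    ut_cont := by
      simp only [hderiv_time]
      exact h.ut_cont.comp hshift.continuousOn fun _ hq => hq
    uxx_cont := h.uxx_cont.comp hshift.continuousOn fun _ hq => hq
    ux_cont := h.ux_cont.comp hshift.continuousOn fun _ hq => hq
    u_cont := h.u_cont.comp hshift.continuousOn fun _ hq => hq
    u_nonneg := fun t => h.u_nonneg _
    heat := fun t ht x hx => (hderiv_time t x).trans (h.heat _ ht x hx)
    bc_zero := fun t => h.bc_zero _
    bc_free := fun t => h.bc_free _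
    stefan := fun t ht => (congrFun hderiv t).trans (h.stefan _ ht) }

theorem congr (h : SolvesStefanOn p I J s u) (e : PhaseEqOn U s u s' u') (hU : IsOpen U)
    (hIJ : I ⊆ J) (hJU : J ⊆ U) : SolvesStefanOn p I J s' u' := by
  have hIU : I ⊆ U := hIJ.trans hJU
  have hfront : ∀ t ∈ I, 0 ≤ s t := fun t ht => (h.s_pos t (hIJ ht)).le
  have hderiv : ∀ t ∈ I, deriv s' t = deriv s t := fun t ht =>
    ((e.eventuallyEq_front hU (hIU ht)).deriv_eq).symm
  have htime : ∀ t ∈ I, ∀ x ∈ Ioo 0 (s' t), (fun τ => u τ x) =ᶠ[𝓝 t] fun τ => u' τ x :=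
    fun t ht x hx => e.eventuallyEq_time hU (h.s_diff t ht).continuousAt (hIU ht)
      (e.front_eq t (hIU ht) ▸ hx)
  have hmem : ∀ t ∈ U, ∀ x ∈ Icc 0 (s' t), x ∈ Icc 0 (s t) := fun t ht x hx => by
    rwa [e.front_eq t ht]
  have hmem' : ∀ t ∈ U, ∀ x ∈ Ioo 0 (s' t), x ∈ Ioo 0 (s t) := fun t ht x hx => by
    rwa [e.front_eq t ht]
  have hsecond : ∀ t ∈ I, ∀ x ∈ Ioo 0 (s' t), deriv (deriv (u' t)) x = deriv (deriv (u t)) x :=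
    fun t ht x hx => ((e.eventuallyEq_deriv_slice (hIU ht) (hmem' t (hIU ht) x hx)).deriv_eq).symm
  exact {
    s_cont := h.s_cont.congr fun t ht => (e.front_eq t (hJU ht)).symm
    s_diff := fun t ht => (e.eventuallyEq_front hU (hIU ht)).differentiableAt_iff.1 (h.s_diff t ht)
    s_deriv_cont := h.s_deriv_cont.congr hderiv
    s_pos := fun t ht => e.front_eq t (hJU ht) ▸ h.s_pos t ht
    ut_diff := fun t ht x hx => (htime t ht x hx).differentiableAt_iff.1
      (h.ut_diff t ht x (hmem' t (hIU ht) x hx))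
    ux_diff := fun t ht x hx => (e.eventuallyEq_slice (hIU ht)
      (hmem' t (hIU ht) x hx)).differentiableAt_iff.1 (h.ux_diff t ht x (hmem' t (hIU ht) x hx))
    uxx_diff := fun t ht x hx => (e.eventuallyEq_deriv_slice (hIU ht)
      (hmem' t (hIU ht) x hx)).differentiableAt_iff.1 (h.uxx_diff t ht x (hmem' t (hIU ht) x hx))
    ut_cont := (h.ut_cont.mono fun q hq => ⟨hq.1, hmem' _ (hIU hq.1) _ hq.2⟩).congr
      fun q hq => (htime q.1 hq.1 q.2 hq.2).deriv_eq.symm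
    uxx_cont := (h.uxx_cont.mono fun q hq => ⟨hq.1, hmem' _ (hIU hq.1) _ hq.2⟩).congr
      fun q hq => hsecond q.1 hq.1 q.2 hq.2
    ux_cont := (h.ux_cont.mono fun q hq => ⟨hq.1, hmem _ (hIU hq.1) _ hq.2⟩).congr
      fun q hq => (e.deriv_eq q.1 (hIU hq.1) q.2 (hmem _ (hIU hq.1) _ hq.2)).symm
    u_cont := (h.u_cont.mono fun q hq => ⟨hq.1, hmem _ (hJU hq.1) _ hq.2⟩).congr
      fun q hq => (e.eq q.1 (hJU hq.1) q.2 (hmem _ (hJU hq.1) _ hq.2)).symm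
    u_nonneg := fun t ht x hx => by
      rw [← e.eq t (hJU ht) x (hmem t (hJU ht) x hx)]
      exact h.u_nonneg t ht x (hmem t (hJU ht) x hx)
    heat := fun t ht x hx => by
      rw [hsecond t ht x hx, ← (htime t ht x hx).deriv_eq]
      exact h.heat t ht x (hmem' t (hIU ht) x hx)
    bc_zero := fun t ht => by
      rw [← e.deriv_eq t (hIU ht) 0 (left_mem_Icc.2 (hfront t ht)),
        ← e.eq t (hIU ht) 0 (left_mem_Icc.2 (hfront t ht))]
      exact h.bc_zero t ht
    bc_free := fun t ht => by
      rw [← e.front_eq t (hIU ht), ← e.eq t (hIU ht) _ (right_mem_Icc.2 (hfront t ht))]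
      exact h.bc_free t ht
    stefan := fun t ht => by
      rw [hderiv t ht, ← e.front_eq t (hIU ht),
        ← e.deriv_eq t (hIU ht) _ (right_mem_Icc.2 (hfront t ht))]
      exact h.stefan t ht }

theorem of_locally (hIJ : I ⊆ J)
    (h : ∀ t ∈ J, ∃ U, IsOpen U ∧ t ∈ U ∧ SolvesStefanOn p (I ∩ U) (J ∩ U) s u) :
    SolvesStefanOn p I J s u := by
  choose! U hU htU hsol using h
  have hJ : ∀ t ∈ J, t ∈ J ∩ U t := fun t ht => ⟨ht, htU t ht⟩
  have hI : ∀ t ∈ I, t ∈ I ∩ U t := fun t ht => ⟨ht, htU t (hIJ ht)⟩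
  have hsolI : ∀ t ∈ I, SolvesStefanOn p (I ∩ U t) (J ∩ U t) s u := fun t ht => hsol t (hIJ ht)
  have hfst : ∀ t ∈ J, IsOpen (Prod.fst ⁻¹' U t : Set (ℝ × ℝ)) := fun t ht =>
    (hU t ht).preimage continuous_fst
  exact {
    s_cont := continuousOn_of_locally_continuousOn fun t ht =>
      ⟨U t, hU t ht, htU t ht, (hsol t ht).s_cont⟩
    s_diff := fun t ht => (hsolI t ht).s_diff t (hI t ht)
    s_deriv_cont := continuousOn_of_locally_continuousOn fun t ht =>
      ⟨U t, hU t (hIJ ht), (hI t ht).2, (hsolI t ht).s_deriv_cont⟩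
    s_pos := fun t ht => (hsol t ht).s_pos t (hJ t ht)
    ut_diff := fun t ht => (hsolI t ht).ut_diff t (hI t ht)
    ux_diff := fun t ht => (hsolI t ht).ux_diff t (hI t ht)
    uxx_diff := fun t ht => (hsolI t ht).uxx_diff t (hI t ht)
    ut_cont := continuousOn_of_locally_continuousOn fun q hq => ⟨_, hfst q.1 (hIJ hq.1),
      (hI q.1 hq.1).2, (hsolI q.1 hq.1).ut_cont.mono fun _ h => ⟨⟨h.1.1, h.2⟩, h.1.2⟩⟩
    uxx_cont := continuousOn_of_locally_continuousOn fun q hq => ⟨_, hfst q.1 (hIJ hq.1),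
      (hI q.1 hq.1).2, (hsolI q.1 hq.1).uxx_cont.mono fun _ h => ⟨⟨h.1.1, h.2⟩, h.1.2⟩⟩
    ux_cont := continuousOn_of_locally_continuousOn fun q hq => ⟨_, hfst q.1 (hIJ hq.1),
      (hI q.1 hq.1).2, (hsolI q.1 hq.1).ux_cont.mono fun _ h => ⟨⟨h.1.1, h.2⟩, h.1.2⟩⟩
    u_cont := continuousOn_of_locally_continuousOn fun q hq => ⟨_, hfst q.1 hq.1,
      (hJ q.1 hq.1).2, (hsol q.1 hq.1).u_cont.mono fun _ h => ⟨⟨h.1.1, h.2⟩, h.1.2⟩⟩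
    u_nonneg := fun t ht => (hsol t ht).u_nonneg t (hJ t ht)
    heat := fun t ht => (hsolI t ht).heat t (hI t ht)
    bc_zero := fun t ht => (hsolI t ht).bc_zero t (hI t ht)
    bc_free := fun t ht => (hsolI t ht).bc_free t (hI t ht)
    stefan := fun t ht => (hsolI t ht).stefan t (hI t ht) }

theorem phaseEqOn_of_eq (h : SolvesStefanOn p I J s u) (k : SolvesStefanOn p I J' s' u')
    (hI : IsOpen I) (hs : ∀ t ∈ I, s t = s' t) (hu : ∀ t ∈ I, ∀ x ∈ Icc 0 (s t), u t x = u' t x) :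
    PhaseEqOn I s u s' u' := by
  refine ⟨hs, hu, fun t ht x hx => ?_⟩
  rcases hx.1.eq_or_lt with rfl | hx0
  · rw [← neg_inj, h.bc_zero t ht, k.bc_zero t ht, hu t ht 0 hx]
  rcases hx.2.eq_or_lt with rfl | hxs
  · rw [← neg_inj, ← h.stefan t ht, hs t ht, ← k.stefan t ht]
    exact EventuallyEq.deriv_eq (eventually_of_mem (hI.mem_nhds ht) hs)
  · exact EventuallyEq.deriv_eq (eventually_of_mem (isOpen_Ioo.mem_nhds ⟨hx0, hxs⟩) fun y hy =>
      hu t ht y (Ioo_subset_Icc_self hy))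

end SolvesStefanOn

namespace IsSolOn

variable {s₀ t₁ T₁ L : ℝ} {φ : ℝ → ℝ}

theorem solvesStefanOn (h : IsSolOn p s₀ φ T s u) : SolvesStefanOn p (Ioc 0 T) (Icc 0 T) s u :=
  { h with }

theorem solvesStefanOn_comp_neg_add (h : IsSolOn p s₀ φ T s u) (c : ℝ) :
    SolvesStefanOn p (Ioc c (c + T)) (Icc c (c + T)) (fun t => s (-c + t)) fun t => u (-c + t) :=
  (h.solvesStefanOn.comp_const_add (-c)).mono
    (fun t ht => ⟨by linarith [ht.1], by linarith [ht.2]⟩)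
    fun t ht => ⟨by linarith [ht.1], by linarith [ht.2]⟩

theorem shift (h : IsSolOn p s₀ φ T s u) (ht₁ : 0 ≤ t₁) (hT : t₁ < T) :
    IsSolOn p (s t₁) (u t₁) (T - t₁) (fun t => s (t₁ + t)) fun t => u (t₁ + t) := by
  refine ((h.solvesStefanOn.comp_const_add t₁).mono ?_ ?_).isSolOn (sub_pos.2 hT)
    (fun x _ => by rw [add_zero]) (by rw [add_zero])
  · exact fun t ht => ⟨by linarith [ht.1], by linarith [ht.2]⟩
  · exact fun t ht => ⟨by linarith [ht.1], by linarith [ht.2]⟩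

theorem glue (h : IsSolOn p s₀ φ T s u) (ht₁ : 0 < t₁) (hT : t₁ < T) (hT' : T < T₁)
    (k : SolvesStefanOn p (Ioc t₁ T₁) (Icc t₁ T₁) s' u') (e : PhaseEqOn (Ioo t₁ T) s u s' u') :
    ∃ σ v, IsSolOn p s₀ φ T₁ σ v := by
  obtain ⟨r, htr, hrT⟩ := exists_between hT
  have hr : (0 : ℝ) ∈ Iic r := (ht₁.trans htr).le
  refine ⟨(Iic r).piecewise s s', (Iic r).piecewise u u',
    (SolvesStefanOn.of_locally Ioc_subset_Icc_self fun t _ => ?_).isSolOn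
      (h.T_pos.trans hT') ?_ ?_⟩
  · rcases lt_or_ge t T with htT | hTt
    · refine ⟨Iio T, isOpen_Iio, htT, SolvesStefanOn.congr (h.solvesStefanOn.mono ?_ ?_)
        (e.piecewise_left htr.le) isOpen_Iio ?_ inter_subset_right⟩
      · exact fun τ hτ => ⟨hτ.1.1, (mem_Iio.1 hτ.2).le⟩
      · exact fun τ hτ => ⟨hτ.1.1, (mem_Iio.1 hτ.2).le⟩
      · exact inter_subset_inter_left _ Ioc_subset_Icc_self
    · refine ⟨Ioi t₁, isOpen_Ioi, hT.trans_le hTt, SolvesStefanOn.congr (k.mono ?_ ?_)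
        (e.piecewise_right hrT) isOpen_Ioi ?_ inter_subset_right⟩
      · exact fun τ hτ => ⟨hτ.2, hτ.1.2⟩
      · exact fun τ hτ => ⟨(mem_Ioi.1 hτ.2).le, hτ.1.2⟩
      · exact inter_subset_inter_left _ Ioc_subset_Icc_self
  · simpa only [piecewise_eq_of_mem _ _ _ hr] using h.init
  · simpa only [piecewise_eq_of_mem _ _ _ hr] using h.init_s

theorem eq_of_initial_le (hp : 1 ≤ p) (h : IsSolOn p s₀ φ T s u) (k : IsSolOn p s₀ φ T s' u')
    (hL : 0 ≤ L) (hφL : ∀ x ∈ Icc 0 s₀, φ x ≤ L * (s₀ - x)) (ht : t ∈ Ico 0 T) :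
    s t = s' t ∧ ∀ x ∈ Icc 0 (s t), u t x = u' t x := by
  have hle := le_of_le_initial hp h k le_rfl (fun _ _ => le_rfl) hL hφL ht
  have hge := le_of_le_initial hp k h le_rfl (fun _ _ => le_rfl) hL hφL ht
  have hs := hle.1.antisymm hge.1
  exact ⟨hs, fun x hx => (hle.2 x hx).antisymm (hge.2 x (hs ▸ hx))⟩

theorem extend (hp : 1 ≤ p) (h : IsSolOn p s₀ φ T s u) (ht₁ : 0 < t₁) (hT : t₁ < T)
    (k : IsSolOn p (s t₁) (u t₁) T₁ s' u') (hT' : T < t₁ + T₁) (hL : 0 ≤ L)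
    (huL : ∀ x ∈ Icc 0 (s t₁), u t₁ x ≤ L * (s t₁ - x)) :
    ∃ σ v, IsSolOn p s₀ φ (t₁ + T₁) σ v := by
  have heq : ∀ t ∈ Ioo t₁ T, s t = s' (-t₁ + t) ∧ ∀ x ∈ Icc 0 (s t), u t x = u' (-t₁ + t) x := by
    intro t ht
    have hmem : -t₁ + t ∈ Ico 0 (T - t₁) := ⟨by linarith [ht.1], by linarith [ht.2]⟩
    simpa only [add_neg_cancel_left] using (h.shift ht₁.le hT).eq_of_initial_le hp
      (k.mono_time (sub_pos.2 hT) (by linarith)) hL huL hmem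
  have hk := k.solvesStefanOn_comp_neg_add t₁
  exact h.glue ht₁ hT hT' hk (SolvesStefanOn.phaseEqOn_of_eq
    (h.solvesStefanOn.mono (fun t ht => ⟨ht₁.trans ht.1, ht.2.le⟩) Subset.rfl)
    (hk.mono (fun t ht => ⟨ht.1, (ht.2.trans hT').le⟩) Subset.rfl)
    isOpen_Ioo (fun t ht => (heq t ht).1) fun t ht => (heq t ht).2)

end IsSolOn

end LocalityInTime

section Continuation

variable {p s₀ σ₀ t M L T : ℝ} {K : NNReal} {φ ψ s σ : ℝ → ℝ} {u v : ℝ → ℝ → ℝ} {Tu Tv : ℝ≥0∞}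

theorem exists_lt_ofReal_lt {a : ℝ} {b : ℝ≥0∞} (h : ENNReal.ofReal a < b) :
    ∃ r, a < r ∧ ENNReal.ofReal r < b := by
  obtain ⟨r, -, har, hrb⟩ := ENNReal.lt_iff_exists_real_btwn.1 h
  exact ⟨r, lt_of_not_ge fun hra => har.not_ge (ENNReal.ofReal_le_ofReal hra), hrb⟩

theorem le_mul_sub_of_abs_sub_le {f : ℝ → ℝ} {b x : ℝ}
    (hf : ∀ x ∈ Icc 0 b, ∀ y ∈ Icc 0 b, |f x - f y| ≤ L * |x - y|) (hfb : f b = 0)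
    (hx : x ∈ Icc 0 b) : f x ≤ L * (b - x) := by
  have hxb := hf x hx b (right_mem_Icc.2 (hx.1.trans hx.2))
  rw [hfb, sub_zero, abs_sub_comm, abs_of_nonneg (sub_nonneg.2 hx.2)] at hxb
  exact (le_abs_self _).trans hxb

namespace IsSolOn

theorem initial_front_eq_zero (h : IsSolOn p s₀ φ T s u) : φ s₀ = 0 := by
  have hfront : ContinuousOn (fun t => u t (s t)) (Icc 0 T) :=
    h.u_cont.comp (f := fun t => (t, s t)) (continuousOn_id.prodMk h.s_cont) fun t ht =>
      ⟨ht, right_mem_Icc.2 (h.s_pos t ht).le⟩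
  have hzero : EqOn (fun t => u t (s t)) 0 (Icc 0 T) := by
    rw [← closure_Ioc h.T_pos.ne] at hfront ⊢
    exact EqOn.of_subset_closure h.bc_free hfront continuousOn_const subset_closure Subset.rfl
  rw [← h.init s₀ (right_mem_Icc.2 h.s₀_pos.le), ← h.init_s]
  exact hzero (left_mem_Icc.2 h.T_pos.le)

end IsSolOn

theorem exists_lipschitz_barrier_slope (hs₀ : 0 < s₀) (hM : 0 ≤ M) (p : ℝ) (K : NNReal) :
    ∃ L : ℝ, K ≤ L ∧ M ≤ L * s₀ ∧ M ^ p < L := by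
  have hMs : 0 ≤ M / s₀ := by positivity
  have hMp : 0 ≤ M ^ p := by positivity
  have := K.coe_nonneg
  refine ⟨K + M / s₀ + M ^ p + 1, by linarith, ?_, by linarith⟩
  calc M = M / s₀ * s₀ := by field_simp
    _ ≤ _ := by gcongr; linarith

-- The gradient bound depends only on `M` and the initial data, so `δ` does not depend on `T`.
theorem exists_isSolOn_add_of_bounded (hp : 1 ≤ p) (hs₀ : 0 < s₀)
    (hφ : LipschitzOnWith K φ (Icc 0 s₀)) (hM : 0 ≤ M) :
    ∃ δ > 0, ∀ T s u, IsSolOn p s₀ φ T s u → (∀ t ∈ Icc 0 T, ∀ x ∈ Icc 0 (s t), u t x ≤ M) →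
      ∃ σ v, IsSolOn p s₀ φ (T + δ) σ v := by
  obtain ⟨L, hKL, hMs, hML⟩ := exists_lipschitz_barrier_slope hs₀ hM p K
  have hL : 0 ≤ L := K.coe_nonneg.trans hKL
  have hφL : ∀ x ∈ Icc 0 s₀, ∀ y ∈ Icc 0 s₀, |φ x - φ y| ≤ L * |x - y| := fun x hx y hy =>
    (hφ.dist_le_mul x hx y hy).trans (by rw [Real.dist_eq]; gcongr)
  obtain ⟨δ, hδ, hexists⟩ := exists_isSolOn_of_abs_sub_le hp hs₀ hL hM
  refine ⟨δ / 2, half_pos hδ, fun T s u h hu => ?_⟩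
  obtain ⟨t₁, ht₁, hT⟩ := exists_between (max_lt h.T_pos (sub_lt_self T (half_pos hδ)))
  have ht₁0 : 0 < t₁ := (le_max_left _ _).trans_lt ht₁
  have hTδ : T - δ / 2 < t₁ := (le_max_right _ _).trans_lt ht₁
  have hmem : t₁ ∈ Icc 0 T := ⟨ht₁0.le, hT.le⟩
  have hfront := h.bc_free t₁ ⟨ht₁0, hT.le⟩
  have hlip := h.abs_sub_le_mul_abs_sub hL (by linarith)
    (fun t ht => hu t ht 0 (h.zero_mem_Icc ht)) hMs hML hφL h.initial_front_eq_zero hmem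
  obtain ⟨s', u', k⟩ := hexists (s t₁) (h.le_free_boundary hmem) (u t₁) hlip
    (fun x hx => ⟨h.u_nonneg t₁ hmem x hx, hu t₁ hmem x hx⟩) hfront
  obtain ⟨σ, v, hσv⟩ := h.extend hp ht₁0 hT k (by linarith) hL fun x hx =>
    le_mul_sub_of_abs_sub_le hlip hfront hx
  exact ⟨σ, v, hσv.mono_time (by linarith [h.T_pos]) (by linarith)⟩

namespace IsMaxSol

theorem exists_isSolOn (h : IsMaxSol p s₀ φ Tu s u) : ∃ T, IsSolOn p s₀ φ T s u := by
  obtain ⟨T, hT, hTu⟩ := exists_lt_ofReal_lt (ENNReal.ofReal_zero.trans_lt h.1)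
  exact ⟨T, h.2.1 T hT hTu⟩

theorem eq_top_of_bounded (hp : 1 ≤ p) (h : IsMaxSol p s₀ φ Tu s u)
    (hφ : LipschitzOnWith K φ (Icc 0 s₀)) (hM : 0 ≤ M)
    (hu : ∀ t, 0 ≤ t → ENNReal.ofReal t < Tu → ∀ x ∈ Icc 0 (s t), u t x ≤ M) : Tu = ⊤ := by
  by_contra hTu
  obtain ⟨T₀, hT₀⟩ := h.exists_isSolOn
  obtain ⟨δ, hδ, hextend⟩ := exists_isSolOn_add_of_bounded hp hT₀.s₀_pos hφ hM
  have hpos : 0 < Tu.toReal := ENNReal.toReal_pos h.1.ne' hTu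
  obtain ⟨T, hT, hTTu⟩ := exists_between (max_lt hpos (sub_lt_self Tu.toReal hδ))
  have hT0 : 0 < T := (le_max_left _ _).trans_lt hT
  have hlt : ENNReal.ofReal T < Tu := (ENNReal.ofReal_lt_iff_lt_toReal hT0.le hTu).2 hTTu
  refine h.2.2 (T + δ) ?_ (hextend T s u (h.2.1 T hT0 hlt) fun t ht =>
    hu t ht.1 ((ENNReal.ofReal_le_ofReal ht.2).trans_lt hlt))
  exact (ENNReal.lt_ofReal_iff_toReal_lt hTu).2 (by linarith [(le_max_right _ _).trans_lt hT])

theorem le_of_le_initial (hp : 1 ≤ p) (hu : IsMaxSol p s₀ φ Tu s u) (hv : IsMaxSol p σ₀ ψ Tv σ v)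
    (hφ : LipschitzOnWith K φ (Icc 0 s₀)) (hs₀ : s₀ ≤ σ₀) (hφψ : ∀ x ∈ Icc 0 s₀, φ x ≤ ψ x)
    (ht : 0 ≤ t) (htu : ENNReal.ofReal t < Tu) (htv : ENNReal.ofReal t < Tv) :
    s t ≤ σ t ∧ ∀ x ∈ Icc 0 (s t), u t x ≤ v t x := by
  obtain ⟨T, htT, hT⟩ := exists_lt_ofReal_lt (lt_min htu htv)
  have hsu := hu.2.1 T (ht.trans_lt htT) (hT.trans_le (min_le_left _ _))
  have hσv := hv.2.1 T (ht.trans_lt htT) (hT.trans_le (min_le_right _ _))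
  exact hsu.le_of_le_initial hp hσv hs₀ hφψ K.coe_nonneg (fun x hx => le_mul_sub_of_abs_sub_le
    (fun x hx y hy => hφ.dist_le_mul x hx y hy) hsu.initial_front_eq_zero hx) ⟨ht, htT⟩

theorem maximal_time_le (hp : 1 ≤ p) (hu : IsMaxSol p s₀ φ Tu s u) (hv : IsMaxSol p σ₀ ψ Tv σ v)
    (hφ : LipschitzOnWith K φ (Icc 0 s₀)) (hs₀ : s₀ ≤ σ₀) (hφψ : ∀ x ∈ Icc 0 s₀, φ x ≤ ψ x) :
    Tv ≤ Tu := by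
  by_contra! hlt
  obtain ⟨r, hr, hrv⟩ := exists_lt_ofReal_lt ((ENNReal.ofReal_toReal hlt.ne_top).trans_lt hlt)
  obtain ⟨M, hM, hvM⟩ := (hv.2.1 r (ENNReal.toReal_nonneg.trans_lt hr) hrv).exists_bound
  refine hlt.ne_top (hu.eq_top_of_bounded hp hφ hM fun t ht htu x hx => ?_)
  have htr : t < r := ((ENNReal.ofReal_lt_iff_lt_toReal ht hlt.ne_top).1 htu).trans hr
  have hle := hu.le_of_le_initial hp hv hφ hs₀ hφψ ht htu (htu.trans hlt)
  exact (hle.2 x hx).trans (hvM t ⟨ht, htr.le⟩ x ⟨hx.1, hx.2.trans hle.1⟩)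

end IsMaxSol

end Continuation

theorem stmt_10_general {p s₀ σ₀ : ℝ} {φ ψ s σ : ℝ → ℝ} {u v : ℝ → ℝ → ℝ} {Tu Tv : ℝ≥0∞}
    {K : NNReal} (hp : 1 ≤ p) (hφ : LipschitzOnWith K φ (Icc 0 s₀))
    (hu : IsMaxSol p s₀ φ Tu s u) (hv : IsMaxSol p σ₀ ψ Tv σ v)
    (h0 : s₀ ≤ σ₀) (hφψ : ∀ x ∈ Icc 0 s₀, φ x ≤ ψ x) :
    Tv ≤ Tu ∧
    (∀ t : ℝ, 0 < t → ENNReal.ofReal t < Tv → s t ≤ σ t) ∧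
    (∀ T : ℝ, 0 < T → ENNReal.ofReal T < Tv →
      ∀ t ∈ Ioc 0 T, ∀ x ∈ Ioo 0 (s t), u t x ≤ v t x) := by
  have hTime : Tv ≤ Tu := hu.maximal_time_le hp hv hφ h0 hφψ
  have hle : ∀ t : ℝ, 0 < t → ENNReal.ofReal t < Tv →
      s t ≤ σ t ∧ ∀ x ∈ Icc 0 (s t), u t x ≤ v t x := fun t ht htv =>
    hu.le_of_le_initial hp hv hφ h0 hφψ ht.le (htv.trans_le hTime) htv
  refine ⟨hTime, fun t ht htv => (hle t ht htv).1, fun T _ hT t ht x hx => ?_⟩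
  exact (hle t ht.1 ((ENNReal.ofReal_le_ofReal ht.2).trans_lt hT)).2 x (Ioo_subset_Icc_self hx)

/-- Proposition 2.5: the comparison principle for problem (P). -/
theorem stmt_10 (p : ℝ) (hp : 1 < p) (s₀ σ₀ : ℝ) (φ ψ : ℝ → ℝ)
    (hWφ : memW s₀ φ) (hWψ : memW σ₀ ψ)
    (s σ : ℝ → ℝ) (u v : ℝ → ℝ → ℝ) (Tu Tv : ℝ≥0∞)
    (hu : IsMaxSol p s₀ φ Tu s u) (hv : IsMaxSol p σ₀ ψ Tv σ v)
    (h0 : s₀ ≤ σ₀) (hφψ : ∀ x ∈ Icc 0 s₀, φ x ≤ ψ x) :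
    Tv ≤ Tu ∧
    (∀ t : ℝ, 0 < t → ENNReal.ofReal t < Tv → s t ≤ σ t) ∧
    (∀ T : ℝ, 0 < T → ENNReal.ofReal T < Tv →
      ∀ t ∈ Ioc 0 T, ∀ x ∈ Ioo 0 (s t), u t x ≤ v t x) := by
  obtain ⟨K, hK⟩ := hWφ.2.1
  exact stmt_10_general hp.le hK hu hv h0 hφψ
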